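/- Let λ ∈ ℂ and let ψ : ℝ → ℂ be a nonzero, twice continuously differentiable, square-integrable function with −ψ''(x) + i·x³·ψ(x) = λ·ψ(x) for all x ∈ ℝ. Then there is no twice continuously differentiable, square-integrable function φ : ℝ → ℂ satisfying −φ''(x) + i·x³·φ(x) − λ·φ(x) = ψ(x) for all x ∈ ℝ. (The eigenvalues of the imaginary cubic oscillator are algebraically simple: no Jordan generalized eigenvector exists.) -/

import Mathlib

open MeasureTheory

section
/-- entire coefficient sequences -/
def Ent (c : ℕ → ℂ) : Prop := ∀ r : ℝ, 0 < r → ∃ A : ℝ, ∀ n, ‖c n‖ * r ^ n ≤ A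

noncomputable def psum (c : ℕ → ℂ) (z : ℂ) : ℂ := ∑' n, c n * z ^ n

noncomputable def dco (c : ℕ → ℂ) (n : ℕ) : ℂ := ((n : ℂ) + 1) * c (n + 1)

lemma Ent.bound {c : ℕ → ℂ} (h : Ent c) {r : ℝ} (hr : 0 < r) :
    ∃ A : ℝ, 0 ≤ A ∧ ∀ n, ‖c n‖ * r ^ n ≤ A * (1/2) ^ n := by
  obtain ⟨A, hA⟩ := h (2 * r) (by positivity)
  refine ⟨A, (by have := hA 0; simp at this; exact (norm_nonneg _).trans this), fun n => ?_⟩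
  have h1 := hA n
  rw [mul_pow] at h1
  have h2 : ‖c n‖ * r ^ n = (‖c n‖ * (2 ^ n * r ^ n)) * (1/2)^n := by
    rw [one_div, inv_pow]; field_simp
  rw [h2]
  gcongr

lemma Ent.summable {c : ℕ → ℂ} (h : Ent c) (z : ℂ) : Summable (fun n => c n * z ^ n) := by
  obtain ⟨A, hA0, hA⟩ := h.bound (r := ‖z‖ + 1) (by positivity)
  refine Summable.of_norm_bounded (g := fun n => A * (1/2 : ℝ) ^ n)
    ((summable_geometric_of_lt_one (by norm_num) (by norm_num)).mul_left A) fun n => ?_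
  rw [norm_mul, norm_pow]
  refine le_trans ?_ (hA n)
  gcongr
  linarith

lemma Ent.dco {c : ℕ → ℂ} (h : Ent c) : Ent (dco c) := by
  intro r hr
  obtain ⟨A, hA0, hA⟩ := h.bound hr
  refine ⟨A / r, fun n => ?_⟩
  have h1 := hA (n+1)
  have h2 : ((n:ℝ) + 1) ≤ 2 ^ (n+1) := by
    have := Nat.lt_two_pow_self (n := n+1)
    exact_mod_cast this.le
  have h3 : ‖_root_.dco c n‖ = ((n:ℝ)+1) * ‖c (n+1)‖ := by
    unfold _root_.dco
    rw [norm_mul]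
    congr 1
    exact_mod_cast Complex.norm_natCast (n+1)
  rw [h3, le_div_iff₀ hr]
  calc ((n:ℝ)+1) * ‖c (n+1)‖ * r ^ n * r = ((n:ℝ)+1) * (‖c (n+1)‖ * r ^ (n+1)) := by ring
    _ ≤ 2 ^ (n+1) * (A * (1/2)^(n+1)) := by gcongr
    _ = A := by rw [one_div, inv_pow]; field_simp

lemma psum_hasDerivAt {c : ℕ → ℂ} (h : Ent c) (z : ℂ) :
    HasDerivAt (psum c) (psum (dco c) z) z := by
  obtain ⟨A, hA0, hA⟩ := h.dco.bound (r := ‖z‖ + 1) (by positivity)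
  have key := hasDerivAt_tsum_of_isPreconnected (𝕜 := ℂ) (F := ℂ)
    (g := fun n y => c n * y ^ n) (g' := fun n y => c n * (n * y ^ (n-1)))
    (u := fun n => if n = 0 then 0 else A * (1/2:ℝ)^(n-1)) (t := Metric.ball 0 (‖z‖ + 1)) (y₀ := 0) (y := z)
    ?_ Metric.isOpen_ball (convex_ball _ _).isPreconnected ?_ ?_ ?_ ?_ ?_
  · have e : psum (dco c) z = ∑' n, c n * (n * z ^ (n-1)) := by
      rw [tsum_eq_zero_add' (f := fun n => c n * (n * z ^ (n-1)))]
      · simp only [psum, dco]; simp; congr 1; ext n; push_cast; ring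
      · convert h.dco.summable z using 2 with n
        simp only [dco]; simp; push_cast; ring
    rw [e]; exact key
  · rw [← summable_nat_add_iff 1]
    simpa using (summable_geometric_of_lt_one (r := (1/2:ℝ)) (by norm_num) (by norm_num)).mul_left A
  · intro n y _
    exact (hasDerivAt_pow n y).const_mul (c n)
  · intro n y hy
    rcases n with _ | n
    · simp
    · have h1 := hA n
      simp only [dco, norm_mul] at h1
      simp only [Nat.add_sub_cancel, norm_mul, norm_pow]
      simp
      rw [mem_ball_zero_iff] at hy
      have h2 : ‖y‖ ^ n ≤ (‖z‖+1)^n := by gcongr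
      calc ‖c (n+1)‖ * (‖(n:ℂ) + 1‖ * ‖y‖ ^ n) ≤ ‖c (n+1)‖ * (‖(n:ℂ) + 1‖ * (‖z‖+1) ^ n) := by gcongr
        _ = ‖(n:ℂ) + 1‖ * ‖c (n+1)‖ * (‖z‖+1)^n := by ring
        _ ≤ _ := by simpa using h1
  · simp; positivity
  · exact h.summable 0
  · simp

lemma psum_zero (c : ℕ → ℂ) : psum c 0 = c 0 := by
  unfold psum
  rw [tsum_eq_single 0]
  · simp
  · intro n hn; simp [hn]

/-- recursion coefficients -/
noncomputable def rco (a c0 c1 : ℂ) (g : ℕ → ℂ) : ℕ → ℂ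
  | 0 => c0
  | 1 => c1
  | (n+2) => ((if n < 3 then 0 else rco a c0 c1 g (n-3)) + a * rco a c0 c1 g n + g n) / (((n:ℂ)+2) * ((n:ℂ)+1))
decreasing_by all_goals omega

lemma rco_ent (a c0 c1 : ℂ) {g : ℕ → ℂ} (hg : Ent g) : Ent (rco a c0 c1 g) := by
  suffices H : ∀ r : ℝ, 1 ≤ r → ∃ A : ℝ, ∀ n, ‖rco a c0 c1 g n‖ * r ^ n ≤ A by
    intro r hr
    obtain ⟨A, hA⟩ := H (max 1 r) (le_max_left _ _)
    refine ⟨A, fun n => le_trans ?_ (hA n)⟩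
    gcongr
    exact le_max_right _ _
  intro r hr
  set c := rco a c0 c1 g with hc
  obtain ⟨G, hG⟩ := hg r (by linarith)
  obtain ⟨n0, hn0⟩ := exists_nat_ge (r^5 + ‖a‖ * r^2 + r^2)
  set A := G ⊔ (∑ k ∈ Finset.range (n0+2), ‖c k‖ * r ^ k) with hA
  have hAG : G ≤ A := le_max_left _ _
  have hA0 : 0 ≤ A := le_trans (by positivity) (le_max_right _ _)
  refine ⟨A, fun n => ?_⟩
  induction n using Nat.strong_induction_on with
  | _ n ih =>
    by_cases hn : n < n0 + 2
    · refine le_trans ?_ (le_max_right _ _)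
      exact Finset.single_le_sum (f := fun k => ‖c k‖ * r ^ k) (fun i _ => by positivity) (Finset.mem_range.2 hn)
    · obtain ⟨m, rfl⟩ : ∃ m, n = m + 2 := ⟨n-2, by omega⟩
      have hm : n0 ≤ m := by omega
      have hm' : (n0:ℝ) ≤ m := by exact_mod_cast hm
      have e : c (m+2) = ((if m < 3 then 0 else c (m-3)) + a * c m + g m) / (((m:ℂ)+2) * ((m:ℂ)+1)) := by
        rw [hc, rco]
      have e2 : ‖(((m:ℂ)+2) * ((m:ℂ)+1))‖ = ((m:ℝ)+2) * ((m:ℝ)+1) := by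
        rw [norm_mul]
        congr 1
        · exact_mod_cast Complex.norm_natCast (m+2)
        · exact_mod_cast Complex.norm_natCast (m+1)
      rw [e, norm_div, e2, div_mul_eq_mul_div, div_le_iff₀ (by positivity)]
      have b1 : ‖(if m < 3 then 0 else c (m-3))‖ * r ^ (m+2) ≤ A * r^5 := by
        split_ifs with h
        · simp; positivity
        · have := ih (m-3) (by omega)
          have e3 : r ^ (m+2) = r ^ (m-3) * r^5 := by rw [← pow_add]; congr 1; omega
          rw [e3, ← mul_assoc]; gcongr
      have b2 : ‖a * c m‖ * r ^ (m+2) ≤ A * (‖a‖ * r^2) := by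
        have := ih m (by omega)
        calc ‖a * c m‖ * r ^ (m+2) = (‖c m‖ * r ^ m) * (‖a‖ * r^2) := by rw [norm_mul]; ring
          _ ≤ _ := by gcongr
      have b3 : ‖g m‖ * r ^ (m+2) ≤ A * r^2 := by
        calc ‖g m‖ * r ^ (m+2) = (‖g m‖ * r ^ m) * (r^2) := by ring
          _ ≤ _ := by gcongr; exact (hG m).trans hAG
      calc _ ≤ (‖(if m < 3 then 0 else c (m-3))‖ + ‖a * c m‖ + ‖g m‖) * r ^ (m+2) := by
            gcongr; exact norm_add₃_le
        _ ≤ A * (r^5 + ‖a‖ * r^2 + r^2) := by linarith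
        _ ≤ A * (((m:ℝ)+2) * ((m:ℝ)+1)) := by
            gcongr
            nlinarith [hm'.trans' hn0, (Nat.cast_nonneg m : (0:ℝ) ≤ m)]

lemma exists_entire (a c0 c1 : ℂ) {g : ℕ → ℂ} (hg : Ent g) :
    ∃ c : ℕ → ℂ, Ent c ∧ psum c 0 = c0 ∧ psum (dco c) 0 = c1 ∧
      (∀ z, HasDerivAt (psum c) (psum (dco c) z) z) ∧
      ∀ z, HasDerivAt (psum (dco c)) ((z^3 + a) * psum c z + psum g z) z := by
  have hc := rco_ent a c0 c1 hg
  refine ⟨rco a c0 c1 g, hc, ?_, ?_, psum_hasDerivAt hc, fun z => ?_⟩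
  · rw [psum_zero, rco]
  · rw [psum_zero, dco]; simp [rco]
  · have h1 := psum_hasDerivAt hc.dco z
    convert h1 using 1
    set c := rco a c0 c1 g with hcd
    have e : ∀ n, dco (dco c) n * z ^ n = (if n < 3 then 0 else c (n-3)) * z^n + a * (c n * z^n) + g n * z^n := by
      intro n
      have : dco (dco c) n = (if n < 3 then 0 else c (n-3)) + a * c n + g n := by
        have e0 : c (n+2) = ((if n < 3 then 0 else c (n-3)) + a * c n + g n) / (((n:ℂ)+2) * ((n:ℂ)+1)) := by
          rw [hcd, rco]
        simp only [dco]
        rw [show n + 1 + 1 = n + 2 from rfl, e0]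
        have h2 : (n:ℂ) + 2 ≠ 0 := by exact_mod_cast (by omega : n + 2 ≠ 0)
        have h3 : (n:ℂ) + 1 ≠ 0 := by exact_mod_cast (by omega : n + 1 ≠ 0)
        push_cast
        have h4 : (n:ℂ) + 1 + 1 = n + 2 := by ring
        rw [h4]
        field_simp
      rw [this]; ring
    have s1 : HasSum (fun n => (if n < 3 then 0 else c (n-3)) * z^n) (z^3 * psum c z) := by
      have := ((hc.summable z).hasSum).mul_left (z^3)
      rw [← hasSum_nat_add_iff' 3]
      simp only [Finset.sum_range_succ, Finset.sum_range_zero]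
      have e5 : (fun n => (if n + 3 < 3 then 0 else c (n+3-3)) * z^(n+3)) = fun n => z^3 * (c n * z^n) := by
        ext n
        rw [if_neg (by omega)]
        simp only [Nat.add_sub_cancel]; ring
      rw [e5]
      simpa [psum] using this
    have s2 : HasSum (fun n => a * (c n * z^n)) (a * psum c z) := ((hc.summable z).hasSum).mul_left a
    have s3 : HasSum (fun n => g n * z^n) (psum g z) := (hg.summable z).hasSum
    have s := (s1.add s2).add s3
    have : psum (dco (dco c)) z = z^3 * psum c z + a * psum c z + psum g z := by
      unfold psum at *
      simp_rw [e]
      exact s.tsum_eq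
    rw [this]; ring

lemma ent_zero : Ent (fun _ => 0) := fun r _ => ⟨0, by simp⟩
lemma psum_zero_fun (z : ℂ) : psum (fun _ => 0) z = 0 := by simp [psum]
end

section
open ComplexConjugate

lemma mono_Icc {f f' : ℝ → ℝ} {a b : ℝ} (hab : a ≤ b) (hd : ∀ s, a ≤ s → s ≤ b → HasDerivAt f (f' s) s)
    (h0 : ∀ s, a ≤ s → s ≤ b → 0 ≤ f' s) : f a ≤ f b := by
  have : MonotoneOn f (Set.Icc a b) := by
    apply monotoneOn_of_deriv_nonneg (convex_Icc a b)
    · exact fun s hs => (hd s hs.1 hs.2).continuousAt.continuousWithinAt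
    · rw [interior_Icc]
      exact fun s hs => (hd s hs.1.le hs.2.le).differentiableAt.differentiableWithinAt
    · rw [interior_Icc]
      intro s hs
      rw [(hd s hs.1.le hs.2.le).deriv]
      exact h0 s hs.1.le hs.2.le
  exact this ⟨le_rfl, hab⟩ ⟨hab, le_rfl⟩ hab

/-- path solution: `v' = T v1`, `v1' = T Q v`. -/
def PSol (T : ℂ) (Q : ℝ → ℂ) (v v1 : ℝ → ℂ) : Prop :=
  ∀ s, HasDerivAt v (T * v1 s) s ∧ HasDerivAt v1 (T * (Q s * v s)) s

/-- the form -/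
noncomputable def KK (ζ : ℂ) (v v1 : ℝ → ℂ) (s : ℝ) : ℝ := (ζ * (conj (v s) * v1 s)).re

lemma HasDerivAt.normSq' {v : ℝ → ℂ} {v' : ℂ} {s : ℝ} (h : HasDerivAt v v' s) :
    HasDerivAt (fun s => ‖v s‖ ^ 2) (2 * (conj (v s) * v').re) s := by
  have := h.norm_sq
  rw [Complex.inner] at this
  convert this using 2
  rw [mul_comm]

lemma HasDerivAt.conj' {v : ℝ → ℂ} {v' : ℂ} {s : ℝ} (h : HasDerivAt v v' s) :
    HasDerivAt (fun s => conj (v s)) (conj v') s := by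
  simpa using h.star

lemma HasDerivAt.re' {v : ℝ → ℂ} {v' : ℂ} {s : ℝ} (h : HasDerivAt v v' s) :
    HasDerivAt (fun s => (v s).re) (v'.re) s :=
  (Complex.reCLM.hasFDerivAt.comp_hasDerivAt s h)

lemma HasDerivAt.im' {v : ℝ → ℂ} {v' : ℂ} {s : ℝ} (h : HasDerivAt v v' s) :
    HasDerivAt (fun s => (v s).im) (v'.im) s :=
  (Complex.imCLM.hasFDerivAt.comp_hasDerivAt s h)

lemma conj_mul_re (z : ℂ) : conj z * z = ((‖z‖ ^ 2 : ℝ) : ℂ) := by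
  rw [mul_comm, Complex.mul_conj, Complex.normSq_eq_norm_sq]

lemma PSol.hasDerivAt_KK {T : ℂ} {Q v v1} (h : PSol T Q v v1) (ζ : ℂ) (s : ℝ) :
    HasDerivAt (KK ζ v v1) ((ζ * conj T).re * ‖v1 s‖ ^ 2 + (ζ * (T * Q s)).re * ‖v s‖ ^ 2) s := by
  have h1 := (((h s).1.conj'.mul (h s).2).const_mul ζ).re'
  have h1' : HasDerivAt (KK ζ v v1) (ζ * (conj (T * v1 s) * v1 s + conj (v s) * (T * (Q s * v s)))).re s := h1
  convert h1' using 1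
  have : ζ * (conj (T * v1 s) * v1 s + conj (v s) * (T * (Q s * v s)))
     = (ζ * conj T) * (conj (v1 s) * v1 s) + (ζ * (T * Q s)) * (conj (v s) * v s) := by
    simp only [map_mul]; ring
  rw [this, conj_mul_re, conj_mul_re, Complex.add_re, Complex.re_mul_ofReal, Complex.re_mul_ofReal]

lemma KK_abs_le (ζ : ℂ) (v v1 : ℝ → ℂ) (s : ℝ) : |KK ζ v v1 s| ≤ ‖ζ‖ * (‖v s‖ * ‖v1 s‖) := by
  unfold KK
  refine (Complex.abs_re_le_norm _).trans ?_
  simp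

lemma re_bound (z : ℂ) {B : ℝ} (h : ‖z‖ ≤ B) : -B ≤ z.re := by
  have := Complex.abs_re_le_norm z
  have := neg_abs_le z.re
  linarith

/-- `M s = s^{3/2}` -/
noncomputable def MM (s : ℝ) : ℝ := s * √s

lemma MM_pos {s : ℝ} (h : 0 < s) : 0 < MM s := mul_pos h (Real.sqrt_pos.2 h)
lemma MM_nonneg {s : ℝ} (h : 0 ≤ s) : 0 ≤ MM s := mul_nonneg h (Real.sqrt_nonneg s)
lemma MM_sq {s : ℝ} (h : 0 ≤ s) : MM s * MM s = s ^ 3 := by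
  unfold MM; linear_combination s^2 * Real.mul_self_sqrt h
lemma MM_mono {s t : ℝ} (h0 : 0 ≤ s) (h : s ≤ t) : MM s ≤ MM t := by
  unfold MM; have := h0.trans h; gcongr
lemma le_MM {s : ℝ} (h : 1 ≤ s) : s ≤ MM s := by
  unfold MM
  have : 1 ≤ √s := Real.one_le_sqrt.2 h
  nlinarith
lemma MM_deriv {s : ℝ} (h : 0 < s) : HasDerivAt MM (3/2 * √s) s := by
  have h1 := (hasDerivAt_id s).mul (Real.hasDerivAt_sqrt h.ne')
  have h2 : √s ≠ 0 := (Real.sqrt_pos.2 h).ne'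
  have e : 3/2 * √s = 1 * √s + s * (1 / (2 * √s)) := by
    field_simp
    nlinarith [Real.sq_sqrt h.le]
  rw [e]; exact h1

/-- `s^{5/2}` -/
noncomputable def XX (s : ℝ) : ℝ := s * MM s
lemma XX_deriv {s : ℝ} (h : 0 < s) : HasDerivAt XX (5/2 * MM s) s := by
  have h1 := (hasDerivAt_id s).mul (MM_deriv h)
  have e : 5/2 * MM s = 1 * MM s + s * (3/2 * √s) := by unfold MM; ring
  rw [e]; exact h1
lemma le_XX {s : ℝ} (h : 1 ≤ s) : s ≤ XX s := by
  unfold XX; nlinarith [le_MM h]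
lemma MM_le_XX {s : ℝ} (h : 1 ≤ s) : MM s ≤ XX s := by
  unfold XX; nlinarith [le_MM h]

/-- rays on which the form is coercive -/
structure Gen (T ζ : ℂ) (Q : ℝ → ℂ) (v v1 : ℝ → ℂ) (c r0 : ℝ) : Prop where
  sol : PSol T Q v v1
  hT : ‖T‖ = 1
  hc : 0 < c
  hr0 : 1 ≤ r0
  hr1 : 2 * ‖ζ‖ ≤ c * r0
  hζ : c ≤ (ζ * conj T).re
  hQ : ∀ s, r0 ≤ s → c * s ^ 3 ≤ (ζ * (T * Q s)).re
  hQb : ∀ s, r0 ≤ s → ‖Q s‖ ≤ 2 * s ^ 3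

namespace Gen
variable {T ζ : ℂ} {Q v v1 : ℝ → ℂ} {c r0 : ℝ}

lemma mono' (h : Gen T ζ Q v v1 c r0) {r1 : ℝ} (hr : r0 ≤ r1) : Gen T ζ Q v v1 c r1 :=
  ⟨h.sol, h.hT, h.hc, h.hr0.trans hr, h.hr1.trans (by have := h.hc; gcongr), h.hζ,
    fun s hs => h.hQ s (hr.trans hs), fun s hs => h.hQb s (hr.trans hs)⟩

lemma ζpos (h : Gen T ζ Q v v1 c r0) : c ≤ ‖ζ‖ := by
  refine h.hζ.trans ((Complex.re_le_norm _).trans ?_)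
  simp [h.hT]

lemma Kd (h : Gen T ζ Q v v1 c r0) (s : ℝ) (hs : r0 ≤ s) :
    c * (‖v1 s‖ ^ 2 + s ^ 3 * ‖v s‖ ^ 2) ≤ (ζ * conj T).re * ‖v1 s‖ ^ 2 + (ζ * (T * Q s)).re * ‖v s‖ ^ 2 := by
  have h1 := h.hζ
  have h2 := h.hQ s hs
  have e1 := mul_le_mul_of_nonneg_right h1 (sq_nonneg ‖v1 s‖)
  have e2 := mul_le_mul_of_nonneg_right h2 (sq_nonneg ‖v s‖)
  linarith

lemma amgm (s : ℝ) (hs : 0 ≤ s) (a b : ℝ) : 2 * MM s * (a * b) ≤ b ^ 2 + s ^ 3 * a ^ 2 := by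
  rw [← MM_sq hs]; nlinarith [sq_nonneg (b - MM s * a)]

lemma Kmono (h : Gen T ζ Q v v1 c r0) {a b : ℝ} (ha : r0 ≤ a) (hab : a ≤ b) :
    KK ζ v v1 a ≤ KK ζ v v1 b := by
  refine mono_Icc hab (fun s _ _ => h.sol.hasDerivAt_KK ζ s) (fun s hs _ => ?_)
  refine le_trans ?_ (h.Kd s (ha.trans hs))
  have := h.hc; have := h.hr0
  have : 0 ≤ s := by linarith
  positivity

/-- if `K' ≥ h > 0` eventually then `K` becomes positive -/
lemma grow (h : Gen T ζ Q v v1 c r0) (hK : ∀ s, r0 ≤ s → KK ζ v v1 s ≤ 0) {r e : ℝ} (hr : r0 ≤ r) (he : 0 < e)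
    (H : ∀ s, r ≤ s → e ≤ c * (‖v1 s‖ ^ 2 + s ^ 3 * ‖v s‖ ^ 2)) : False := by
  have hd : ∀ b, r ≤ b → KK ζ v v1 r - e * r ≤ KK ζ v v1 b - e * b := fun b hb =>
    mono_Icc (f := fun s => KK ζ v v1 s - e * s) hb
      (fun s _ _ => (h.sol.hasDerivAt_KK ζ s).sub ((hasDerivAt_id s).const_mul e))
      (fun s hs _ => by
        have := h.Kd s (hr.trans hs)
        have := H s hs
        linarith)
  set b := r + (1 - KK ζ v v1 r) / e with hb
  have hKr := hK r hr
  have hbr : r ≤ b := by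
    have : 0 ≤ (1 - KK ζ v v1 r) / e := by apply div_nonneg <;> linarith
    linarith
  have h1 := hd b hbr
  have h2 := hK b (hr.trans hbr)
  have h3 : e * b = e * r + (1 - KK ζ v v1 r) := by rw [hb]; field_simp
  linarith

lemma E1 (h : Gen T ζ Q v v1 c r0) (hK : ∀ s, r0 ≤ s → KK ζ v v1 s ≤ 0) {r : ℝ} (hr : r0 ≤ r) :
    c * MM r * ‖v r‖ ^ 2 ≤ - KK ζ v v1 r := by
  by_contra! hcon
  have hr0 := h.hr0
  have hc := h.hc
  have hrp : 0 < r := by linarith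
  have hM := MM_pos hrp
  have hd : ∀ b, r ≤ b → c * MM r * ‖v r‖ ^ 2 + KK ζ v v1 r ≤ c * MM r * ‖v b‖ ^ 2 + KK ζ v v1 b := fun b hb =>
    mono_Icc (f := fun s => c * MM r * ‖v s‖ ^ 2 + KK ζ v v1 s) hb
      (fun s _ _ => ((h.sol s).1.normSq'.const_mul _).add (h.sol.hasDerivAt_KK ζ s))
      (fun s hs _ => by
        have h1 := h.Kd s (hr.trans hs)
        have h2 : -(‖v s‖ * ‖v1 s‖) ≤ (conj (v s) * (T * v1 s)).re := re_bound _ (by simp [h.hT])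
        have h3 := amgm s (by linarith) ‖v s‖ ‖v1 s‖
        have h4 : MM r * (‖v s‖ * ‖v1 s‖) ≤ MM s * (‖v s‖ * ‖v1 s‖) := by
          gcongr; exact MM_mono hrp.le hs
        have h5 := mul_le_mul_of_nonneg_left h2 (by positivity : 0 ≤ 2 * c * MM r)
        have h6 := mul_le_mul_of_nonneg_left h3 hc.le
        have h7 := mul_le_mul_of_nonneg_left h4 hc.le
        linarith)
  set e := c * MM r * ‖v r‖ ^ 2 + KK ζ v v1 r with he
  have hepos : 0 < e := by linarith
  refine h.grow hK hr (e := e / MM r) (by positivity) (fun s hs => ?_)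
  have h1 := hd s hs
  have h2 := hK s (hr.trans hs)
  rw [div_le_iff₀ hM]
  have h3 : 1 ≤ s ^ 3 := one_le_pow₀ (by linarith)
  have h4 : c * MM r * ‖v s‖ ^ 2 ≤ c * MM r * (‖v1 s‖ ^ 2 + s ^ 3 * ‖v s‖ ^ 2) := by
    gcongr
    nlinarith [sq_nonneg ‖v s‖, sq_nonneg ‖v1 s‖]
  linarith

lemma E2 (h : Gen T ζ Q v v1 c r0) (hK : ∀ s, r0 ≤ s → KK ζ v v1 s ≤ 0) {r : ℝ} (hr : r0 ≤ r) :
    ‖v1 r‖ ^ 2 ≤ (4 / c) * MM r * (- KK ζ v v1 r) := by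
  by_contra! hcon
  have hr0 := h.hr0
  have hc := h.hc
  have hrp : 0 < r := by linarith
  have hM := MM_pos hrp
  have hd : ∀ b, r ≤ b → ‖v1 r‖ ^ 2 + (4 / c) * (MM r * (KK ζ v v1 r)) ≤ ‖v1 b‖ ^ 2 + (4 / c) * (MM b * (KK ζ v v1 b)) := fun b hb =>
    mono_Icc (f := fun s => ‖v1 s‖ ^ 2 + (4 / c) * (MM s * (KK ζ v v1 s))) hb
      (fun s hs _ => ((h.sol s).2.normSq').add (((MM_deriv (by linarith)).mul (h.sol.hasDerivAt_KK ζ s)).const_mul (4/c)))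
      (fun s hs _ => by
        have hs1 : 1 ≤ s := by linarith
        have h1 := h.Kd s (hr.trans hs)
        have hM := MM_pos (show 0 < s by linarith)
        have h2 : -(2 * s ^ 3 * (‖v s‖ * ‖v1 s‖)) ≤ (conj (v1 s) * (T * (Q s * v s))).re := re_bound _ (by
          simp [h.hT]
          have := h.hQb s (hr.trans hs)
          calc ‖v1 s‖ * (‖Q s‖ * ‖v s‖) = ‖Q s‖ * (‖v s‖ * ‖v1 s‖) := by ring
            _ ≤ _ := by gcongr)
        have h3 := amgm s (by linarith) ‖v s‖ ‖v1 s‖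
        have h4 := (abs_le.1 (KK_abs_le ζ v v1 s)).1
        set P := ‖v s‖ * ‖v1 s‖ with hP
        have hP0 : 0 ≤ P := by positivity
        have h5 : (4/c) * (MM s * (c * (‖v1 s‖ ^ 2 + s ^ 3 * ‖v s‖ ^ 2))) ≥ 8 * s^3 * P := by
          have : (4/c) * (MM s * (c * (‖v1 s‖ ^ 2 + s ^ 3 * ‖v s‖ ^ 2))) = 4 * (MM s * (‖v1 s‖ ^ 2 + s ^ 3 * ‖v s‖ ^ 2)) := by
            field_simp
          rw [this]
          have h33 := mul_le_mul_of_nonneg_left h3 hM.le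
          have h34 : MM s * (2 * MM s * P) = 2 * s^3 * P := by rw [← MM_sq (by linarith : (0:ℝ) ≤ s)]; ring
          linarith
        have h6 : (4/c) * (MM s * (c * (‖v1 s‖ ^ 2 + s ^ 3 * ‖v s‖ ^ 2))) ≤ (4/c) * (MM s * ((ζ * conj T).re * ‖v1 s‖ ^ 2 + (ζ * (T * Q s)).re * ‖v s‖ ^ 2)) := by
          gcongr
        have h7 : (4/c) * (3/2 * √s * KK ζ v v1 s) ≥ - (3 * s^3 * P) := by
          have a1 : ‖ζ‖ ≤ c * s / 2 := by have := h.hr1; nlinarith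
          have a2 : √s ≤ s := by
            rw [Real.sqrt_le_left (by linarith)]; nlinarith
          have a3 : (4/c) * (3/2 * √s * KK ζ v v1 s) ≥ (4/c) * (3/2 * √s * (-(‖ζ‖ * P))) := by
            gcongr
          have a4 : (4/c) * (3/2 * √s * (‖ζ‖ * P)) ≤ (4/c) * (3/2 * s * ((c * s / 2) * P)) := by
            gcongr
          have a5 : (4/c) * (3/2 * s * ((c * s / 2) * P)) = 3 * s^2 * P := by field_simp; ring
          have a6 : 3 * s^2 * P ≤ 3 * s^3 * P := by
            gcongr
            norm_num
          linarith
        have : 0 ≤ s^3 * P := by positivity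
        linarith)
  set e := ‖v1 r‖ ^ 2 + (4 / c) * (MM r * (KK ζ v v1 r)) with he
  have hepos : 0 < e := by linarith
  refine h.grow hK hr (e := c * e) (by positivity) (fun s hs => ?_)
  have h1 := hd s hs
  have h2 := hK s (hr.trans hs)
  have hM := MM_pos (show 0 < s by linarith)
  have h3 : (4 / c) * (MM s * (KK ζ v v1 s)) ≤ 0 := 
    mul_nonpos_of_nonneg_of_nonpos (by positivity) (mul_nonpos_of_nonneg_of_nonpos hM.le h2)
  gcongr
  have : 0 ≤ s^3 * ‖v s‖^2 := by have : 0 ≤ s := by linarith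
                                 positivity
  linarith

lemma Y_le (h : Gen T ζ Q v v1 c r0) (hK : ∀ s, r0 ≤ s → KK ζ v v1 s ≤ 0) {r : ℝ} (hr : r0 ≤ r) :
    ‖v1 r‖ ^ 2 + r ^ 3 * ‖v r‖ ^ 2 ≤ (5 / c) * MM r * (- KK ζ v v1 r) := by
  have h1 := h.E1 hK hr
  have h2 := h.E2 hK hr
  have hr0 := h.hr0
  have hc := h.hc
  have hM := MM_pos (show 0 < r by linarith)
  have h3 : r ^ 3 * ‖v r‖ ^ 2 ≤ (1 / c) * MM r * (- KK ζ v v1 r) := by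
    rw [← MM_sq (by linarith : (0:ℝ) ≤ r)]
    calc MM r * MM r * ‖v r‖ ^ 2 = (1/c) * MM r * (c * MM r * ‖v r‖ ^ 2) := by field_simp
      _ ≤ _ := by gcongr
  have : (5 / c) * MM r * (- KK ζ v v1 r) = (4 / c) * MM r * (- KK ζ v v1 r) + (1 / c) * MM r * (- KK ζ v v1 r) := by ring
  linarith

lemma k_le_E (h : Gen T ζ Q v v1 c r0) (hK : ∀ s, r0 ≤ s → KK ζ v v1 s ≤ 0) {r : ℝ} (hr : r0 ≤ r) :
    - KK ζ v v1 r ≤ (4 * ‖ζ‖ ^ 2 / c) * MM r * ‖v r‖ ^ 2 := by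
  have h2 := h.E2 hK hr
  have hr0 := h.hr0
  have hc := h.hc
  have hM := MM_pos (show 0 < r by linarith)
  have h4 := (abs_le.1 (KK_abs_le ζ v v1 r)).1
  set k := - KK ζ v v1 r
  have h5 : k ≤ ‖ζ‖ * (‖v r‖ * ‖v1 r‖) := by linarith
  have hk : 0 ≤ k := by have := hK r hr; linarith
  rcases eq_or_lt_of_le hk with h0 | h0
  · rw [← h0]; positivity
  have h6 : k ^ 2 ≤ ‖ζ‖ ^ 2 * ‖v r‖ ^ 2 * ‖v1 r‖ ^ 2 := by
    calc k^2 ≤ (‖ζ‖ * (‖v r‖ * ‖v1 r‖))^2 := by gcongr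
      _ = _ := by ring
  have h7 : k ^ 2 ≤ ‖ζ‖ ^ 2 * ‖v r‖ ^ 2 * ((4 / c) * MM r * k) := h6.trans (by gcongr)
  have h8 : k * k ≤ ((4 * ‖ζ‖ ^ 2 / c) * MM r * ‖v r‖ ^ 2) * k := by
    calc k * k = k^2 := by ring
      _ ≤ _ := h7
      _ = _ := by ring
  exact le_of_mul_le_mul_right h8 h0

lemma k_decay (h : Gen T ζ Q v v1 c r0) (hK : ∀ s, r0 ≤ s → KK ζ v v1 s ≤ 0) {r : ℝ} (hr : r0 ≤ r)
    {d : ℝ} (hd : d * ‖ζ‖ ≤ 4 / 5 * c) (hd0 : 0 ≤ d):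
    - KK ζ v v1 r ≤ - KK ζ v v1 r0 * Real.exp (- d * (XX r - XX r0)) := by
  have hr0 := h.hr0
  have hc := h.hc
  have key : -(- KK ζ v v1 r0 * Real.exp (d * XX r0)) ≤ -(- KK ζ v v1 r * Real.exp (d * XX r)) := by
    refine mono_Icc (f := fun s => -(- KK ζ v v1 s * Real.exp (d * XX s))) hr
      (fun s hs _ => ((h.sol.hasDerivAt_KK ζ s).neg.mul (((XX_deriv (by linarith)).const_mul d).exp)).neg)
      (fun s hs _ => ?_)
    have hs0 : (0:ℝ) < s := by linarith
    have h1 := h.Kd s hs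
    have h3 := amgm s hs0.le ‖v s‖ ‖v1 s‖
    have h4 := (abs_le.1 (KK_abs_le ζ v v1 s)).1
    have hM := MM_pos hs0
    have hP : 0 ≤ ‖v s‖ * ‖v1 s‖ := by positivity
    set P := ‖v s‖ * ‖v1 s‖
    have h5 : d * (5/2 * MM s) * (- KK ζ v v1 s) ≤ c * (2 * MM s * P) := by
      calc d * (5/2 * MM s) * (- KK ζ v v1 s) ≤ d * (5/2 * MM s) * (‖ζ‖ * P) := by gcongr; linarith
        _ = (d * ‖ζ‖) * (5/2 * MM s * P) := by ring
        _ ≤ (4/5*c) * (5/2 * MM s * P) := by gcongr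
        _ = _ := by ring
    have h6 := mul_le_mul_of_nonneg_left h3 hc.le
    have h7 : 0 ≤ ((ζ * conj T).re * ‖v1 s‖ ^ 2 + (ζ * (T * Q s)).re * ‖v s‖ ^ 2 - d * (5/2 * MM s) * (- KK ζ v v1 s)) * Real.exp (d * XX s) := by
      apply mul_nonneg _ (Real.exp_pos _).le
      linarith
    simp only [Pi.neg_apply]
    linarith
  have e : Real.exp (- d * (XX r - XX r0)) = Real.exp (d * XX r0) / Real.exp (d * XX r) := by
    rw [← Real.exp_sub]; congr 1; ring
  rw [e, ← mul_div_assoc, le_div_iff₀ (Real.exp_pos _)]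
  linarith

end Gen
end

section
open ComplexConjugate Filter Topology

lemma norm_le_of_rot {z : ℂ} {X : ℝ} (h : ∀ e : ℂ, ‖e‖ = 1 → (e * z).re ≤ X) : ‖z‖ ≤ X := by
  by_cases hz : z = 0
  · have := h 1 (by simp)
    simpa [hz] using this
  · have hz' : (‖z‖ : ℂ) ≠ 0 := by simpa using hz
    have := h (conj z / ‖z‖) (by simp [hz])
    have e : conj z / ‖z‖ * z = ((‖z‖ : ℝ) : ℂ) := by
      rw [div_mul_eq_mul_div, conj_mul_re]; push_cast; field_simp
    rw [e, Complex.ofReal_re] at this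
    exact this

lemma XX_tendsto : Tendsto XX atTop atTop := by
  refine tendsto_atTop_mono' atTop ?_ tendsto_id
  filter_upwards [eventually_ge_atTop 1] with s hs using le_XX hs

namespace Gen
variable {T ζ : ℂ} {Q v v1 : ℝ → ℂ} {c r0 : ℝ}

lemma k_tendsto (h : Gen T ζ Q v v1 c r0) (hK : ∀ s, r0 ≤ s → KK ζ v v1 s ≤ 0) :
    Tendsto (KK ζ v v1) atTop (𝓝 0) := by
  have hζ := h.ζpos
  have hc := h.hc
  have hζ0 : 0 < ‖ζ‖ := by linarith
  set d := 4 / 5 * c / ‖ζ‖ with hd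
  have hdpos : 0 < d := by positivity
  have t1 : Tendsto (fun r => - KK ζ v v1 r0 * Real.exp (- d * (XX r - XX r0))) atTop (𝓝 (- KK ζ v v1 r0 * 0)) := by
    apply Tendsto.const_mul
    apply Real.tendsto_exp_atBot.comp
    apply Tendsto.const_mul_atTop_of_neg (by linarith)
    exact tendsto_atTop_add_const_right _ _ XX_tendsto
  rw [mul_zero] at t1
  have t2 : Tendsto (fun r => - KK ζ v v1 r) atTop (𝓝 0) := by
    refine tendsto_of_tendsto_of_tendsto_of_le_of_le' tendsto_const_nhds t1 ?_ ?_
    · filter_upwards [eventually_ge_atTop r0] with s hs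
      have := hK s hs; linarith
    · filter_upwards [eventually_ge_atTop r0] with s hs
      exact h.k_decay hK hs (by rw [hd]; field_simp; rfl) hdpos.le
  simpa using t2.neg

lemma K_nonpos (h : Gen T ζ Q v v1 c r0) (hY : Tendsto (fun s => ‖v1 s‖ ^ 2 + s ^ 3 * ‖v s‖ ^ 2) atTop (𝓝 0)) :
    ∀ s, r0 ≤ s → KK ζ v v1 s ≤ 0 := by
  intro s hs
  have hr0 := h.hr0
  have t : Tendsto (KK ζ v v1) atTop (𝓝 0) := by
    apply squeeze_zero_norm' (a := fun s => ‖ζ‖ * (‖v1 s‖ ^ 2 + s ^ 3 * ‖v s‖ ^ 2))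
    · filter_upwards [eventually_ge_atTop 1] with x hx
      rw [Real.norm_eq_abs]
      refine (KK_abs_le ζ v v1 x).trans ?_
      gcongr
      have : 1 ≤ x^3 := one_le_pow₀ hx
      nlinarith [sq_nonneg (‖v x‖ - ‖v1 x‖), sq_nonneg (‖v x‖), sq_nonneg (‖v1 x‖)]
    · simpa using hY.const_mul ‖ζ‖
  refine ge_of_tendsto t ?_
  filter_upwards [eventually_ge_atTop s] with x hx using h.Kmono hs hx

lemma Y_decay (h : Gen T ζ Q v v1 c r0) (hK : ∀ s, r0 ≤ s → KK ζ v v1 s ≤ 0)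
    {d : ℝ} (hd : (d + 1/20) * ‖ζ‖ ≤ 4 / 5 * c) (hd0 : 0 ≤ d) :
    ∃ A, 0 ≤ A ∧ ∀ s, r0 ≤ s → ‖v1 s‖ ^ 2 + s ^ 3 * ‖v s‖ ^ 2 ≤ A * Real.exp (- d * XX s) := by
  have hc := h.hc
  have hr0 := h.hr0
  have hk0 : 0 ≤ - KK ζ v v1 r0 := by have := hK r0 le_rfl; linarith
  refine ⟨(5/c) * 20 * (- KK ζ v v1 r0 * Real.exp ((d + 1/20) * XX r0)), by positivity, fun s hs => ?_⟩
  refine (h.Y_le hK hs).trans ?_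
  have h1 := h.k_decay hK hs hd (by linarith)
  have h2 : MM s ≤ 20 * Real.exp (1/20 * XX s) := by
    have := Real.add_one_le_exp (1/20 * XX s)
    have := MM_le_XX (show 1 ≤ s by linarith)
    linarith
  have hM := MM_pos (show 0 < s by linarith)
  calc 5 / c * MM s * -KK ζ v v1 s ≤ 5 / c * (20 * Real.exp (1/20 * XX s)) * (- KK ζ v v1 r0 * Real.exp (- (d + 1/20) * (XX s - XX r0))) := by
        gcongr
        have := hK s hs; linarith
    _ = (5/c) * 20 * (- KK ζ v v1 r0) * (Real.exp (1/20 * XX s) * Real.exp (- (d + 1/20) * (XX s - XX r0))) := by ring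
    _ = (5/c) * 20 * (- KK ζ v v1 r0) * (Real.exp ((d + 1/20) * XX r0) * Real.exp (- d * XX s)) := by
        rw [← Real.exp_add, ← Real.exp_add]; congr 2; ring
    _ = _ := by ring

/-- Ω bound -/
lemma om (h : Gen T ζ Q v v1 c r0) (hK : ∀ s, r0 ≤ s → KK ζ v v1 s ≤ 0)
    {Q' w w1 : ℝ → ℂ}
    (h' : Gen T ζ Q' w w1 c r0) (hK' : ∀ s, r0 ≤ s → KK ζ w w1 s ≤ 0)
    {Om : ℝ → ℂ} {κ : ℂ} (hOm : ∀ s, HasDerivAt Om (T * (κ * (v s * w s))) s)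
    (hO : Tendsto Om atTop (𝓝 0)) {B : ℝ} (hB : ‖κ‖ ≤ 2 * c * B) {r : ℝ} (hr : r0 ≤ r) {x : ℝ} (hx : 0 < x) :
    ‖Om r‖ ≤ B / r ^ 3 * (x * (- KK ζ v v1 r) + (- KK ζ w w1 r) / x) := by
  have hr0 := h.hr0
  have hc := h.hc
  have hB0 : 0 ≤ B := by
    have : 0 ≤ 2 * c * B := (norm_nonneg _).trans hB
    by_contra! hcon
    nlinarith
  have hrp : 0 < r := by linarith
  apply norm_le_of_rot
  intro e he
  have hmono : ∀ b, r ≤ b → (e * Om r).re + B / r ^ 3 * (x * (KK ζ v v1 r) + (KK ζ w w1 r) / x) ≤ (e * Om b).re + B / r ^ 3 * (x * (KK ζ v v1 b) + (KK ζ w w1 b) / x) := fun b hb => by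
    refine mono_Icc (f := fun s => (e * Om s).re + B / r ^ 3 * (x * (KK ζ v v1 s) + (KK ζ w w1 s) / x)) hb
      (fun s hs _ => ((hOm s).const_mul e).re'.add ((((h.sol.hasDerivAt_KK ζ s).const_mul x).add
        ((h'.sol.hasDerivAt_KK ζ s).div_const x)).const_mul _)) (fun s hs _ => ?_)
    have h1 := h.Kd s (hr.trans hs)
    have h2 := h'.Kd s (hr.trans hs)
    set k1 := (ζ * conj T).re * ‖v1 s‖ ^ 2 + (ζ * (T * Q s)).re * ‖v s‖ ^ 2
    set k2 := (ζ * conj T).re * ‖w1 s‖ ^ 2 + (ζ * (T * Q' s)).re * ‖w s‖ ^ 2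
    have h3 : -(2 * c * B * (‖v s‖ * ‖w s‖)) ≤ (e * (T * (κ * (v s * w s)))).re := by
      apply re_bound
      simp only [norm_mul, he, h.hT, one_mul]
      gcongr
    have hsp : 0 < s := by linarith
    have hs3 : r ^ 3 ≤ s ^ 3 := by gcongr
    have h4 : c * (s ^ 3 * ‖v s‖^2) ≤ k1 := by
      refine le_trans ?_ h1
      gcongr
      nlinarith [sq_nonneg ‖v1 s‖]
    have h5 : c * (s ^ 3 * ‖w s‖^2) ≤ k2 := by
      refine le_trans ?_ h2
      gcongr
      nlinarith [sq_nonneg ‖w1 s‖]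
    have h6 : B / r ^ 3 * (x * k1 + k2 / x) ≥ B / r^3 * (x * (c * (r ^ 3 * ‖v s‖^2)) + (c * (r ^ 3 * ‖w s‖^2)) / x) := by
      gcongr
      · exact le_trans (by gcongr) h4
      · exact le_trans (by gcongr) h5
    have h7 : B / r^3 * (x * (c * (r ^ 3 * ‖v s‖^2)) + (c * (r ^ 3 * ‖w s‖^2)) / x) = c * B * (x * ‖v s‖^2 + ‖w s‖^2 / x) := by
      field_simp
    have h8 : 2 * (‖v s‖ * ‖w s‖) ≤ x * ‖v s‖^2 + ‖w s‖^2 / x := by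
      have : x * ‖v s‖^2 + ‖w s‖^2 / x - 2 * (‖v s‖ * ‖w s‖) = (x * ‖v s‖ - ‖w s‖)^2 / x := by
        field_simp; ring
      have : 0 ≤ (x * ‖v s‖ - ‖w s‖)^2 / x := by positivity
      linarith
    have h9 := mul_le_mul_of_nonneg_left h8 (by positivity : 0 ≤ c * B)
    linarith
  have t0 : Tendsto (fun b => (e * Om b).re + B / r ^ 3 * (x * (KK ζ v v1 b) + (KK ζ w w1 b) / x)) atTop (𝓝 ((e * 0).re + B / r ^ 3 * (x * 0 + 0 / x))) := by
    apply Tendsto.add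
    · exact (Complex.continuous_re.tendsto _).comp (hO.const_mul e)
    · exact (((h.k_tendsto hK).const_mul x).add ((h'.k_tendsto hK').div_const x)).const_mul _
  have t1 := ge_of_tendsto t0 (by filter_upwards [eventually_ge_atTop r] with b hb using hmono b hb)
  simp only [mul_zero, Complex.zero_re, zero_div, add_zero] at t1
  have : B / r ^ 3 * (x * (- KK ζ v v1 r) + (- KK ζ w w1 r) / x) = - (B / r ^ 3 * (x * (KK ζ v v1 r) + (KK ζ w w1 r) / x)) := by ring
  linarith

end Gen

/-- coercive segments -/
structure Seg (T ζ : ℂ) (Q : ℝ → ℂ) (v v1 : ℝ → ℂ) (c C ρ a b : ℝ) : Prop where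
  sol : PSol T Q v v1
  hT : ‖T‖ ≤ C
  hc : 0 < c
  hρ : 0 < ρ
  hab : a ≤ b
  hζ : c ≤ (ζ * conj T).re
  hQ : ∀ s, a ≤ s → s ≤ b → c * ρ ^ 3 ≤ (ζ * (T * Q s)).re
  hQb : ∀ s, a ≤ s → s ≤ b → ‖Q s‖ ≤ C * ρ ^ 3

namespace Seg
variable {T ζ : ℂ} {Q v v1 : ℝ → ℂ} {c C ρ a b : ℝ}

lemma left (h : Seg T ζ Q v v1 c C ρ a b) {a' : ℝ} (h1 : a ≤ a') (h2 : a' ≤ b) : Seg T ζ Q v v1 c C ρ a' b :=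
  ⟨h.sol, h.hT, h.hc, h.hρ, h2, h.hζ, fun s hs => h.hQ s (h1.trans hs), fun s hs => h.hQb s (h1.trans hs)⟩

lemma Kd (h : Seg T ζ Q v v1 c C ρ a b) (s : ℝ) (hs : a ≤ s) (hsb : s ≤ b) :
    c * (‖v1 s‖ ^ 2 + ρ ^ 3 * ‖v s‖ ^ 2) ≤ (ζ * conj T).re * ‖v1 s‖ ^ 2 + (ζ * (T * Q s)).re * ‖v s‖ ^ 2 := by
  have h1 := h.hζ
  have h2 := h.hQ s hs hsb
  have e1 := mul_le_mul_of_nonneg_right h1 (sq_nonneg ‖v1 s‖)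
  have e2 := mul_le_mul_of_nonneg_right h2 (sq_nonneg ‖v s‖)
  linarith

lemma k (h : Seg T ζ Q v v1 c C ρ a b) : KK ζ v v1 a ≤ KK ζ v v1 b := by
  refine mono_Icc h.hab (fun s _ _ => h.sol.hasDerivAt_KK ζ s) (fun s hs hsb => ?_)
  refine le_trans ?_ (h.Kd s hs hsb)
  have := h.hc; have := h.hρ
  positivity

lemma s1 (h : Seg T ζ Q v v1 c C ρ a b) {β : ℝ} (hβ0 : 0 ≤ β) (hβ : β * C ≤ c)
    (hb : β * MM ρ * ‖v b‖ ^ 2 ≤ - KK ζ v v1 b) : β * MM ρ * ‖v a‖ ^ 2 ≤ - KK ζ v v1 a := by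
  have hρ := h.hρ
  have hM := MM_pos hρ
  suffices β * MM ρ * ‖v a‖ ^ 2 + KK ζ v v1 a ≤ β * MM ρ * ‖v b‖ ^ 2 + KK ζ v v1 b by linarith
  refine mono_Icc (f := fun s => β * MM ρ * ‖v s‖ ^ 2 + KK ζ v v1 s) h.hab
      (fun s _ _ => ((h.sol s).1.normSq'.const_mul _).add (h.sol.hasDerivAt_KK ζ s))
      (fun s hs hsb => ?_)
  have h1 := h.Kd s hs hsb
  have h2 : -(C * (‖v s‖ * ‖v1 s‖)) ≤ (conj (v s) * (T * v1 s)).re := re_bound _ (by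
    simp only [norm_mul, RCLike.norm_conj]
    calc ‖v s‖ * (‖T‖ * ‖v1 s‖) = ‖T‖ * (‖v s‖ * ‖v1 s‖) := by ring
      _ ≤ _ := by gcongr; exact h.hT)
  have h3 := Gen.amgm ρ hρ.le ‖v s‖ ‖v1 s‖
  have h5 := mul_le_mul_of_nonneg_left h2 (by positivity : 0 ≤ 2 * β * MM ρ)
  have h6 := mul_le_mul_of_nonneg_left h3 h.hc.le
  have h7 := mul_le_mul_of_nonneg_right hβ (by positivity : 0 ≤ 2 * MM ρ * (‖v s‖ * ‖v1 s‖))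
  linarith

lemma s2 (h : Seg T ζ Q v v1 c C ρ a b) {B : ℝ} (hB0 : 0 ≤ B) (hB : C * C ≤ c * B)
    (hb : ‖v1 b‖ ^ 2 ≤ B * MM ρ * (- KK ζ v v1 b)) : ‖v1 a‖ ^ 2 ≤ B * MM ρ * (- KK ζ v v1 a) := by
  have hρ := h.hρ
  have hM := MM_pos hρ
  have hC0 : 0 ≤ C := (norm_nonneg _).trans h.hT
  suffices ‖v1 a‖ ^ 2 + B * MM ρ * KK ζ v v1 a ≤ ‖v1 b‖ ^ 2 + B * MM ρ * KK ζ v v1 b by linarith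
  refine mono_Icc (f := fun s => ‖v1 s‖ ^ 2 + B * MM ρ * KK ζ v v1 s) h.hab
      (fun s _ _ => ((h.sol s).2.normSq').add ((h.sol.hasDerivAt_KK ζ s).const_mul _))
      (fun s hs hsb => ?_)
  have h1 := h.Kd s hs hsb
  have h2 : -(C * C * ρ ^ 3 * (‖v s‖ * ‖v1 s‖)) ≤ (conj (v1 s) * (T * (Q s * v s))).re := re_bound _ (by
    simp only [norm_mul, RCLike.norm_conj]
    calc ‖v1 s‖ * (‖T‖ * (‖Q s‖ * ‖v s‖)) = ‖T‖ * ‖Q s‖ * (‖v s‖ * ‖v1 s‖) := by ring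
      _ ≤ C * (C * ρ ^ 3) * (‖v s‖ * ‖v1 s‖) := by gcongr; exact h.hT; exact h.hQb s hs hsb
      _ = _ := by ring)
  have h3 := Gen.amgm ρ hρ.le ‖v s‖ ‖v1 s‖
  have h6 := mul_le_mul_of_nonneg_left (mul_le_mul_of_nonneg_left h3 h.hc.le |>.trans h1) (by positivity : 0 ≤ B * MM ρ)
  have h7 := mul_le_mul_of_nonneg_right hB (by positivity : 0 ≤ 2 * (MM ρ * MM ρ) * (‖v s‖ * ‖v1 s‖))
  have h8 := MM_sq hρ.le
  have h9 : C * C * (2 * (MM ρ * MM ρ) * (‖v s‖ * ‖v1 s‖)) = 2 * (C * C * ρ ^ 3 * (‖v s‖ * ‖v1 s‖)) := by rw [h8]; ring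
  linarith

lemma om (h : Seg T ζ Q v v1 c C ρ a b) {Q' w w1 : ℝ → ℂ} (h' : Seg T ζ Q' w w1 c C ρ a b)
    {Om : ℝ → ℂ} {κ : ℂ} (hOm : ∀ s, HasDerivAt Om (T * (κ * (v s * w s))) s)
    {B : ℝ} (hB : C * ‖κ‖ ≤ 2 * c * B) {x : ℝ} (hx : 0 < x)
    (hb : ‖Om b‖ ≤ B / ρ ^ 3 * (x * (- KK ζ v v1 b) + (- KK ζ w w1 b) / x)) :
    ‖Om a‖ ≤ B / ρ ^ 3 * (x * (- KK ζ v v1 a) + (- KK ζ w w1 a) / x) := by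
  have hρ := h.hρ
  have hc := h.hc
  have hC0 : 0 ≤ C := (norm_nonneg _).trans h.hT
  have hB0 : 0 ≤ B := by
    have : 0 ≤ 2 * c * B := le_trans (by positivity) hB
    by_contra! hcon
    nlinarith
  apply norm_le_of_rot
  intro e he
  suffices (e * Om a).re + B / ρ ^ 3 * (x * (KK ζ v v1 a) + (KK ζ w w1 a) / x) ≤ (e * Om b).re + B / ρ ^ 3 * (x * (KK ζ v v1 b) + (KK ζ w w1 b) / x) by
    have h1 : (e * Om b).re ≤ ‖Om b‖ := (Complex.re_le_norm _).trans (by simp [he])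
    have h2 : ∀ p q : ℝ, B / ρ ^ 3 * (x * (-p) + (-q)/x) = - (B / ρ ^ 3 * (x * p + q/x)) := fun p q => by ring
    rw [h2] at hb ⊢
    linarith
  refine mono_Icc (f := fun s => (e * Om s).re + B / ρ ^ 3 * (x * (KK ζ v v1 s) + (KK ζ w w1 s) / x)) h.hab
      (fun s hs _ => ((hOm s).const_mul e).re'.add ((((h.sol.hasDerivAt_KK ζ s).const_mul x).add
        ((h'.sol.hasDerivAt_KK ζ s).div_const x)).const_mul _)) (fun s hs hsb => ?_)
  have h1 := h.Kd s hs hsb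
  have h2 := h'.Kd s hs hsb
  set k1 := (ζ * conj T).re * ‖v1 s‖ ^ 2 + (ζ * (T * Q s)).re * ‖v s‖ ^ 2
  set k2 := (ζ * conj T).re * ‖w1 s‖ ^ 2 + (ζ * (T * Q' s)).re * ‖w s‖ ^ 2
  have h3 : -(2 * c * B * (‖v s‖ * ‖w s‖)) ≤ (e * (T * (κ * (v s * w s)))).re := by
    apply re_bound
    simp only [norm_mul, he, one_mul]
    calc ‖T‖ * (‖κ‖ * (‖v s‖ * ‖w s‖)) ≤ C * (‖κ‖ * (‖v s‖ * ‖w s‖)) := by gcongr; exact h.hT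
      _ = (C * ‖κ‖) * (‖v s‖ * ‖w s‖) := by ring
      _ ≤ _ := by gcongr
  have h4 : c * (ρ ^ 3 * ‖v s‖^2) ≤ k1 := by
    refine le_trans ?_ h1
    gcongr
    nlinarith [sq_nonneg ‖v1 s‖]
  have h5 : c * (ρ ^ 3 * ‖w s‖^2) ≤ k2 := by
    refine le_trans ?_ h2
    gcongr
    nlinarith [sq_nonneg ‖w1 s‖]
  have h6 : B / ρ ^ 3 * (x * k1 + k2 / x) ≥ B / ρ^3 * (x * (c * (ρ ^ 3 * ‖v s‖^2)) + (c * (ρ ^ 3 * ‖w s‖^2)) / x) := by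
    gcongr
  have h7 : B / ρ^3 * (x * (c * (ρ ^ 3 * ‖v s‖^2)) + (c * (ρ ^ 3 * ‖w s‖^2)) / x) = c * B * (x * ‖v s‖^2 + ‖w s‖^2 / x) := by
    field_simp
  have h8 : 2 * (‖v s‖ * ‖w s‖) ≤ x * ‖v s‖^2 + ‖w s‖^2 / x := by
    have : x * ‖v s‖^2 + ‖w s‖^2 / x - 2 * (‖v s‖ * ‖w s‖) = (x * ‖v s‖ - ‖w s‖)^2 / x := by
      field_simp; ring
    have : 0 ≤ (x * ‖v s‖ - ‖w s‖)^2 / x := by positivity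
    linarith
  have h9 := mul_le_mul_of_nonneg_left h8 (by positivity : 0 ≤ c * B)
  linarith

end Seg

lemma k_le_of_D {ζ : ℂ} {v v1 : ℝ → ℂ} {s B M : ℝ} (hB : 0 ≤ B) (hM : 0 ≤ M)
    (h2 : ‖v1 s‖ ^ 2 ≤ B * M * (- KK ζ v v1 s)) (hk : 0 ≤ - KK ζ v v1 s) :
    - KK ζ v v1 s ≤ (B * ‖ζ‖ ^ 2) * M * ‖v s‖ ^ 2 := by
  have h4 := (abs_le.1 (KK_abs_le ζ v v1 s)).1
  set k := - KK ζ v v1 s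
  have h5 : k ≤ ‖ζ‖ * (‖v s‖ * ‖v1 s‖) := by linarith
  rcases eq_or_lt_of_le hk with h0 | h0
  · rw [← h0]; positivity
  have h6 : k ^ 2 ≤ ‖ζ‖ ^ 2 * ‖v s‖ ^ 2 * ‖v1 s‖ ^ 2 := by
    calc k^2 ≤ (‖ζ‖ * (‖v s‖ * ‖v1 s‖))^2 := by gcongr
      _ = _ := by ring
  have h7 : k ^ 2 ≤ ‖ζ‖ ^ 2 * ‖v s‖ ^ 2 * (B * M * k) := h6.trans (by gcongr)
  have h8 : k * k ≤ ((B * ‖ζ‖ ^ 2) * M * ‖v s‖ ^ 2) * k := by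
    calc k * k = k^2 := by ring
      _ ≤ _ := h7
      _ = _ := by ring
  exact le_of_mul_le_mul_right h8 h0

/-- pointwise Ω estimate -/
lemma om_final {k1 k2 A B ρ : ℝ} {om v w : ℂ} (hρ : 0 < ρ) (hB : 0 ≤ B) 
    (hv : v ≠ 0) (hw : w ≠ 0)
    (h1 : k1 ≤ A * MM ρ * ‖v‖ ^ 2) (h2 : k2 ≤ A * MM ρ * ‖w‖ ^ 2)
    (h : ∀ x : ℝ, 0 < x → ‖om‖ ≤ B / ρ ^ 3 * (x * k1 + k2 / x)) :
    ‖om‖ ≤ 2 * B * A / MM ρ * (‖v‖ * ‖w‖) := by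
  have hv' := norm_pos_iff.2 hv
  have hw' := norm_pos_iff.2 hw
  have hM := MM_pos hρ
  have h3 := h (‖w‖ / ‖v‖) (by positivity)
  refine h3.trans ?_
  calc B / ρ ^ 3 * (‖w‖ / ‖v‖ * k1 + k2 / (‖w‖ / ‖v‖)) ≤ B / ρ ^ 3 * (‖w‖ / ‖v‖ * (A * MM ρ * ‖v‖ ^ 2) + (A * MM ρ * ‖w‖ ^ 2) / (‖w‖ / ‖v‖)) := by
        gcongr
    _ = _ := by
        rw [← MM_sq hρ.le]; field_simp; ring
end

section
open ComplexConjugate Filter Topology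

lemma PSol.unique {T : ℂ} {Q v v1 : ℝ → ℂ} (h : PSol T Q v v1) (hQ : Continuous Q) {s0 : ℝ}
    (h0 : v s0 = 0) (h1 : v1 s0 = 0) (s : ℝ) : v s = 0 ∧ v1 s = 0 := by
  obtain ⟨L0, hL0⟩ := (isCompact_uIcc (a := s0) (b := s)).exists_bound_of_continuousOn hQ.continuousOn
  set L := ‖T‖ * (1 + L0) with hL
  have hb : ∀ x ∈ Set.uIcc s0 s, |2 * (conj (v x) * (T * v1 x)).re + 2 * (conj (v1 x) * (T * (Q x * v x))).re| ≤ L * (‖v x‖^2 + ‖v1 x‖^2) := by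
    intro x hx
    have a1 : |(conj (v x) * (T * v1 x)).re| ≤ ‖T‖ * (‖v x‖ * ‖v1 x‖) := by
      refine (Complex.abs_re_le_norm _).trans (le_of_eq ?_)
      simp; ring
    have a2 : |(conj (v1 x) * (T * (Q x * v x))).re| ≤ ‖T‖ * L0 * (‖v x‖ * ‖v1 x‖) := by
      refine (Complex.abs_re_le_norm _).trans ?_
      simp only [norm_mul, RCLike.norm_conj]
      calc ‖v1 x‖ * (‖T‖ * (‖Q x‖ * ‖v x‖)) = ‖T‖ * ‖Q x‖ * (‖v x‖ * ‖v1 x‖) := by ring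
        _ ≤ _ := by gcongr; exact hL0 x hx
    have a3 : 2 * (‖v x‖ * ‖v1 x‖) ≤ ‖v x‖^2 + ‖v1 x‖^2 := by nlinarith [sq_nonneg (‖v x‖ - ‖v1 x‖)]
    have hL00 : 0 ≤ L0 := (norm_nonneg _).trans (hL0 x hx)
    have a4 := mul_le_mul_of_nonneg_left a3 (by positivity : 0 ≤ L)
    rw [← mul_add, abs_mul, abs_two]
    have a5 := abs_add_le (conj (v x) * (T * v1 x)).re (conj (v1 x) * (T * (Q x * v x))).re
    rw [hL] at *
    linarith
  have hd : ∀ x, HasDerivAt (fun x => ‖v x‖^2 + ‖v1 x‖^2) (2 * (conj (v x) * (T * v1 x)).re + 2 * (conj (v1 x) * (T * (Q x * v x))).re) x :=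
    fun x => (h x).1.normSq'.add (h x).2.normSq'
  have hexp : ∀ (l x : ℝ), HasDerivAt (fun x => Real.exp (l * x)) (Real.exp (l * x) * (l * 1)) x :=
    fun l x => ((hasDerivAt_id x).const_mul l).exp
  have key : ‖v s‖^2 + ‖v1 s‖^2 ≤ 0 := by
    rcases le_total s0 s with hs | hs
    · have : -((‖v s0‖^2 + ‖v1 s0‖^2) * Real.exp (-L * s0)) ≤ -((‖v s‖^2 + ‖v1 s‖^2) * Real.exp (-L * s)) := by
        refine mono_Icc (f := fun x => -((‖v x‖^2 + ‖v1 x‖^2) * Real.exp (-L * x))) hs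
          (fun x _ _ => ((hd x).mul (hexp (-L) x)).neg) (fun x hx1 hx2 => ?_)
        have h2 := (abs_le.1 (hb x (by rw [Set.uIcc_of_le hs]; exact ⟨hx1, hx2⟩))).2
        have h3 := mul_le_mul_of_nonneg_right h2 (Real.exp_pos (-L * x)).le
        linarith
      rw [h0, h1] at this
      simp only [norm_zero] at this
      have h5 := Real.exp_pos (-L * s)
      by_contra! hcon
      have := mul_pos hcon h5
      linarith
    · have : (‖v s‖^2 + ‖v1 s‖^2) * Real.exp (L * s) ≤ (‖v s0‖^2 + ‖v1 s0‖^2) * Real.exp (L * s0) := by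
        refine mono_Icc (f := fun x => (‖v x‖^2 + ‖v1 x‖^2) * Real.exp (L * x)) hs
          (fun x _ _ => ((hd x).mul (hexp (L) x))) (fun x hx1 hx2 => ?_)
        have h2 := (abs_le.1 (hb x (by rw [Set.uIcc_of_ge hs]; exact ⟨hx1, hx2⟩))).1
        have h3 := mul_le_mul_of_nonneg_right h2 (Real.exp_pos (L * x)).le
        linarith
      rw [h0, h1] at this
      simp only [norm_zero] at this
      have h5 := Real.exp_pos (L * s)
      by_contra! hcon
      have := mul_pos hcon h5
      linarith
  have n1 := norm_nonneg (v s)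
  have n2 := norm_nonneg (v1 s)
  constructor
  · have : ‖v s‖^2 = 0 := by nlinarith
    simpa using this
  · have : ‖v1 s‖^2 = 0 := by nlinarith
    simpa using this

/-- entire solutions -/
def ESol (a : ℂ) (f g : ℂ → ℂ) : Prop :=
  ∀ z, HasDerivAt f (g z) z ∧ HasDerivAt g ((z^3 + a) * f z) z

lemma line_deriv (y0 T : ℂ) (s : ℝ) : HasDerivAt (fun s : ℝ => y0 + s * T) T s := by
  have h := (Complex.ofRealCLM.hasDerivAt (x := s)).mul_const T
  simpa using h.const_add y0

lemma path_deriv {f : ℂ → ℂ} {f' : ℂ} (y0 T : ℂ) (s : ℝ) (h : HasDerivAt f f' (y0 + s * T)) :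
    HasDerivAt (fun s : ℝ => f (y0 + s * T)) (T * f') s := by
  have := HasDerivAt.scomp (h := fun s : ℝ => y0 + s * T) (g₁ := f) s h (line_deriv y0 T s)
  rw [smul_eq_mul] at this
  exact this

lemma ESol.path {a : ℂ} {f g : ℂ → ℂ} (h : ESol a f g) (y0 T : ℂ) :
    PSol T (fun s => (y0 + s * T)^3 + a) (fun s => f (y0 + s * T)) (fun s => g (y0 + s * T)) :=
  fun s => ⟨path_deriv y0 T s (h _).1, path_deriv y0 T s (h _).2⟩

lemma ESol.ray {a : ℂ} {f g : ℂ → ℂ} (h : ESol a f g) (T : ℂ) :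
    PSol T (fun s => (s * T)^3 + a) (fun s => f (s * T)) (fun s => g (s * T)) := by
  simpa using h.path 0 T

lemma ray_deriv {f : ℂ → ℂ} {f' : ℂ} (T : ℂ) (s : ℝ) (h : HasDerivAt f f' (s * T)) :
    HasDerivAt (fun s : ℝ => f (s * T)) (T * f') s := by
  simpa using path_deriv (f := f) 0 T s (by simpa using h)

lemma ESol.conj {a : ℂ} {f g : ℂ → ℂ} (h : ESol a f g) :
    ESol (conj a) (fun z => conj (f (conj z))) (fun z => conj (g (conj z))) := by
  intro z
  have h1 := (h (conj z)).1.conj_conj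
  have h2 := (h (conj z)).2.conj_conj
  rw [Complex.conj_conj] at h1 h2
  refine ⟨h1, ?_⟩
  have e : (z ^ 3 + (starRingEnd ℂ) a) * (starRingEnd ℂ) (f ((starRingEnd ℂ) z)) = (starRingEnd ℂ) (((starRingEnd ℂ) z ^ 3 + a) * f ((starRingEnd ℂ) z)) := by
    simp only [map_mul, map_add, map_pow, Complex.conj_conj]
  beta_reduce
  rw [e]
  exact h2

lemma ESol.nontriv {a : ℂ} {f g : ℂ → ℂ} (h : ESol a f g) (h0 : ¬ (f 0 = 0 ∧ g 0 = 0)) (z : ℂ) :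
    ¬ (f z = 0 ∧ g z = 0) := by
  rintro ⟨h1, h2⟩
  apply h0
  have := (h.ray z).unique (by fun_prop) (s0 := 1) (by simpa using h1) (by simpa using h2) 0
  simpa using this

def L2 (v : ℝ → ℂ) : Prop := ∃ (J : ℝ → ℝ) (B : ℝ), (∀ s, HasDerivAt J (‖v s‖^2) s) ∧ ∀ s, |J s| ≤ B

lemma L2_of_integrable {v : ℝ → ℂ} (hc : Continuous v) (hi : Integrable (fun s => ‖v s‖^2)) : L2 v := by
  refine ⟨fun s => ∫ x in (0:ℝ)..s, ‖v x‖^2, ∫ x, ‖v x‖^2, fun s => ?_, fun s => ?_⟩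
  · have hcc : Continuous (fun s => ‖v s‖^2) := by fun_prop
    exact intervalIntegral.integral_hasDerivAt_right (hcc.intervalIntegrable _ _)
      hcc.aestronglyMeasurable.stronglyMeasurableAtFilter hcc.continuousAt
  · rw [← Real.norm_eq_abs]
    refine (intervalIntegral.norm_integral_le_integral_norm_uIoc).trans ?_
    simp only [norm_pow, norm_norm]
    exact setIntegral_le_integral hi (Eventually.of_forall fun x => by positivity)

namespace Gen
variable {T ζ : ℂ} {Q v v1 : ℝ → ℂ} {c r0 : ℝ}

lemma K_nonpos_of_L2 (h : Gen T ζ Q v v1 c r0) (hL : L2 v) :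
    ∀ s, r0 ≤ s → KK ζ v v1 s ≤ 0 := by
  intro s1 hs1
  by_contra! hcon
  obtain ⟨J, B, hJ, hB⟩ := hL
  have hc := h.hc
  have hr0 := h.hr0
  have hζ := h.ζpos
  have hζ0 : 0 < ‖ζ‖ := by linarith
  set d := c / ‖ζ‖^2 with hd
  have hdp : 0 < d := by positivity
  have hpos : ∀ s, s1 ≤ s → 0 < KK ζ v v1 s := fun s hs => hcon.trans_le (h.Kmono hs1 hs)
  have hm : ∀ b, s1 ≤ b → -(KK ζ v v1 s1)⁻¹ + d * (J s1 - 2 * s1) ≤ -(KK ζ v v1 b)⁻¹ + d * (J b - 2 * b) := by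
    intro b hb
    refine mono_Icc (f := fun s => -(KK ζ v v1 s)⁻¹ + d * (J s - 2 * s)) hb
      (fun s hs _ => ((h.sol.hasDerivAt_KK ζ s).inv (hpos s hs).ne').neg.add
        (((hJ s).sub ((hasDerivAt_id s).const_mul 2)).const_mul d)) (fun s hs _ => ?_)
    have hk := hpos s hs
    have h1 := h.Kd s (hs1.trans hs)
    have hK := (le_abs_self _).trans (KK_abs_le ζ v v1 s)
    set k := KK ζ v v1 s
    set k' := (ζ * conj T).re * ‖v1 s‖ ^ 2 + (ζ * (T * Q s)).re * ‖v s‖ ^ 2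
    have hE : 0 < ‖v s‖ := by
      by_contra! h0
      have : ‖v s‖ = 0 := le_antisymm h0 (norm_nonneg _)
      rw [this] at hK
      simp at hK; linarith
    have h2 : c * ‖v1 s‖^2 ≤ k' := by
      have : 0 ≤ c * (s^3 * ‖v s‖^2) := by
        have : 0 ≤ s := by linarith
        positivity
      linarith
    have h3 : k^2 ≤ ‖ζ‖^2 * ‖v s‖^2 * ‖v1 s‖^2 := by
      calc k^2 ≤ (‖ζ‖ * (‖v s‖ * ‖v1 s‖))^2 := by gcongr
        _ = _ := by ring
    have h4 : c * k^2 ≤ ‖ζ‖^2 * ‖v s‖^2 * k' := by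
      have := mul_le_mul_of_nonneg_left h3 hc.le
      have := mul_le_mul_of_nonneg_left h2 (by positivity : 0 ≤ ‖ζ‖^2 * ‖v s‖^2)
      linarith
    have h5 : d * (1 / ‖v s‖^2) ≤ k' / k^2 := by
      rw [hd, le_div_iff₀ (by positivity)]
      field_simp
      linarith
    have h6 : 2 - ‖v s‖^2 ≤ 1 / ‖v s‖^2 := by
      rw [le_div_iff₀ (by positivity)]
      nlinarith [sq_nonneg (‖v s‖^2 - 1)]
    have h7 := mul_le_mul_of_nonneg_left h6 hdp.le
    have h8 : -(-k' / k^2) = k' / k^2 := by ring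
    rw [h8]
    linarith
  have h1 := hm (s1 + (2 * B + (KK ζ v v1 s1)⁻¹ / d + 1)) (by
    have := (abs_nonneg _).trans (hB 0)
    have : 0 < (KK ζ v v1 s1)⁻¹ := inv_pos.2 hcon
    have : 0 < (KK ζ v v1 s1)⁻¹ / d := by positivity
    linarith)
  set b := (s1 + (2 * B + (KK ζ v v1 s1)⁻¹ / d + 1)) with hb
  have h2 := (abs_le.1 (hB s1)).1
  have h3 := (abs_le.1 (hB b)).2
  have h4 : 0 < (KK ζ v v1 b)⁻¹ := inv_pos.2 (hpos b (by
    have := (abs_nonneg _).trans (hB 0)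
    have : 0 < (KK ζ v v1 s1)⁻¹ := inv_pos.2 hcon
    have : 0 < (KK ζ v v1 s1)⁻¹ / d := by positivity
    linarith))
  have h5 : d * (J b - 2 * b) = d * (J b - 2 * s1 - 4 * B - 2) - 2 * (KK ζ v v1 s1)⁻¹ := by
    rw [hb]; field_simp; ring
  have h6 := mul_le_mul_of_nonneg_left (show J b - 2 * s1 - 4 * B - 2 ≤ J s1 - 2 * s1 - 2 by linarith [(abs_nonneg _).trans (hB 0)]) hdp.le
  have h7 : 0 < (KK ζ v v1 s1)⁻¹ := inv_pos.2 hcon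
  linarith

lemma v_tendsto (h : Gen T ζ Q v v1 c r0) (hK : ∀ s, r0 ≤ s → KK ζ v v1 s ≤ 0) :
    Tendsto (fun s => ‖v s‖) atTop (𝓝 0) := by
  have hk := h.k_tendsto hK
  have hc := h.hc
  have hr0 := h.hr0
  have t2 : Tendsto (fun s => ‖v s‖^2) atTop (𝓝 0) := by
    have t1 : Tendsto (fun s => (1/c) * (- KK ζ v v1 s)) atTop (𝓝 ((1/c) * (-0))) := hk.neg.const_mul _
    simp only [neg_zero, mul_zero] at t1
    refine tendsto_of_tendsto_of_tendsto_of_le_of_le' tendsto_const_nhds t1 (Eventually.of_forall fun s => by positivity) ?_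
    filter_upwards [eventually_ge_atTop r0] with s hs
    have h1 := h.E1 hK hs
    have h2 : 1 ≤ MM s := (show 1 ≤ s by linarith).trans (le_MM (by linarith))
    rw [one_div, ← div_eq_inv_mul, le_div_iff₀ hc]
    nlinarith [mul_nonneg hc.le (sq_nonneg ‖v s‖)]
  have := t2.sqrt
  simpa [Real.sqrt_sq] using this

end Gen

/-- Ω → 0 -/
lemma om_tendsto {T : ℂ} (hT : ‖T‖ = 1) {v v1 p p1 : ℝ → ℂ} (hv : ∀ s, HasDerivAt v (T * v1 s) s)
    (hp : ∀ s, HasDerivAt p (T * p1 s) s) (hL : L2 p)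
    (hO : ∀ s, HasDerivAt (fun s => v s * p1 s - v1 s * p s) (T * (v s * v s)) s)
    (tv : Tendsto (fun s => ‖v s‖) atTop (𝓝 0)) (tv1 : Tendsto (fun s => ‖v1 s‖) atTop (𝓝 0)) :
    Tendsto (fun s => v s * p1 s - v1 s * p s) atTop (𝓝 0) := by
  obtain ⟨J, B, hJ, hB⟩ := hL
  have hB0 := (abs_nonneg _).trans (hB 0)
  rw [tendsto_zero_iff_norm_tendsto_zero, Metric.tendsto_atTop]
  intro ε hε
  set e := min 1 (ε / (6 * (4 * (1 + 2 * B)) + 1)) with he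
  have hep : 0 < e := by positivity
  obtain ⟨X1, hX1⟩ := (Metric.tendsto_atTop.1 tv) e hep
  obtain ⟨X2, hX2⟩ := (Metric.tendsto_atTop.1 tv1) e hep
  refine ⟨max X1 X2, fun X hX => ?_⟩
  have b1 : ∀ s, X ≤ s → ‖v s‖ ≤ e := fun s hs => by
    have := hX1 s ((le_max_left _ _).trans (hX.trans hs)); simp at this; exact this.le
  have b2 : ∀ s, X ≤ s → ‖v1 s‖ ≤ e := fun s hs => by
    have := hX2 s ((le_max_right _ _).trans (hX.trans hs)); simp at this; exact this.le
  set Om := fun s => v s * p1 s - v1 s * p s with hOm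
  have b3 : ∀ s, X ≤ s → s ≤ X + 1 → ‖Om s - Om X‖ ≤ e := by
    intro s hs hs1
    have := (convex_Icc X (X+1)).norm_image_sub_le_of_norm_hasDerivWithin_le (f := Om) (f' := fun s => T * (v s * v s)) (C := e) (x := X) (y := s)
      (fun x hx => (hO x).hasDerivWithinAt) (fun x hx => by
        have h1 := b1 x hx.1
        simp only [norm_mul, hT, one_mul]
        have : e ≤ 1 := min_le_left _ _
        nlinarith [norm_nonneg (v x)]) ⟨le_rfl, by linarith⟩ ⟨hs, hs1⟩
    refine this.trans ?_
    rw [Real.norm_eq_abs, abs_of_nonneg (by linarith)]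
    nlinarith
  have main : ‖T * Om X / 6‖ ≤ 4 * e * (1 + 2 * B) := by
    apply norm_le_of_rot
    intro u hu
    have hη : ∀ s : ℝ, HasDerivAt (fun s : ℝ => (((s - X) * (X + 1 - s) : ℝ) : ℂ)) (((1 * (X + 1 - s) + (s - X) * (-1) : ℝ)) : ℂ) s := fun s => by
      have := (((hasDerivAt_id s).sub_const X).mul ((hasDerivAt_id s).const_sub (X+1))).ofReal_comp
      exact this
    have hP : ∀ s : ℝ, HasDerivAt (fun s : ℝ => (((s - X)^2/2 - (s-X)^3/3 : ℝ) : ℂ)) (((s - X) * (X + 1 - s) : ℝ) : ℂ) s := fun s => by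
      have := (((((hasDerivAt_id s).sub_const X).pow 2).div_const 2).sub ((((hasDerivAt_id s).sub_const X).pow 3).div_const 3)).ofReal_comp
      convert this using 1
      congr 1
      simp only [id]; norm_num; ring
    have hW : ∀ s : ℝ, HasDerivAt (fun s : ℝ => u * ((((s - X)^2/2 - (s-X)^3/3 : ℝ) : ℂ) * (T * Om X) - (((s - X) * (X + 1 - s) : ℝ) : ℂ) * (v s * p s)))
      (u * ((((s - X) * (X + 1 - s) : ℝ) : ℂ) * (T * Om X) - ((((1 * (X + 1 - s) + (s - X) * (-1) : ℝ)) : ℂ) * (v s * p s) + (((s - X) * (X + 1 - s) : ℝ) : ℂ) * (T * v1 s * p s + v s * (T * p1 s))))) s :=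
      fun s => (((hP s).mul_const _).sub ((hη s).mul ((hv s).mul (hp s)))).const_mul u
    have mm := mono_Icc (f := fun s => 4 * e * (s + J s) - (u * ((((s - X)^2/2 - (s-X)^3/3 : ℝ) : ℂ) * (T * Om X) - (((s - X) * (X + 1 - s) : ℝ) : ℂ) * (v s * p s))).re)
      (show X ≤ X + 1 by linarith) (fun s _ _ => (((hasDerivAt_id s).add (hJ s)).const_mul (4 * e)).sub (hW s).re') (fun s hs hs1 => by
        have e1 : (u * ((((s - X) * (X + 1 - s) : ℝ) : ℂ) * (T * Om X) - ((((1 * (X + 1 - s) + (s - X) * (-1) : ℝ)) : ℂ) * (v s * p s) + (((s - X) * (X + 1 - s) : ℝ) : ℂ) * (T * v1 s * p s + v s * (T * p1 s)))))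
          = -(u * ((((s - X) * (X + 1 - s) : ℝ) : ℂ) * (T * (Om s - Om X)) + (((1 * (X + 1 - s) + (s - X) * (-1) : ℝ)) : ℂ) * (v s * p s) + (((s - X) * (X + 1 - s) : ℝ) : ℂ) * (2 * T * v1 s * p s))) := by
          simp only [hOm]; ring
        rw [e1, Complex.neg_re]
        have n0 : |(s - X) * (X + 1 - s)| ≤ 1 := by rw [abs_le]; constructor <;> nlinarith
        have n1 : |1 * (X + 1 - s) + (s - X) * (-1)| ≤ 1 := by rw [abs_le]; constructor <;> linarith
        have hp0 := norm_nonneg (p s)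
        have q1 := b1 s hs
        have q2 := b2 s hs
        have q3 := b3 s hs hs1
        have n2 : ‖u * ((((s - X) * (X + 1 - s) : ℝ) : ℂ) * (T * (Om s - Om X)) + (((1 * (X + 1 - s) + (s - X) * (-1) : ℝ)) : ℂ) * (v s * p s) + (((s - X) * (X + 1 - s) : ℝ) : ℂ) * (2 * T * v1 s * p s))‖ ≤ 1 * e + 1 * (e * ‖p s‖) + 1 * (2 * e * ‖p s‖) := by
          rw [norm_mul, hu, one_mul]
          refine norm_add₃_le.trans ?_
          simp only [norm_mul, Complex.norm_real, Real.norm_eq_abs, hT, one_mul]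
          rw [show ‖(2:ℂ)‖ = 2 by simp, mul_one]
          rw [← abs_mul]
          gcongr ?_ + ?_ + ?_
          · exact (mul_le_mul n0 q3 (norm_nonneg _) (by norm_num)).trans (by linarith)
          · refine (mul_le_mul (by simpa using n1) (mul_le_mul_of_nonneg_right q1 hp0) (by positivity) (by norm_num)).trans (by linarith)
          · refine (mul_le_mul n0 (mul_le_mul_of_nonneg_right (mul_le_mul_of_nonneg_left q2 (by norm_num : (0:ℝ) ≤ 2)) hp0) (by positivity) (by norm_num)).trans (by linarith)
        have n3 := re_bound _ n2
        have n4 : e * (3 * ‖p s‖) ≤ e * (3 + 4 * ‖p s‖^2) := by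
          gcongr; nlinarith [sq_nonneg (2 * ‖p s‖ - 1)]
        linarith)
    have z1 : (X + 1 - X)^2/2 - (X + 1 - X)^3/3 = (1:ℝ)/6 := by ring
    have z2 : (X - X)^2/2 - (X-X)^3/3 = (0:ℝ) := by ring
    simp only [sub_self, z1, mul_zero, zero_mul, Complex.ofReal_zero, sub_zero] at mm
    norm_num at mm
    have j1 := (abs_le.1 (hB X)).1
    have j2 := (abs_le.1 (hB (X+1))).2
    have j3 := mul_le_mul_of_nonneg_left (show J (X+1) - J X ≤ 2 * B by linarith) (by positivity : 0 ≤ 4 * e)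
    have z3 : u * (T * Om X / 6) = u * (1/6 * (T * Om X)) := by ring
    rw [z3]
    simp only [Complex.mul_re, Complex.mul_im] at mm ⊢
    norm_num at mm ⊢
    linarith
  rw [norm_div, norm_mul, hT, one_mul] at main
  have h6 : ‖(6:ℂ)‖ = 6 := by simp
  rw [h6] at main
  rw [dist_zero_right, norm_norm]
  have h7 : e * (6 * (4 * (1 + 2 * B)) + 1) ≤ ε := by
    calc e * (6 * (4 * (1 + 2 * B)) + 1) ≤ (ε / (6 * (4 * (1 + 2 * B)) + 1)) * (6 * (4 * (1 + 2 * B)) + 1) := by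
          gcongr; exact min_le_right _ _
      _ = ε := by field_simp
  change ‖Om X‖ < ε
  linarith
end

section
open ComplexConjugate Filter Topology

noncomputable def ph (θ : ℝ) : ℂ := Complex.exp (θ * Complex.I)

lemma ph_norm (θ : ℝ) : ‖ph θ‖ = 1 := Complex.norm_exp_ofReal_mul_I θ
lemma ph_conj (θ : ℝ) : ph θ * conj (ph θ) = 1 := by
  rw [Complex.mul_conj, Complex.normSq_eq_norm_sq, ph_norm]; simp
lemma ph_re (θ : ℝ) : (ph θ).re = Real.cos θ := by simp [ph, Complex.exp_ofReal_mul_I_re]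
lemma ph_im (θ : ℝ) : (ph θ).im = Real.sin θ := by simp [ph, Complex.exp_ofReal_mul_I_im]
lemma ph_pow (θ : ℝ) (n : ℕ) : ph θ ^ n = ph (n * θ) := by
  unfold ph; rw [← Complex.exp_nat_mul]; congr 1; push_cast; ring
lemma ph_pi2 : ph (Real.pi / 2) = Complex.I := by
  apply Complex.ext
  · rw [ph_re]; simp
  · rw [ph_im]; simp
lemma ph_deriv (θ : ℝ) : HasDerivAt ph (Complex.I * ph θ) θ := by
  have h := ((Complex.ofRealCLM.hasDerivAt (x := θ)).mul_const Complex.I)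
  have h2 := (Complex.hasDerivAt_exp (θ * Complex.I)).scomp θ (by simpa using h)
  rw [smul_eq_mul] at h2
  exact h2

noncomputable def tt : ℂ := ph (2 * Real.pi / 5)

lemma tt_re : tt.re = (√5 - 1) / 4 := by
  unfold tt
  rw [ph_re, show 2 * Real.pi / 5 = 2 * (Real.pi / 5) by ring, Real.cos_two_mul, Real.cos_pi_div_five]
  have := Real.sq_sqrt (show (0:ℝ) ≤ 5 by norm_num)
  nlinarith

lemma sqrt5 : 2.236 < √5 ∧ √5 < 2.2361 := by
  constructor
  · rw [Real.lt_sqrt (by norm_num)]; norm_num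
  · rw [Real.sqrt_lt' (by norm_num)]; norm_num

lemma tt_norm : ‖tt‖ = 1 := ph_norm _

lemma tt_bd : 0.309 < tt.re ∧ tt.re < 0.3091 ∧ 0.951 < tt.im ∧ tt.im < 0.9511 := by
  have h5 := sqrt5
  have hre := tt_re
  have hn : tt.re^2 + tt.im^2 = 1 := by
    have := Complex.normSq_eq_norm_sq tt
    rw [tt_norm, Complex.normSq_apply] at this
    nlinarith
  have him : 0 ≤ tt.im := by
    unfold tt; rw [ph_im]
    apply Real.sin_nonneg_of_nonneg_of_le_pi <;> nlinarith [Real.pi_pos]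
  have h1 : 0.309 < tt.re := by rw [hre]; linarith [h5.1]
  have h2 : tt.re < 0.3091 := by rw [hre]; linarith [h5.2]
  refine ⟨h1, h2, ?_, ?_⟩
  · by_contra! hc; nlinarith
  · by_contra! hc; nlinarith

lemma tt5 : tt ^ 5 = 1 := by
  unfold tt
  rw [ph_pow, show ((5:ℕ):ℝ) * (2 * Real.pi / 5) = 2 * Real.pi by push_cast; ring]
  unfold ph; push_cast; exact Complex.exp_two_pi_mul_I
lemma tt_conj : tt * conj tt = 1 := ph_conj _
lemma tt4 : tt ^ 4 = conj tt := by
  have h1 := tt5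
  have h2 := tt_conj
  calc tt^4 = tt^4 * (tt * conj tt) := by rw [h2, mul_one]
    _ = tt^5 * conj tt := by ring
    _ = _ := by rw [h1, one_mul]

noncomputable def R0 (a : ℂ) : ℝ := 10 + 20 * ‖a‖

lemma R0_ge (a : ℂ) : 10 ≤ R0 a := by unfold R0; linarith [norm_nonneg a]
lemma R0_a {a : ℂ} {s : ℝ} (h : R0 a ≤ s) : 20 * ‖a‖ ≤ s ^ 3 := by
  have h1 := R0_ge a
  have : s ≤ s^3 := by nlinarith [mul_nonneg (show 0 ≤ s by linarith) (show 0 ≤ s * s - 1 by nlinarith)]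
  unfold R0 at h; linarith

lemma norm_Q {a T : ℂ} (hT : ‖T‖ = 1) {s : ℝ} (h : R0 a ≤ s) : ‖((s:ℂ) * T)^3 + a‖ ≤ 2 * s^3 := by
  have h1 := R0_ge a
  have h2 := R0_a h
  refine (norm_add_le _ _).trans ?_
  rw [norm_pow, norm_mul, hT, Complex.norm_real, Real.norm_eq_abs, abs_of_nonneg (by linarith)]
  linarith [norm_nonneg a]

lemma norm_1mI : ‖(1 - Complex.I)‖ ≤ 3/2 := by
  rw [Complex.norm_eq_sqrt_sq_add_sq, Real.sqrt_le_left (by norm_num)]; norm_num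
lemma norm_m1I : ‖(-1 + Complex.I)‖ ≤ 3/2 := by
  rw [Complex.norm_eq_sqrt_sq_add_sq, Real.sqrt_le_left (by norm_num)]; norm_num

lemma ray_gen {a : ℂ} {f g : ℂ → ℂ} (h : ESol a f g) {θ : ℝ} (h1 : 2 * Real.pi / 5 ≤ θ) (h2 : θ ≤ Real.pi / 2) :
    Gen (ph θ) ((1 - Complex.I) * ph θ) (fun s => (s * ph θ)^3 + a) (fun s => f (s * ph θ)) (fun s => g (s * ph θ)) (1/2) (R0 a) where
  sol := h.ray _
  hT := ph_norm θ
  hc := by norm_num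
  hr0 := by linarith [R0_ge a]
  hr1 := by rw [norm_mul, ph_norm, mul_one]; linarith [R0_ge a, norm_1mI]
  hζ := by rw [mul_assoc, ph_conj]; norm_num
  hQ := by
    intro s hs
    have e : (1 - Complex.I) * ph θ * (ph θ * ((s * ph θ)^3 + a)) = ((s^3 : ℝ) : ℂ) * ((1 - Complex.I) * ph θ ^ 5) + (1 - Complex.I) * ph θ ^ 2 * a := by
      push_cast; ring
    have b1 : -(3/2 * ‖a‖) ≤ ((1 - Complex.I) * ph θ ^ 2 * a).re := by
      apply re_bound
      rw [norm_mul, norm_mul, norm_pow, ph_norm]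
      simp only [one_pow, mul_one]
      gcongr; exact norm_1mI
    have b2 : 1 ≤ ((1 - Complex.I) * ph θ ^ 5).re := by
      rw [ph_pow]
      have : ((1 - Complex.I) * ph (((5:ℕ):ℝ) * θ)).re = Real.cos (5 * θ) + Real.sin (5 * θ) := by
        rw [Complex.mul_re, ph_re, ph_im]; simp
      rw [this, ← Real.cos_sub_two_pi, ← Real.sin_sub_two_pi]
      have c0 : 0 ≤ Real.cos (5 * θ - 2 * Real.pi) := Real.cos_nonneg_of_neg_pi_div_two_le_of_le (by linarith [Real.pi_pos]) (by linarith)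
      have s0 : 0 ≤ Real.sin (5 * θ - 2 * Real.pi) := Real.sin_nonneg_of_nonneg_of_le_pi (by linarith) (by linarith [Real.pi_pos])
      nlinarith [Real.sin_sq_add_cos_sq (5 * θ - 2 * Real.pi)]
    rw [e, Complex.add_re, Complex.re_ofReal_mul]
    have hs0 : 0 ≤ s := by linarith [R0_ge a]
    have b3 := mul_le_mul_of_nonneg_left b2 (by positivity : 0 ≤ s^3)
    have := R0_a hs
    linarith [norm_nonneg a]
  hQb := fun s hs => norm_Q (ph_norm θ) hs

lemma ray_gen_t {a : ℂ} {f g : ℂ → ℂ} (h : ESol a f g) :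
    Gen tt (-1 + Complex.I) (fun s => (s * tt)^3 + a) (fun s => f (s * tt)) (fun s => g (s * tt)) (1/2) (R0 a) where
  sol := h.ray _
  hT := tt_norm
  hc := by norm_num
  hr0 := by linarith [R0_ge a]
  hr1 := by linarith [R0_ge a, norm_m1I]
  hζ := by
    have := tt_bd
    rw [Complex.mul_re]; simp; linarith
  hQ := by
    intro s hs
    have e : (-1 + Complex.I) * (tt * ((s * tt)^3 + a)) = ((s^3 : ℝ) : ℂ) * ((-1 + Complex.I) * conj tt) + (-1 + Complex.I) * tt * a := by
      rw [← tt4]; push_cast; ring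
    have b1 : -(3/2 * ‖a‖) ≤ ((-1 + Complex.I) * tt * a).re := by
      apply re_bound
      rw [norm_mul, norm_mul, tt_norm, mul_one]
      gcongr; exact norm_m1I
    have b2 : 0.64 ≤ ((-1 + Complex.I) * conj tt).re := by
      have := tt_bd
      rw [Complex.mul_re]; simp; linarith
    rw [e, Complex.add_re, Complex.re_ofReal_mul]
    have hs0 : 0 ≤ s := by linarith [R0_ge a]
    have b3 := mul_le_mul_of_nonneg_left b2 (by positivity : 0 ≤ s^3)
    have := R0_a hs
    have : 0 ≤ s^3 := by positivity
    linarith [norm_nonneg a]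
  hQb := fun s hs => norm_Q tt_norm hs

noncomputable def YY (f g : ℂ → ℂ) (s θ : ℝ) : ℝ := ‖g (s * ph θ)‖^2 + s^3 * ‖f (s * ph θ)‖^2

lemma arc_deriv {f : ℂ → ℂ} {f' : ℂ} (s θ : ℝ) (h : HasDerivAt f f' (s * ph θ)) :
    HasDerivAt (fun θ => f (s * ph θ)) (s * (Complex.I * ph θ) * f') θ := by
  have h2 := h.scomp θ ((ph_deriv θ).const_mul (s:ℂ))
  rw [smul_eq_mul] at h2
  exact h2

lemma ang {a : ℂ} {f g : ℂ → ℂ} (h : ESol a f g) {s : ℝ} (hs : R0 a ≤ s) {θ1 θ2 : ℝ} (h12 : θ1 ≤ θ2) :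
    YY f g s θ1 ≤ YY f g s θ2 * Real.exp (3 * XX s * (θ2 - θ1)) := by
  have hs1 := R0_ge a
  have hs0 : 0 ≤ s := by linarith
  have hexp : ∀ (l x : ℝ), HasDerivAt (fun x => Real.exp (l * x)) (Real.exp (l * x) * (l * 1)) x :=
    fun l x => ((hasDerivAt_id x).const_mul l).exp
  have key : YY f g s θ1 * Real.exp (3 * XX s * θ1) ≤ YY f g s θ2 * Real.exp (3 * XX s * θ2) := by
    refine mono_Icc (f := fun θ => YY f g s θ * Real.exp (3 * XX s * θ)) h12
      (fun θ _ _ => HasDerivAt.mul (((arc_deriv s θ (h _).2).normSq').add (((arc_deriv s θ (h _).1).normSq').const_mul (s^3))) (hexp _ θ))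
      (fun θ _ _ => ?_)
    set G := g (s * ph θ) with hG
    set F := f (s * ph θ) with hF
    have n1 : ‖(s:ℂ) * (Complex.I * ph θ)‖ = s := by
      simp [ph_norm, abs_of_nonneg hs0]
    have b1 : -(s * (2 * s^3) * (‖F‖ * ‖G‖)) ≤ (conj G * (s * (Complex.I * ph θ) * (((s * ph θ)^3 + a) * F))).re := by
      apply re_bound
      rw [norm_mul, norm_mul _ (_ * F), norm_mul _ F, n1, RCLike.norm_conj]
      have := norm_Q (ph_norm θ) hs
      calc ‖G‖ * (s * (‖((s:ℂ) * ph θ)^3 + a‖ * ‖F‖)) = s * ‖((s:ℂ) * ph θ)^3 + a‖ * (‖F‖ * ‖G‖) := by ring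
        _ ≤ _ := by gcongr
    have b2 : -(s * (‖F‖ * ‖G‖)) ≤ (conj F * (s * (Complex.I * ph θ) * G)).re := by
      apply re_bound
      rw [norm_mul, norm_mul _ G, n1, RCLike.norm_conj]
      apply le_of_eq; ring
    have b3 := mul_le_mul_of_nonneg_left b2 (by positivity : 0 ≤ s^3)
    have b4 := Gen.amgm s hs0 ‖F‖ ‖G‖
    have hX : 0 ≤ XX s := by unfold XX; have := MM_nonneg hs0; positivity
    have b5 := mul_le_mul_of_nonneg_left b4 hX
    have b6 : XX s * (2 * MM s * (‖F‖ * ‖G‖)) = 2 * (s * s^3) * (‖F‖ * ‖G‖) := by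
      rw [← MM_sq hs0]; unfold XX; ring
    have b7 : 0 ≤ (2 * (conj G * (s * (Complex.I * ph θ) * (((s * ph θ)^3 + a) * F))).re + s^3 * (2 * (conj F * (s * (Complex.I * ph θ) * G)).re)
       + 3 * (XX s * (‖G‖^2 + s^3 * ‖F‖^2))) * Real.exp (3 * XX s * θ) := by
      apply mul_nonneg _ (Real.exp_pos _).le
      linarith
    rw [YY, ← hG, ← hF]
    linarith
  have e : Real.exp (3 * XX s * (θ2 - θ1)) = Real.exp (3 * XX s * θ2) / Real.exp (3 * XX s * θ1) := by
    rw [← Real.exp_sub]; congr 1; ring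
  rw [e, ← mul_div_assoc, le_div_iff₀ (Real.exp_pos _)]
  exact key

def RP (a : ℂ) (f g : ℂ → ℂ) (θ : ℝ) : Prop :=
  ∃ A, 0 ≤ A ∧ ∀ s, R0 a ≤ s → YY f g s θ ≤ A * Real.exp (- (1/5) * XX s)

lemma exp_XX_tendsto (A : ℝ) {d : ℝ} (hd : 0 < d) : Tendsto (fun s => A * Real.exp (- d * XX s)) atTop (𝓝 0) := by
  have : Tendsto (fun s => A * Real.exp (- d * XX s)) atTop (𝓝 (A * 0)) := by
    apply Tendsto.const_mul
    apply Real.tendsto_exp_atBot.comp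
    exact Tendsto.const_mul_atTop_of_neg (by linarith) XX_tendsto
  simpa using this

lemma YY_nonneg (f g : ℂ → ℂ) {s θ : ℝ} (hs : 0 ≤ s) : 0 ≤ YY f g s θ := by unfold YY; positivity

lemma RP.mid {a : ℂ} {f g : ℂ → ℂ} (h : ESol a f g) {θ2 : ℝ} (hP : RP a f g θ2) :
    ∃ A, 0 ≤ A ∧ ∀ s, R0 a ≤ s → ∀ θ1, θ1 ≤ θ2 → θ2 - θ1 ≤ 1/30 → YY f g s θ1 ≤ A * Real.exp (- (1/10) * XX s) := by
  obtain ⟨A, hA0, hA⟩ := hP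
  refine ⟨A, hA0, fun s hs θ1 h1 h2 => ?_⟩
  have hs0 : 0 ≤ s := by linarith [R0_ge a]
  have hX : 0 ≤ XX s := by unfold XX; have := MM_nonneg hs0; positivity
  calc YY f g s θ1 ≤ YY f g s θ2 * Real.exp (3 * XX s * (θ2 - θ1)) := ang h hs h1
    _ ≤ (A * Real.exp (- (1/5) * XX s)) * Real.exp (3 * XX s * (1/30)) := by
        gcongr
        exact hA s hs
    _ = _ := by rw [mul_assoc, ← Real.exp_add]; congr 2; ring

lemma RP.of_K {a : ℂ} {f g : ℂ → ℂ} (h : ESol a f g) {θ : ℝ} (h1 : 2 * Real.pi / 5 ≤ θ) (h2 : θ ≤ Real.pi / 2)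
    (hK : ∀ s, R0 a ≤ s → KK ((1 - Complex.I) * ph θ) (fun s => f (s * ph θ)) (fun s => g (s * ph θ)) s ≤ 0) : RP a f g θ := by
  refine (ray_gen h h1 h2).Y_decay hK (d := 1/5) ?_ (by norm_num)
  rw [norm_mul, ph_norm, mul_one]; linarith [norm_1mI]

lemma RP.tendsto {a : ℂ} {f g : ℂ → ℂ} {θ A d : ℝ} (hd : 0 < d) (hA : ∀ s, R0 a ≤ s → YY f g s θ ≤ A * Real.exp (- d * XX s)) :
    Tendsto (fun s => YY f g s θ) atTop (𝓝 0) := by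
  refine tendsto_of_tendsto_of_tendsto_of_le_of_le' tendsto_const_nhds (exp_XX_tendsto A hd) ?_ ?_
  · filter_upwards [eventually_ge_atTop 0] with s hs using YY_nonneg f g hs
  · filter_upwards [eventually_ge_atTop (R0 a)] with s hs using hA s hs

lemma RP.step {a : ℂ} {f g : ℂ → ℂ} (h : ESol a f g) {θ1 θ2 : ℝ} (hP : RP a f g θ2)
    (h1 : 2 * Real.pi / 5 ≤ θ1) (h2 : θ2 ≤ Real.pi / 2) (h12 : θ1 ≤ θ2) (h3 : θ2 - θ1 ≤ 1/30) : RP a f g θ1 := by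
  obtain ⟨A, hA0, hA⟩ := hP.mid h
  apply RP.of_K h h1 (by linarith)
  exact (ray_gen h h1 (by linarith)).K_nonpos (RP.tendsto (by norm_num : (0:ℝ) < 1/10) (fun s hs => hA s hs θ1 h12 h3))

lemma RP.om_step {a : ℂ} {f g : ℂ → ℂ} (h : ESol a f g) {θ1 θ2 : ℝ} (hP : RP a f g θ2)
    (h12 : θ1 ≤ θ2) (h3 : θ2 - θ1 ≤ 1/30) {Om : ℂ → ℂ}
    (hOm : ∀ z, HasDerivAt Om (f z * f z) z) (hO : Tendsto (fun s : ℝ => Om (s * ph θ2)) atTop (𝓝 0)) :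
    Tendsto (fun s : ℝ => Om (s * ph θ1)) atTop (𝓝 0) := by
  obtain ⟨A, hA0, hA⟩ := hP.mid h
  have t1 : Tendsto (fun s : ℝ => Om (s * ph θ1) - Om (s * ph θ2)) atTop (𝓝 0) := by
    apply squeeze_zero_norm' _ (exp_XX_tendsto A (by norm_num : (0:ℝ) < 1/10))
    filter_upwards [eventually_ge_atTop (R0 a)] with s hs
    have hs1 : 10 ≤ s := (R0_ge a).trans hs
    have := (convex_Icc θ1 θ2).norm_image_sub_le_of_norm_hasDerivWithin_le (f := fun θ => Om (s * ph θ))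
      (f' := fun θ => s * (Complex.I * ph θ) * (f (s * ph θ) * f (s * ph θ))) (C := A * Real.exp (- (1/10) * XX s)) (x := θ2) (y := θ1)
      (fun x hx => (arc_deriv s x (hOm _)).hasDerivWithinAt) (fun x hx => by
        have h4 := hA s hs x hx.2 (by linarith [hx.1])
        refine le_trans ?_ h4
        simp only [norm_mul, Complex.norm_I, ph_norm, Complex.norm_real, Real.norm_eq_abs, abs_of_nonneg (show 0 ≤ s by linarith), mul_one]
        unfold YY
        have : s ≤ s^3 := by nlinarith [mul_nonneg (show 0 ≤ s by linarith) (show 0 ≤ s * s - 1 by nlinarith)]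
        nlinarith [sq_nonneg ‖f (s * ph x)‖, sq_nonneg ‖g (s * ph x)‖]) ⟨h12, le_rfl⟩ ⟨le_rfl, h12⟩
    refine this.trans ?_
    rw [Real.norm_eq_abs, abs_sub_comm, abs_of_nonneg (by linarith)]
    have : 0 ≤ A * Real.exp (- (1/10) * XX s) := by positivity
    nlinarith
  simpa using t1.add hO

lemma angle_aux (n : ℕ) (hn : n ≤ 10) : 2 * Real.pi / 5 ≤ Real.pi / 2 - n * (Real.pi / 100) ∧ Real.pi / 2 - n * (Real.pi / 100) ≤ Real.pi / 2 := by
  have : (n:ℝ) ≤ 10 := by exact_mod_cast hn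
  have hp := Real.pi_pos
  constructor
  · nlinarith
  · have : 0 ≤ n * (Real.pi / 100) := by positivity
    linarith

lemma RP.start {a : ℂ} {f g : ℂ → ℂ} (h : ESol a f g) (hL : L2 (fun s : ℝ => f (s * Complex.I))) : RP a f g (Real.pi / 2) := by
  apply RP.of_K h (by linarith [Real.pi_pos]) le_rfl
  exact (ray_gen h (by linarith [Real.pi_pos]) le_rfl).K_nonpos_of_L2 (by rw [ph_pi2]; exact hL)

lemma RP.all {a : ℂ} {f g : ℂ → ℂ} (h : ESol a f g) (h0 : RP a f g (Real.pi / 2)) (n : ℕ) (hn : n ≤ 10) :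
    RP a f g (Real.pi / 2 - n * (Real.pi / 100)) := by
  induction n with
  | zero => simpa using h0
  | succ n ih =>
    have h1 := angle_aux n (by omega)
    have h2 := angle_aux (n+1) hn
    have := Real.pi_lt_d2
    refine RP.step h (ih (by omega)) h2.1 h1.2 ?_ ?_
    · push_cast; linarith [Real.pi_pos]
    · push_cast; linarith

lemma RP.om_all {a : ℂ} {f g : ℂ → ℂ} (h : ESol a f g) (h0 : RP a f g (Real.pi / 2)) {Om : ℂ → ℂ}
    (hOm : ∀ z, HasDerivAt Om (f z * f z) z) (hO : Tendsto (fun s : ℝ => Om (s * Complex.I)) atTop (𝓝 0)) (n : ℕ) (hn : n ≤ 10) :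
    Tendsto (fun s : ℝ => Om (s * ph (Real.pi / 2 - n * (Real.pi / 100)))) atTop (𝓝 0) := by
  induction n with
  | zero => simpa [ph_pi2] using hO
  | succ n ih =>
    have := Real.pi_lt_d2
    refine RP.om_step h (RP.all h h0 n (by omega)) ?_ ?_ hOm (ih (by omega))
    · push_cast; linarith [Real.pi_pos]
    · push_cast; linarith

lemma tt_eq : ph (Real.pi / 2 - (10:ℕ) * (Real.pi / 100)) = tt := by
  unfold tt; congr 1; push_cast; ring

/-- decay on the ray `tt` -/
lemma rot_Y {a : ℂ} {f g : ℂ → ℂ} (h : ESol a f g) (hL : L2 (fun s : ℝ => f (s * Complex.I))) :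
    Tendsto (fun s : ℝ => ‖g (s * tt)‖^2 + s^3 * ‖f (s * tt)‖^2) atTop (𝓝 0) := by
  obtain ⟨A, _, hA⟩ := RP.all h (RP.start h hL) 10 le_rfl
  have := RP.tendsto (by norm_num : (0:ℝ) < 1/5) hA
  unfold YY at this
  rw [tt_eq] at this
  exact this

lemma rot_K {a : ℂ} {f g : ℂ → ℂ} (h : ESol a f g) (hL : L2 (fun s : ℝ => f (s * Complex.I))) :
    ∀ s, R0 a ≤ s → KK (-1 + Complex.I) (fun s => f (s * tt)) (fun s => g (s * tt)) s ≤ 0 :=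
  (ray_gen_t h).K_nonpos (rot_Y h hL)

lemma rot_om {a : ℂ} {f g : ℂ → ℂ} (h : ESol a f g) (hL : L2 (fun s : ℝ => f (s * Complex.I))) {Om : ℂ → ℂ}
    (hOm : ∀ z, HasDerivAt Om (f z * f z) z) (hO : Tendsto (fun s : ℝ => Om (s * Complex.I)) atTop (𝓝 0)) :
    Tendsto (fun s : ℝ => Om (s * tt)) atTop (𝓝 0) := by
  have := RP.om_all h (RP.start h hL) hOm hO 10 le_rfl
  rw [tt_eq] at this
  exact this
end

section
open ComplexConjugate Filter Topology

def good (f1 f2 Om : ℂ → ℂ) (C r : ℝ) (z : ℂ) : Prop :=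
  f1 z ≠ 0 ∧ f2 z ≠ 0 ∧ ‖Om z‖ ≤ C / MM r * (‖f1 z‖ * ‖f2 z‖)

noncomputable def zV (r s : ℝ) : ℂ := ((tt.re * r : ℝ) : ℂ) + s * Complex.I
noncomputable def zS (r s : ℝ) : ℂ := ((3 * (tt.re * r) : ℝ) : ℂ) + s * (-2 + Complex.I)

lemma zV_end (r : ℝ) : zV r (tt.im * r) = r * tt := by
  unfold zV
  apply Complex.ext <;> simp <;> ring

lemma zS_end (r : ℝ) : zS r (tt.re * r) = zV r (tt.re * r) := by
  unfold zV zS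
  push_cast; ring

lemma zV_norm {r s : ℝ} (hr : 0 ≤ r) (h1 : tt.re * r ≤ s) (h2 : s ≤ tt.im * r) : ‖zV r s‖ ≤ r := by
  have hb := tt_bd
  have e : ‖(r:ℂ) * tt‖ = r := by simp [tt_norm, abs_of_nonneg hr]
  have h0 : 0 ≤ tt.re * r := mul_nonneg (by linarith) hr
  calc ‖zV r s‖ ≤ ‖(r:ℂ) * tt‖ := by
        rw [← zV_end, Complex.norm_eq_sqrt_sq_add_sq, Complex.norm_eq_sqrt_sq_add_sq]
        apply Real.sqrt_le_sqrt
        simp [zV]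
        nlinarith
    _ = r := e

lemma zS_norm {r s : ℝ} (hr : 0 ≤ r) (h1 : 0 ≤ s) (h2 : s ≤ tt.re * r) : ‖zS r s‖ ≤ r := by
  have hb := tt_bd
  have h3 : tt.re * r ≤ 0.3091 * r := by gcongr; linarith
  rw [Complex.norm_eq_sqrt_sq_add_sq, Real.sqrt_le_left hr]
  simp [zS]
  nlinarith

lemma segV {a : ℂ} {f g : ℂ → ℂ} (h : ESol a f g) {r : ℝ} (hr : 1 ≤ r) (ha : 1000 * ‖a‖ ≤ r) :
    Seg Complex.I (-1 + Complex.I) (fun s => zV r s ^ 3 + a) (fun s => f (zV r s)) (fun s => g (zV r s)) (1/50) 3 r (tt.re * r) (tt.im * r) where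
  sol := h.path _ _
  hT := by simp
  hc := by norm_num
  hρ := by linarith
  hab := by have := tt_bd; nlinarith
  hζ := by rw [Complex.mul_re]; simp; norm_num
  hQ := by
    intro s h1 h2
    have hb := tt_bd
    have e : (-1 + Complex.I) * (Complex.I * (zV r s ^ 3 + a)) = (-1 + Complex.I) * (Complex.I * (zV r s ^ 3)) + (-1 + Complex.I) * Complex.I * a := by ring
    have b1 : -(3/2 * ‖a‖) ≤ ((-1 + Complex.I) * Complex.I * a).re := by
      apply re_bound
      rw [norm_mul, norm_mul, Complex.norm_I, mul_one]
      gcongr; exact norm_m1I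
    set R := tt.re * r with hR
    have hR1 : 0.309 * r ≤ R := by rw [hR]; gcongr; linarith
    have hs : s ≤ 3.09 * R := by rw [hR]; nlinarith
    have b2 : ((-1 + Complex.I) * (Complex.I * (zV r s ^ 3))).re = -R^3 + 3 * R * s^2 + 3 * R^2 * s - s^3 := by
      simp only [zV, pow_succ, pow_zero]
      simp [Complex.mul_re, Complex.mul_im]
      ring
    have b3 : -R^3 + 3 * R * s^2 + 3 * R^2 * s - s^3 - 4 * R^3 = (s - R) * (-s^2 + 2 * s * R + 5 * R^2) := by ring
    have b4 : 0 ≤ (s - R) * (-s^2 + 2 * s * R + 5 * R^2) := by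
      apply mul_nonneg (by linarith)
      nlinarith [mul_nonneg (show 0 ≤ 3.09 * R - s by linarith) (show 0 ≤ s - R by linarith)]
    have b5 : (0.309 * r)^3 ≤ R^3 := by gcongr
    have b6 : r ≤ r^3 := by nlinarith [mul_nonneg (show 0 ≤ r by linarith) (show 0 ≤ r * r - 1 by nlinarith)]
    rw [e, Complex.add_re, b2]
    nlinarith
  hQb := by
    intro s h1 h2
    have b6 : r ≤ r^3 := by nlinarith [mul_nonneg (show 0 ≤ r by linarith) (show 0 ≤ r * r - 1 by nlinarith)]
    refine (norm_add_le _ _).trans ?_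
    rw [norm_pow]
    have := zV_norm (by linarith) h1 h2
    have : ‖zV r s‖^3 ≤ r^3 := by gcongr
    linarith [norm_nonneg a]

lemma segS {a : ℂ} {f g : ℂ → ℂ} (h : ESol a f g) {r : ℝ} (hr : 1 ≤ r) (ha : 1000 * ‖a‖ ≤ r) :
    Seg (-2 + Complex.I) (-1 + Complex.I) (fun s => zS r s ^ 3 + a) (fun s => f (zS r s)) (fun s => g (zS r s)) (1/50) 3 r 0 (tt.re * r) where
  sol := h.path _ _
  hT := by
    rw [Complex.norm_eq_sqrt_sq_add_sq, Real.sqrt_le_left (by norm_num)]; norm_num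
  hc := by norm_num
  hρ := by linarith
  hab := by have := tt_bd; nlinarith
  hζ := by rw [Complex.mul_re]; simp; norm_num
  hQ := by
    intro s h1 h2
    have hb := tt_bd
    have e : (-1 + Complex.I) * ((-2 + Complex.I) * (zS r s ^ 3 + a)) = (-1 + Complex.I) * ((-2 + Complex.I) * (zS r s ^ 3)) + (-1 + Complex.I) * (-2 + Complex.I) * a := by ring
    have b1 : -(5 * ‖a‖) ≤ ((-1 + Complex.I) * (-2 + Complex.I) * a).re := by
      apply re_bound
      rw [norm_mul, norm_mul]
      have : ‖(-2 + Complex.I)‖ ≤ 3 := by rw [Complex.norm_eq_sqrt_sq_add_sq, Real.sqrt_le_left (by norm_num)]; norm_num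
      calc ‖(-1 + Complex.I)‖ * ‖(-2 + Complex.I)‖ * ‖a‖ ≤ 3/2 * 3 * ‖a‖ := by gcongr; exact norm_m1I
        _ ≤ _ := by gcongr; norm_num
    set R := tt.re * r with hR
    have hR1 : 0.309 * r ≤ R := by rw [hR]; gcongr; linarith
    have b2 : ((-1 + Complex.I) * ((-2 + Complex.I) * (zS r s ^ 3))).re = (3*R-2*s)^3 - 3 * (3*R-2*s) * s^2 + 9 * (3*R-2*s)^2 * s - 3 * s^3 := by
      simp only [zS, pow_succ, pow_zero]
      simp [Complex.mul_re, Complex.mul_im]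
      ring
    set A := 3*R-2*s with hA
    have hA1 : R ≤ A := by linarith
    have hRp : 0 < R := by linarith
    have b3 : R^3 ≤ A^3 - 3 * A * s^2 + 9 * A^2 * s - 3 * s^3 := by
      have c1 : R^3 ≤ A^3 := by gcongr
      have c2 : A * s^2 ≤ A^2 * s := by
        have : 0 ≤ A * s * (A - s) := by
          apply mul_nonneg (mul_nonneg (by linarith) h1); linarith
        linarith
      have c3 : s^3 ≤ A^2 * s := by
        have : 0 ≤ s * ((A - s) * (A + s)) := by
          apply mul_nonneg h1 (mul_nonneg _ _) <;> linarith
        linarith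
      have c4 : 0 ≤ A^2 * s := by positivity
      linarith
    have b5 : (0.309 * r)^3 ≤ R^3 := by gcongr
    have b6 : r ≤ r^3 := by nlinarith [mul_nonneg (show 0 ≤ r by linarith) (show 0 ≤ r * r - 1 by nlinarith)]
    rw [e, Complex.add_re, b2]
    nlinarith
  hQb := by
    intro s h1 h2
    have b6 : r ≤ r^3 := by nlinarith [mul_nonneg (show 0 ≤ r by linarith) (show 0 ≤ r * r - 1 by nlinarith)]
    refine (norm_add_le _ _).trans ?_
    rw [norm_pow]
    have := zS_norm (by linarith) h1 h2
    have : ‖zS r s‖^3 ≤ r^3 := by gcongr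
    linarith [norm_nonneg a]

/-- everything needed about one decaying solution at a point -/
def kgood (f g : ℂ → ℂ) (r : ℝ) (z : ℂ) : Prop :=
  0 < -((-1 + Complex.I) * (conj (f z) * g z)).re ∧
  ‖g z‖^2 ≤ 450 * MM r * (-((-1 + Complex.I) * (conj (f z) * g z)).re)

lemma kgood.ne {f g : ℂ → ℂ} {r : ℝ} {z : ℂ} (h : kgood f g r z) : f z ≠ 0 := by
  intro h0
  have := h.1
  simp [h0] at this

lemma kgood_ray {a : ℂ} {f g : ℂ → ℂ} (h : ESol a f g) (hn : ¬ (f 0 = 0 ∧ g 0 = 0))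
    (hK : ∀ s, R0 a ≤ s → KK (-1 + Complex.I) (fun s => f (s * tt)) (fun s => g (s * tt)) s ≤ 0)
    {r : ℝ} (hr : R0 a ≤ r) : kgood f g r (r * tt) := by
  have e1 := (ray_gen_t h).E1 hK hr
  have e2 := (ray_gen_t h).E2 hK hr
  have hr0 := R0_ge a
  have hM := MM_pos (show 0 < r by linarith)
  have k0 := hK r hr
  simp only [KK] at e1 e2 k0
  set k := -((-1 + Complex.I) * (conj (f (r * tt)) * g (r * tt))).re with hk
  have hk0 : 0 ≤ k := by linarith
  refine ⟨?_, ?_⟩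
  · by_contra! hcon
    have hk1 : k = 0 := le_antisymm hcon hk0
    apply h.nontriv hn (r * tt)
    rw [hk1] at e1
    rw [hk1] at e2
    constructor
    · by_contra h2
      have : 0 < 1/2 * MM r * ‖f (r * tt)‖^2 := by
        have := norm_pos_iff.2 h2
        positivity
      linarith
    · have : ‖g (r * tt)‖^2 ≤ 0 := by linarith
      have : ‖g (r * tt)‖^2 = 0 := le_antisymm this (by positivity)
      simpa using this
  · refine e2.trans ?_
    gcongr
    norm_num

lemma kgood_V {a : ℂ} {f g : ℂ → ℂ} (h : ESol a f g) {r : ℝ} (hr : 1 ≤ r) (ha : 1000 * ‖a‖ ≤ r)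
    (hq : kgood f g r (r * tt)) {s : ℝ} (h1 : tt.re * r ≤ s) (h2 : s ≤ tt.im * r) : kgood f g r (zV r s) := by
  have S := (segV h hr ha).left h1 h2
  have c1 := S.k
  rw [← zV_end] at hq
  refine ⟨lt_of_lt_of_le hq.1 ?_, ?_⟩
  · simp only [KK] at c1; linarith
  · exact S.s2 (B := 450) (by norm_num) (by norm_num) hq.2

lemma kgood_S {a : ℂ} {f g : ℂ → ℂ} (h : ESol a f g) {r : ℝ} (hr : 1 ≤ r) (ha : 1000 * ‖a‖ ≤ r)
    (hq : kgood f g r (r * tt)) {s : ℝ} (h1 : 0 ≤ s) (h2 : s ≤ tt.re * r) : kgood f g r (zS r s) := by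
  have hq' := kgood_V h hr ha hq le_rfl (by have := tt_bd; nlinarith)
  have S := (segS h hr ha).left h1 h2
  have c1 := S.k
  rw [← zS_end] at hq'
  refine ⟨lt_of_lt_of_le hq'.1 ?_, ?_⟩
  · simp only [KK] at c1; linarith
  · exact S.s2 (B := 450) (by norm_num) (by norm_num) hq'.2

lemma good_of {f1 g1 f2 g2 Om : ℂ → ℂ} {r B : ℝ} {z : ℂ} (hr : 1 ≤ r) (hB : 0 ≤ B) (k1 : kgood f1 g1 r z) (k2 : kgood f2 g2 r z)
    (h : ∀ x : ℝ, 0 < x → ‖Om z‖ ≤ B / r ^ 3 * (x * (-((-1 + Complex.I) * (conj (f1 z) * g1 z)).re) + (-((-1 + Complex.I) * (conj (f2 z) * g2 z)).re) / x)) :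
    good f1 f2 Om (2 * B * (450 * ‖(-1 + Complex.I)‖^2)) r z := by
  have hM := MM_pos (show 0 < r by linarith)
  refine ⟨k1.ne, k2.ne, ?_⟩
  have a1 := k_le_of_D (ζ := (-1 + Complex.I)) (v := fun _ => f1 z) (v1 := fun _ => g1 z) (s := 0) (B := 450) (by norm_num) hM.le k1.2 k1.1.le
  have a2 := k_le_of_D (ζ := (-1 + Complex.I)) (v := fun _ => f2 z) (v1 := fun _ => g2 z) (s := 0) (B := 450) (by norm_num) hM.le k2.2 k2.1.le
  exact om_final (by linarith) hB k1.ne k2.ne a1 a2 h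

theorem poly {a1 a2 : ℂ} {f1 g1 f2 g2 : ℂ → ℂ} (h1 : ESol a1 f1 g1) (h2 : ESol a2 f2 g2)
    (n1 : ¬ (f1 0 = 0 ∧ g1 0 = 0)) (n2 : ¬ (f2 0 = 0 ∧ g2 0 = 0))
    (K1 : ∀ s, R0 a1 ≤ s → KK (-1 + Complex.I) (fun s => f1 (s * tt)) (fun s => g1 (s * tt)) s ≤ 0)
    (K2 : ∀ s, R0 a2 ≤ s → KK (-1 + Complex.I) (fun s => f2 (s * tt)) (fun s => g2 (s * tt)) s ≤ 0)
    {Om : ℂ → ℂ} {κ : ℂ} (hOm : ∀ z, HasDerivAt Om (κ * (f1 z * f2 z)) z)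
    (hO : Tendsto (fun s : ℝ => Om (s * tt)) atTop (𝓝 0)) :
    ∃ C r1, 0 ≤ C ∧ 1 ≤ r1 ∧ ∀ r, r1 ≤ r → good f1 f2 Om C r (r * tt) ∧
      (∀ s, tt.re * r ≤ s → s ≤ tt.im * r → good f1 f2 Om C r (zV r s)) ∧
      (∀ s, 0 ≤ s → s ≤ tt.re * r → good f1 f2 Om C r (zS r s)) := by
  set B := 75 * ‖κ‖ with hB
  have hB0 : 0 ≤ B := by positivity
  refine ⟨2 * B * (450 * ‖(-1 + Complex.I)‖^2), R0 a1 + R0 a2 + 1000 * ‖a1‖ + 1000 * ‖a2‖, by positivity, ?_, ?_⟩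
  · linarith [R0_ge a1, R0_ge a2, norm_nonneg a1, norm_nonneg a2]
  intro r hr
  have q1 := R0_ge a1
  have q2 := R0_ge a2
  have q3 := norm_nonneg a1
  have q4 := norm_nonneg a2
  have hr1 : 1 ≤ r := by linarith
  have kr1 := kgood_ray h1 n1 K1 (show R0 a1 ≤ r by linarith)
  have kr2 := kgood_ray h2 n2 K2 (show R0 a2 ≤ r by linarith)
  have omr : ∀ x : ℝ, 0 < x → ‖Om (r * tt)‖ ≤ B / r ^ 3 * (x * (-((-1 + Complex.I) * (conj (f1 (r * tt)) * g1 (r * tt))).re) + (-((-1 + Complex.I) * (conj (f2 (r * tt)) * g2 (r * tt))).re) / x) := by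
    intro x hx
    exact ((ray_gen_t h1).mono' (show R0 a1 ≤ R0 a1 + R0 a2 by linarith)).om (fun s hs => K1 s (by linarith))
      ((ray_gen_t h2).mono' (show R0 a2 ≤ R0 a1 + R0 a2 by linarith)) (fun s hs => K2 s (by linarith))
      (Om := fun s : ℝ => Om (s * tt)) (κ := κ) (fun s => ray_deriv tt s (hOm _)) hO (by rw [hB]; linarith [norm_nonneg κ]) (by linarith) hx
  have omV : ∀ s, tt.re * r ≤ s → s ≤ tt.im * r → ∀ x : ℝ, 0 < x → ‖Om (zV r s)‖ ≤ B / r ^ 3 * (x * (-((-1 + Complex.I) * (conj (f1 (zV r s)) * g1 (zV r s))).re) + (-((-1 + Complex.I) * (conj (f2 (zV r s)) * g2 (zV r s))).re) / x) := by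
    intro s hs1 hs2 x hx
    refine ((segV h1 hr1 (by linarith)).left hs1 hs2).om ((segV h2 hr1 (by linarith)).left hs1 hs2)
      (Om := fun s => Om (zV r s)) (κ := κ) (fun s => path_deriv _ _ s (hOm _)) (by rw [hB]; linarith [norm_nonneg κ]) hx ?_
    have := omr x hx
    rw [← zV_end] at this
    exact this
  have omS : ∀ s, 0 ≤ s → s ≤ tt.re * r → ∀ x : ℝ, 0 < x → ‖Om (zS r s)‖ ≤ B / r ^ 3 * (x * (-((-1 + Complex.I) * (conj (f1 (zS r s)) * g1 (zS r s))).re) + (-((-1 + Complex.I) * (conj (f2 (zS r s)) * g2 (zS r s))).re) / x) := by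
    intro s hs1 hs2 x hx
    refine ((segS h1 hr1 (by linarith)).left hs1 hs2).om ((segS h2 hr1 (by linarith)).left hs1 hs2)
      (Om := fun s => Om (zS r s)) (κ := κ) (fun s => path_deriv _ _ s (hOm _)) (by rw [hB]; linarith [norm_nonneg κ]) hx ?_
    have := omV (tt.re * r) le_rfl (by have := tt_bd; nlinarith) x hx
    rw [← zS_end] at this
    exact this
  refine ⟨good_of hr1 hB0 kr1 kr2 omr, fun s hs1 hs2 => ?_, fun s hs1 hs2 => ?_⟩
  · exact good_of hr1 hB0 (kgood_V h1 hr1 (by linarith) kr1 hs1 hs2) (kgood_V h2 hr1 (by linarith) kr2 hs1 hs2) (omV s hs1 hs2)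
  · exact good_of hr1 hB0 (kgood_S h1 hr1 (by linarith) kr1 hs1 hs2) (kgood_S h2 hr1 (by linarith) kr2 hs1 hs2) (omS s hs1 hs2)
end

section
open ComplexConjugate Filter Topology

lemma MM_div {r : ℝ} (hr : 1 ≤ r) : r / MM r = 1 / √r := by
  unfold MM
  have : 0 < √r := Real.sqrt_pos.2 (by linarith)
  have : r ≠ 0 := by linarith
  field_simp

lemma quot_deriv {f g p q : ℂ → ℂ} {W : ℂ} {z : ℂ} (h1 : HasDerivAt f (g z) z) (h2 : HasDerivAt p (q z) z) (hf : f z ≠ 0)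
    (hW : f z * q z - g z * p z = W) :
    HasDerivAt (fun z => p z / f z) (W / (f z * f z)) z := by
  have := h2.div h1 hf
  have e : W / (f z * f z) = (q z * f z - p z * g z) / f z ^ 2 := by rw [← hW, pow_two]; ring
  rw [e]; exact this

lemma norm_T2 : ‖(-2 + Complex.I : ℂ)‖ ≤ 3 := by
  refine (norm_add_le _ _).trans ?_
  simp; norm_num

/-- transfer of the quotient, additive -/
lemma T1 {f g p q Om : ℂ → ℂ} (h1 : ∀ z, HasDerivAt f (g z) z) (h2 : ∀ z, HasDerivAt p (q z) z)
    (hOm : ∀ z, f z * q z - g z * p z = Om z) {C r : ℝ} (hC : 0 ≤ C) (hr : 1 ≤ r)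
    (hV : ∀ s, tt.re * r ≤ s → s ≤ tt.im * r → good f f Om C r (zV r s))
    (hS : ∀ s, 0 ≤ s → s ≤ tt.re * r → good f f Om C r (zS r s)) :
    ‖p (r * tt) / f (r * tt) - p ((3 * (tt.re * r) : ℝ)) / f ((3 * (tt.re * r) : ℝ))‖ ≤ 6 * C / √r := by
  have hb := tt_bd
  have hM := MM_pos (show 0 < r by linarith)
  have key : ∀ z, good f f Om C r z → HasDerivAt (fun z => p z / f z) (Om z / (f z * f z)) z ∧ ‖Om z / (f z * f z)‖ ≤ C / MM r := by
    intro z hz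
    refine ⟨quot_deriv (h1 z) (h2 z) hz.1 (hOm z), ?_⟩
    have : 0 < ‖f z‖ := norm_pos_iff.2 hz.1
    rw [norm_div, norm_mul, div_le_iff₀ (by positivity)]
    exact hz.2.2
  have eS : ‖(p (zS r (tt.re * r)) / f (zS r (tt.re * r))) - (p (zS r 0) / f (zS r 0))‖ ≤ (3 * (C / MM r)) * (tt.re * r - 0) := by
    refine norm_image_sub_le_of_norm_deriv_le_segment' (f := fun s => p (zS r s) / f (zS r s)) (f' := fun s => (-2 + Complex.I) * (Om (zS r s) / (f (zS r s) * f (zS r s)))) (fun s hs => ?_) (fun s hs => ?_) (tt.re * r) ⟨by nlinarith, le_rfl⟩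
    · exact (path_deriv _ _ s (key _ (hS s hs.1 hs.2)).1).hasDerivWithinAt
    · rw [norm_mul]
      exact mul_le_mul norm_T2 (key _ (hS s hs.1 hs.2.le)).2 (norm_nonneg _) (by norm_num)
  have eV : ‖(p (zV r (tt.im * r)) / f (zV r (tt.im * r))) - (p (zV r (tt.re * r)) / f (zV r (tt.re * r)))‖ ≤ (C / MM r) * (tt.im * r - tt.re * r) := by
    refine norm_image_sub_le_of_norm_deriv_le_segment' (f := fun s => p (zV r s) / f (zV r s)) (f' := fun s => Complex.I * (Om (zV r s) / (f (zV r s) * f (zV r s)))) (fun s hs => ?_) (fun s hs => ?_) (tt.im * r) ⟨by nlinarith, le_rfl⟩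
    · exact (path_deriv _ _ s (key _ (hV s hs.1 hs.2)).1).hasDerivWithinAt
    · rw [norm_mul, Complex.norm_I, one_mul]
      exact (key _ (hV s hs.1 hs.2.le)).2
  rw [zS_end] at eS
  rw [zV_end] at eV
  have e0 : zS r 0 = ((3 * (tt.re * r) : ℝ) : ℂ) := by simp [zS]
  rw [e0] at eS
  have e1 := norm_sub_le_norm_sub_add_norm_sub (p (r * tt) / f (r * tt)) (p (zV r (tt.re * r)) / f (zV r (tt.re * r))) (p ((3 * (tt.re * r) : ℝ)) / f ((3 * (tt.re * r) : ℝ)))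
  have e2 : 6 * C / √r = 6 * (C / MM r) * r := by
    have := MM_div hr
    calc 6 * C / √r = 6 * C * (1 / √r) := by ring
      _ = _ := by rw [← this]; ring
  rw [e2]
  have hc : 0 ≤ C / MM r := by positivity
  have : 0 ≤ C / MM r * r := by positivity
  nlinarith

/-- transfer of the quotient, multiplicative -/
lemma T2 {f g p q Om : ℂ → ℂ} (h1 : ∀ z, HasDerivAt f (g z) z) (h2 : ∀ z, HasDerivAt p (q z) z)
    (hOm : ∀ z, f z * q z - g z * p z = Om z) {C r : ℝ} (hC : 0 ≤ C) (hr : 1 ≤ r)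
    (hV : ∀ s, tt.re * r ≤ s → s ≤ tt.im * r → good f p Om C r (zV r s))
    (hS : ∀ s, 0 ≤ s → s ≤ tt.re * r → good f p Om C r (zS r s)) :
    ‖p ((3 * (tt.re * r) : ℝ)) / f ((3 * (tt.re * r) : ℝ))‖ ^ 2 ≤ ‖p (r * tt) / f (r * tt)‖ ^ 2 * Real.exp (6 * C / √r) := by
  have hb := tt_bd
  have hM := MM_pos (show 0 < r by linarith)
  have hc : 0 ≤ C / MM r := by positivity
  set k := 6 * (C / MM r) with hk
  have key : ∀ (z T : ℂ), ‖T‖ ≤ 3 → good f p Om C r z → HasDerivAt (fun z => p z / f z) (Om z / (f z * f z)) z ∧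
      0 ≤ 2 * (conj (p z / f z) * (T * (Om z / (f z * f z)))).re + k * ‖p z / f z‖ ^ 2 := by
    intro z T hT hz
    refine ⟨quot_deriv (h1 z) (h2 z) hz.1 (hOm z), ?_⟩
    have hf : 0 < ‖f z‖ := norm_pos_iff.2 hz.1
    have e : ‖Om z / (f z * f z)‖ ≤ C / MM r * ‖p z / f z‖ := by
      rw [norm_div, norm_mul, norm_div, div_le_iff₀ (by positivity)]
      refine hz.2.2.trans (le_of_eq ?_)
      field_simp
    have := re_bound (conj (p z / f z) * (T * (Om z / (f z * f z)))) (B := ‖p z / f z‖ * (3 * (C / MM r * ‖p z / f z‖))) (by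
      rw [norm_mul, norm_mul, RCLike.norm_conj]
      gcongr)
    rw [hk]; nlinarith
  have gen : ∀ (Z : ℝ → ℂ) (T : ℂ) (a b : ℝ), ‖T‖ ≤ 3 → a ≤ b → (∀ s f f', HasDerivAt f f' (Z s) → HasDerivAt (fun s => f (Z s)) (T * f') s) → (∀ s, a ≤ s → s ≤ b → good f p Om C r (Z s)) →
     ‖p (Z a) / f (Z a)‖ ^ 2 * Real.exp (k * a) ≤ ‖p (Z b) / f (Z b)‖ ^ 2 * Real.exp (k * b) := by
    intro Z T a b hT hab hZ hg
    refine mono_Icc (f := fun s => ‖p (Z s) / f (Z s)‖ ^ 2 * Real.exp (k * s)) hab (fun s h1 h2 => (hZ s _ _ (key _ T hT (hg s h1 h2)).1).normSq'.mul (((hasDerivAt_id s).const_mul k).exp)) (fun s h1 h2 => ?_)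
    have := (key _ T hT (hg s h1 h2)).2
    have h3 := (Real.exp_pos (k * s)).le
    have := mul_nonneg this h3
    simp only [id]
    linarith
  have eS := gen (zS r) (-2 + Complex.I) 0 (tt.re * r) norm_T2 (by nlinarith) (fun s f f' h => path_deriv _ _ s h) hS
  have eV := gen (zV r) (Complex.I) (tt.re * r) (tt.im * r) (by simp) (by nlinarith) (fun s f f' h => path_deriv _ _ s h) hV
  rw [zS_end] at eS
  rw [zV_end] at eV
  have e0 : zS r 0 = ((3 * (tt.re * r) : ℝ) : ℂ) := by simp [zS]
  rw [e0, mul_zero, Real.exp_zero, mul_one] at eS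
  refine (eS.trans eV).trans ?_
  have e2 : 6 * C / √r = k * r := by
    have := MM_div hr
    calc 6 * C / √r = 6 * C * (1 / √r) := by ring
      _ = _ := by rw [← this, hk]; ring
  rw [e2]
  have hk0 : 0 ≤ k := by positivity
  gcongr
  nlinarith

lemma T2_lim {f g p q Om : ℂ → ℂ} (h1 : ∀ z, HasDerivAt f (g z) z) (h2 : ∀ z, HasDerivAt p (q z) z)
    (hOm : ∀ z, f z * q z - g z * p z = Om z) {C r1 : ℝ} (hC : 0 ≤ C) (hr1 : 1 ≤ r1)
    (hg : ∀ r, r1 ≤ r → good f p Om C r (r * tt) ∧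
      (∀ s, tt.re * r ≤ s → s ≤ tt.im * r → good f p Om C r (zV r s)) ∧
      (∀ s, 0 ≤ s → s ≤ tt.re * r → good f p Om C r (zS r s)))
    (hre : ∀ x : ℝ, ‖p x‖ = ‖f x‖) {δ : ℝ} (hδ : 0 ≤ δ) (hδ1 : δ < 1) :
    ¬ ∀ᶠ r : ℝ in atTop, ‖p (r * tt) / f (r * tt)‖ ≤ δ := by
  intro hev
  have l1 : Tendsto (fun r => 6 * C / √r) atTop (𝓝 0) := Tendsto.div_atTop tendsto_const_nhds Real.tendsto_sqrt_atTop
  have l2 : Tendsto (fun r => δ^2 * Real.exp (6 * C / √r)) atTop (𝓝 (δ^2 * 1)) := by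
    have := (Real.continuous_exp.tendsto 0).comp l1
    rw [Real.exp_zero] at this
    exact this.const_mul _
  have l3 := l2.eventually_lt_const (show δ^2 * 1 < 1 by nlinarith)
  obtain ⟨r, h4, h5, h6⟩ := (hev.and (l3.and (eventually_ge_atTop r1))).exists
  have h7 := T2 h1 h2 hOm hC (hr1.trans h6) (hg r h6).2.1 (hg r h6).2.2
  have hb := tt_bd
  have hS0 := (hg r h6).2.2 0 le_rfl (by nlinarith)
  have e0 : zS r 0 = ((3 * (tt.re * r) : ℝ) : ℂ) := by simp [zS]
  rw [e0] at hS0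
  have : 0 < ‖f ((3 * (tt.re * r) : ℝ))‖ := norm_pos_iff.2 hS0.1
  rw [norm_div, hre, div_self this.ne'] at h7
  have h8 : ‖p (r * tt) / f (r * tt)‖ ^ 2 ≤ δ ^ 2 := by gcongr
  have := mul_le_mul_of_nonneg_right h8 (Real.exp_pos (6 * C / √r)).le
  linarith
end

section
open ComplexConjugate Filter Topology

lemma Gen.Y_tendsto {T ζ : ℂ} {Q v v1 : ℝ → ℂ} {c r0 : ℝ} (h : Gen T ζ Q v v1 c r0) (hK : ∀ s, r0 ≤ s → KK ζ v v1 s ≤ 0) :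
    Tendsto (fun s => ‖v1 s‖ ^ 2 + s ^ 3 * ‖v s‖ ^ 2) atTop (𝓝 0) := by
  have hc := h.hc
  have hζ : 0 < ‖ζ‖ := hc.trans_le h.ζpos
  set d := 4 / 5 * c / ‖ζ‖ with hd
  have hd0 : 0 < d := by positivity
  have hd1 : d * ‖ζ‖ ≤ 4 / 5 * c := by rw [hd]; field_simp; exact le_rfl
  set A := 5 / c * (- KK ζ v v1 r0 * Real.exp (d * XX r0)) / d with hA
  have hk0 : 0 ≤ - KK ζ v v1 r0 := by have := hK r0 le_rfl; linarith
  have l1 : Tendsto (fun s => A * ((d * XX s) * Real.exp (-(d * XX s)))) atTop (𝓝 0) := by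
    have := (Real.tendsto_pow_mul_exp_neg_atTop_nhds_zero 1).comp (XX_tendsto.const_mul_atTop hd0)
    have := this.const_mul A
    simpa using this
  refine squeeze_zero' ?_ ?_ l1
  · filter_upwards [eventually_ge_atTop 0] with s hs
    positivity
  · filter_upwards [eventually_ge_atTop r0] with s hs
    have hs1 := h.hr0.trans hs
    have b1 := h.Y_le hK hs
    have b2 := h.k_decay hK hs hd1 hd0.le
    have b3 := MM_le_XX hs1
    have b4 := MM_nonneg (show 0 ≤ s by linarith)
    have e : Real.exp (-d * (XX s - XX r0)) = Real.exp (d * XX r0) * Real.exp (-(d * XX s)) := by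
      rw [← Real.exp_add]; congr 1; ring
    rw [e] at b2
    calc _ ≤ _ := b1
      _ ≤ 5 / c * XX s * (-KK ζ v v1 r0 * (Real.exp (d * XX r0) * Real.exp (-(d * XX s)))) := by
        have : 0 ≤ -KK ζ v v1 s := by have := hK s hs; linarith
        have : 0 ≤ XX s := b4.trans b3
        gcongr
      _ = _ := by rw [hA]; field_simp

def RS (μ : ℂ) (u u1 : ℝ → ℂ) : Prop := PSol 1 (fun r : ℝ => (r:ℂ)^3 - μ) u u1

noncomputable def KM (μ : ℂ) (u u1 : ℝ → ℂ) : ℝ → ℝ := KK (-Complex.I * conj μ) u u1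

lemma RS.d0 {μ : ℂ} {u u1 : ℝ → ℂ} (h : RS μ u u1) (s : ℝ) : HasDerivAt u (u1 s) s := by
  simpa using (h s).1
lemma RS.d1 {μ : ℂ} {u u1 : ℝ → ℂ} (h : RS μ u u1) (s : ℝ) : HasDerivAt u1 (((s:ℂ)^3 - μ) * u s) s := by
  simpa using (h s).2

lemma RS.uniq {μ : ℂ} {u u1 : ℝ → ℂ} (h : RS μ u u1) {s0 : ℝ} (h0 : u s0 = 0) (h1 : u1 s0 = 0) (s : ℝ) : u s = 0 ∧ u1 s = 0 :=
  PSol.unique h (by fun_prop) h0 h1 s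

lemma RS.KKd {μ : ℂ} {u u1 : ℝ → ℂ} (h : RS μ u u1) (ζ : ℂ) (s : ℝ) :
    HasDerivAt (KK ζ u u1) (ζ.re * ‖u1 s‖^2 + (ζ.re * s^3 - (ζ * μ).re) * ‖u s‖^2) s := by
  have := PSol.hasDerivAt_KK h ζ s
  convert this using 1
  have e : ζ * (1 * ((s:ℂ)^3 - μ)) = ((s^3 : ℝ) : ℂ) * ζ - ζ * μ := by push_cast; ring
  rw [e, Complex.sub_re, Complex.re_ofReal_mul, map_one, mul_one, mul_comm (s^3)]

lemma KM_re (μ : ℂ) : (-Complex.I * conj μ).re = - μ.im := by simp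
lemma KM_norm (μ : ℂ) : ‖-Complex.I * conj μ‖ = ‖μ‖ := by simp

lemma RS.KMd {μ : ℂ} {u u1 : ℝ → ℂ} (h : RS μ u u1) (s : ℝ) :
    HasDerivAt (KM μ u u1) (-μ.im * (‖u1 s‖^2 + s^3 * ‖u s‖^2)) s := by
  have := h.KKd (-Complex.I * conj μ) s
  unfold KM
  convert this using 1
  rw [KM_re]
  have : (-Complex.I * conj μ * μ).re = 0 := by simp [Complex.mul_re]; ring
  rw [this]; ring

lemma RS.KM_mono {μ : ℂ} {u u1 : ℝ → ℂ} (h : RS μ u u1) (hμ : μ.im < 0) {a b : ℝ} (ha : 0 ≤ a) (hab : a ≤ b) :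
    KM μ u u1 a ≤ KM μ u u1 b := by
  refine mono_Icc hab (fun s _ _ => h.KMd s) (fun s hs _ => ?_)
  have : 0 ≤ s := ha.trans hs
  have : 0 ≤ -μ.im := by linarith
  positivity

lemma RS.KM_strict {μ : ℂ} {u u1 : ℝ → ℂ} (h : RS μ u u1) (hμ : μ.im < 0) (hn : ¬ (u 0 = 0 ∧ u1 0 = 0)) {a b : ℝ} (ha : 0 ≤ a) (hab : a < b) :
    KM μ u u1 a < KM μ u u1 b := by
  have hm : StrictMonoOn (KM μ u u1) (Set.Icc a b) := by
    apply strictMonoOn_of_deriv_pos (convex_Icc a b)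
    · exact fun s hs => (h.KMd s).continuousAt.continuousWithinAt
    · rw [interior_Icc]
      intro s hs
      rw [(h.KMd s).deriv]
      have hs0 : 0 < s := lt_of_le_of_lt ha hs.1
      have : 0 < -μ.im := by linarith
      apply mul_pos this
      by_cases h1 : u s = 0
      · have h2 : u1 s ≠ 0 := fun h2 => hn (h.uniq h1 h2 0)
        have := norm_pos_iff.2 h2
        positivity
      · have := norm_pos_iff.2 h1
        positivity
  exact hm ⟨le_rfl, hab.le⟩ ⟨hab.le, le_rfl⟩ hab

noncomputable def rB (μ : ℂ) : ℝ := 2 + ‖μ‖ + 2 * ‖μ‖ / |μ.im| + 2 * ‖μ‖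

lemma rB_ge (μ : ℂ) : 2 ≤ rB μ := by unfold rB; have := norm_nonneg μ; have : 0 ≤ 2 * ‖μ‖ / |μ.im| := by positivity
                                     linarith
lemma rB_cube {μ : ℂ} {s : ℝ} (h : rB μ ≤ s) : 2 * ‖μ‖ ≤ s^3 := by
  have h1 := rB_ge μ
  have : s ≤ s^3 := by nlinarith [mul_nonneg (show 0 ≤ s by linarith) (show 0 ≤ s * s - 1 by nlinarith)]
  unfold rB at h
  have h2 : 0 ≤ 2 * ‖μ‖ / |μ.im| := by positivity
  linarith [norm_nonneg μ]

lemma rB_Q {μ : ℂ} {s : ℝ} (h : rB μ ≤ s) : ‖(s:ℂ)^3 - μ‖ ≤ 2 * s^3 := by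
  have h1 := rB_cube h
  have h2 := rB_ge μ
  refine (norm_sub_le _ _).trans ?_
  have : ‖(s:ℂ)^3‖ = s^3 := by rw [norm_pow, Complex.norm_real, Real.norm_eq_abs, abs_of_nonneg (by linarith)]
  rw [this]; linarith [norm_nonneg μ]

lemma RS.gen {μ : ℂ} {u u1 : ℝ → ℂ} (h : RS μ u u1) (hμ : μ.im < 0) :
    Gen 1 (-Complex.I * conj μ) (fun r : ℝ => (r:ℂ)^3 - μ) u u1 (-μ.im) (rB μ) where
  sol := h
  hT := by simp
  hc := by linarith
  hr0 := by linarith [rB_ge μ]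
  hr1 := by
    rw [KM_norm]
    have h1 : |μ.im| = -μ.im := abs_of_neg hμ
    have h2 : 2 * ‖μ‖ / (-μ.im) ≤ rB μ := by unfold rB; rw [h1]; linarith [norm_nonneg μ]
    rw [div_le_iff₀ (by linarith)] at h2
    linarith
  hζ := by simp
  hQ := by
    intro s hs
    have e : -Complex.I * conj μ * (1 * ((s:ℂ)^3 - μ)) = ((s^3:ℝ):ℂ) * (-Complex.I * conj μ) + Complex.I * (conj μ * μ) := by push_cast; ring
    rw [e, Complex.add_re, Complex.re_ofReal_mul, KM_re, conj_mul_re, mul_comm Complex.I, Complex.re_ofReal_mul]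
    simp; linarith
  hQb := fun s hs => rB_Q hs

lemma RS.gen1 {μ : ℂ} {u u1 : ℝ → ℂ} (h : RS μ u u1)  :
    Gen 1 1 (fun r : ℝ => (r:ℂ)^3 - μ) u u1 (1/2) (2 + rB μ) where
  sol := h
  hT := by simp
  hc := by norm_num
  hr0 := by linarith [rB_ge μ]
  hr1 := by
    have := rB_ge μ
    simp; linarith
  hζ := by norm_num
  hQ := by
    intro s hs
    have := rB_cube (show rB μ ≤ s by linarith)
    have h1 := Complex.re_le_norm μ
    have e : 1 * (1 * ((s:ℂ)^3 - μ)) = ((s^3:ℝ):ℂ) - μ := by push_cast; ring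
    rw [e, Complex.sub_re, Complex.ofReal_re]; linarith
  hQb := fun s hs => rB_Q (by linarith)

structure Dec (μ : ℂ) (u u1 : ℝ → ℂ) : Prop where
  rs : RS μ u u1
  K : ∀ r, 0 ≤ r → KM μ u u1 r ≤ 0

lemma RS.dec {μ : ℂ} {u u1 : ℝ → ℂ} (h : RS μ u u1) (hμ : μ.im < 0)
    (hY : Tendsto (fun s => ‖u1 s‖ ^ 2 + s ^ 3 * ‖u s‖ ^ 2) atTop (𝓝 0)) : Dec μ u u1 := by
  refine ⟨h, fun r hr => ?_⟩
  have := (h.gen hμ).K_nonpos hY (max r (rB μ)) (le_max_right _ _)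
  exact (h.KM_mono hμ hr (le_max_left _ _)).trans this

namespace Dec
variable {μ : ℂ} {u u1 : ℝ → ℂ}

lemma Y (h : Dec μ u u1) (hμ : μ.im < 0) : Tendsto (fun s => ‖u1 s‖ ^ 2 + s ^ 3 * ‖u s‖ ^ 2) atTop (𝓝 0) :=
  (h.rs.gen hμ).Y_tendsto (fun s hs => h.K s (by linarith [rB_ge μ]))

lemma Kneg (h : Dec μ u u1) (hμ : μ.im < 0) (hn : ¬ (u 0 = 0 ∧ u1 0 = 0)) {r : ℝ} (hr : 0 ≤ r) : KM μ u u1 r < 0 :=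
  (h.rs.KM_strict hμ hn hr (lt_add_one r)).trans_le (h.K _ (by linarith))

lemma ne (h : Dec μ u u1) (hμ : μ.im < 0) (hn : ¬ (u 0 = 0 ∧ u1 0 = 0)) {r : ℝ} (hr : 0 ≤ r) : u r ≠ 0 := by
  intro h0
  have := h.Kneg hμ hn hr
  simp [KM, KK, h0] at this

end Dec

lemma wr_id (ζ S S1 u u1 : ℂ) : (ζ * (conj (S * u) * (S * u1 - S1 * u))).re
    = ‖S‖^2 * (ζ * (conj u * u1)).re - ‖u‖^2 * (ζ * (conj S * S1)).re := by
  have : ζ * (conj (S * u) * (S * u1 - S1 * u)) = (conj S * S) * (ζ * (conj u * u1)) - (conj u * u) * (ζ * (conj S * S1)) := by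
    simp only [map_mul]; ring
  rw [this, conj_mul_re, conj_mul_re, Complex.sub_re, Complex.re_ofReal_mul, Complex.re_ofReal_mul]

lemma wr_const {μ : ℂ} {S S1 u u1 : ℝ → ℂ} (hS : RS μ S S1) (h : RS μ u u1) (r : ℝ) :
    S r * u1 r - S1 r * u r = S 0 * u1 0 - S1 0 * u 0 := by
  have hd : ∀ s, HasDerivAt (fun s => S s * u1 s - S1 s * u s) 0 s := by
    intro s
    have := ((hS.d0 s).mul (h.d1 s)).sub ((hS.d1 s).mul (h.d0 s))
    have e : (0:ℂ) = S1 s * u1 s + S s * (((s:ℂ) ^ 3 - μ) * u s) - (((s:ℂ) ^ 3 - μ) * S s * u s + S1 s * u1 s) := by ring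
    rw [e]; exact this
  exact is_const_of_deriv_eq_zero (fun s => (hd s).differentiableAt) (fun s => (hd s).deriv) r 0

lemma S_K {μ : ℂ} {S S1 : ℝ → ℂ} (hS : RS μ S S1) (hμ : μ.im < 0) (h0 : S 0 = 0) {r : ℝ} (hr : 0 ≤ r) : 0 ≤ KM μ S S1 r := by
  have := hS.KM_mono hμ le_rfl hr
  have e : KM μ S S1 0 = 0 := by simp [KM, KK, h0]
  linarith

lemma S_K_pos {μ : ℂ} {S S1 : ℝ → ℂ} (hS : RS μ S S1) (hμ : μ.im < 0) (h0 : S 0 = 0) (h1 : S1 0 = 1) {r : ℝ} (hr : 0 < r) : 0 < KM μ S S1 r := by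
  have := hS.KM_strict hμ (by simp [h1]) le_rfl hr
  have e : KM μ S S1 0 = 0 := by simp [KM, KK, h0]
  linarith

/-- bound for the product `S u` -/
lemma Su_bound {μ : ℂ} {S S1 u u1 : ℝ → ℂ} (hS : RS μ S S1) (hμ : μ.im < 0) (h0 : S 0 = 0) (h1 : S1 0 = 1) (h : Dec μ u u1) {r : ℝ}
    (hr : rB μ ≤ r) : -μ.im * MM r * (‖S r‖ * ‖u r‖) ≤ ‖μ‖ * ‖u 0‖ := by
  have hr0 : 0 < r := by linarith [rB_ge μ]
  have e := wr_id (-Complex.I * conj μ) (S r) (S1 r) (u r) (u1 r)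
  rw [wr_const hS h.rs, h0, h1] at e
  have hk := S_K hS hμ h0 hr0.le
  have e1 := (h.rs.gen hμ).E1 (fun s hs => h.K s (by linarith [rB_ge μ])) hr
  unfold KM at hk
  unfold KK at hk e1
  have b := re_bound (-Complex.I * conj μ * (conj (S r * u r) * (0 * u1 0 - 1 * u 0))) (B := ‖μ‖ * (‖S r‖ * ‖u r‖ * ‖u 0‖)) (by
    rw [norm_mul, KM_norm]; simp)
  rw [e] at b
  have b2 := mul_le_mul_of_nonneg_left e1 (sq_nonneg ‖S r‖)
  have b3 := mul_nonneg (sq_nonneg ‖u r‖) hk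
  set x := ‖S r‖ * ‖u r‖ with hx
  have b4 : (-μ.im * MM r * x) * x ≤ (‖μ‖ * ‖u 0‖) * x := by
    rw [hx] at *; nlinarith
  rcases (show 0 ≤ x by positivity).eq_or_lt with h5 | h5
  · rw [← h5, mul_zero]; positivity
  · exact le_of_mul_le_mul_right b4 h5
end

section
open ComplexConjugate Filter Topology

lemma exists_RS (μ c0 c1 : ℂ) : ∃ u u1, RS μ u u1 ∧ u 0 = c0 ∧ u1 0 = c1 := by
  obtain ⟨c, _, h0, h1, hd, hd1⟩ := exists_entire (-μ) c0 c1 ent_zero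
  have hE : ESol (-μ) (psum c) (psum (dco c)) := fun z => ⟨hd z, by
    have := hd1 z
    rwa [psum_zero_fun, add_zero] at this⟩
  refine ⟨fun s => psum c (s * 1), fun s => psum (dco c) (s * 1), ?_, by simpa using h0, by simpa using h1⟩
  have := hE.ray 1
  unfold RS
  convert this using 2
  ring

lemma RS.comb {μ : ℂ} {u u1 v v1 : ℝ → ℂ} (h : RS μ u u1) (h' : RS μ v v1) (m : ℂ) :
    RS μ (fun s => u s + m * v s) (fun s => u1 s + m * v1 s) := by
  intro s
  constructor
  · have := (h.d0 s).add ((h'.d0 s).const_mul m)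
    rw [one_mul]; exact this
  · have := (h.d1 s).add ((h'.d1 s).const_mul m)
    have e : 1 * (((s:ℂ)^3 - μ) * (u s + m * v s)) = ((s:ℂ)^3 - μ) * u s + m * (((s:ℂ)^3 - μ) * v s) := by ring
    rw [e]; exact this

lemma weyl {μ : ℂ} (hμ : μ.im < 0) : ∃ f f1, Dec μ f f1 ∧ f 0 = 1 := by
  obtain ⟨C, C1, hC, c0, c1⟩ := exists_RS μ 1 0
  obtain ⟨S, S1, hS, s0, s1⟩ := exists_RS μ 0 1
  have hSne : ∀ r : ℝ, 0 < r → S r ≠ 0 := by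
    intro r hr h0
    have := S_K_pos hS hμ s0 s1 hr
    simp [KM, KK, h0] at this
  set m : ℕ → ℂ := fun n => - C (n+1) / S (n+1) with hm
  have hn0 : ∀ n : ℕ, (0:ℝ) < n + 1 := fun n => by positivity
  have hK : ∀ n : ℕ, ∀ r : ℝ, 0 ≤ r → r ≤ n + 1 → KM μ (fun s => C s + m n * S s) (fun s => C1 s + m n * S1 s) r ≤ 0 := by
    intro n r h0 h1
    have := (hC.comb hS (m n)).KM_mono hμ h0 h1
    refine this.trans (le_of_eq ?_)
    have : C (n+1) + m n * S (n+1) = 0 := by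
      rw [hm]; have := hSne _ (hn0 n); field_simp; ring
    simp [KM, KK, this]
  set ζ := -Complex.I * conj μ with hζ
  set k := KM μ S S1 1 with hk
  have hkp : 0 < k := S_K_pos hS hμ s0 s1 one_pos
  set B := ‖ζ‖ * (‖C 1‖ * ‖C1 1‖) + ‖ζ‖ * (‖C 1‖ * ‖S1 1‖ + ‖S 1‖ * ‖C1 1‖) with hB
  have hbd : ∀ n, ‖m n‖ ≤ 1 + B / k := by
    intro n
    have h1 := hK n 1 zero_le_one (by have : (0:ℝ) ≤ n := by positivity
                                      linarith)
    by_contra! hcon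
    have hm1 : 1 ≤ ‖m n‖ := by have : 0 ≤ B / k := by positivity
                               linarith
    have e : KM μ (fun s => C s + m n * S s) (fun s => C1 s + m n * S1 s) 1 = ‖m n‖^2 * k + (ζ * (conj (C 1) * C1 1) + ζ * (conj (C 1) * (m n * S1 1) + conj (m n) * (conj (S 1) * C1 1))).re := by
      rw [hk]; unfold KM KK
      have : ζ * (conj (C 1 + m n * S 1) * (C1 1 + m n * S1 1)) = (conj (m n) * m n) * (ζ * (conj (S 1) * S1 1)) + (ζ * (conj (C 1) * C1 1) + ζ * (conj (C 1) * (m n * S1 1) + conj (m n) * (conj (S 1) * C1 1))) := by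
        simp only [map_mul, map_add]; ring
      rw [← hζ, this, conj_mul_re, Complex.add_re, Complex.re_ofReal_mul]
    have b := re_bound (ζ * (conj (C 1) * C1 1) + ζ * (conj (C 1) * (m n * S1 1) + conj (m n) * (conj (S 1) * C1 1))) (B := ‖m n‖ * B) (by
      refine (norm_add_le _ _).trans ?_
      have q1 : ‖ζ * (conj (C 1) * C1 1)‖ ≤ ‖m n‖ * (‖ζ‖ * (‖C 1‖ * ‖C1 1‖)) := by
        rw [norm_mul ζ, norm_mul (conj (C 1)), RCLike.norm_conj]
        have h0 : 0 ≤ ‖ζ‖ * (‖C 1‖ * ‖C1 1‖) := by positivity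
        exact le_mul_of_one_le_left h0 hm1
      have q2 : ‖ζ * (conj (C 1) * (m n * S1 1) + conj (m n) * (conj (S 1) * C1 1))‖ ≤ ‖m n‖ * (‖ζ‖ * (‖C 1‖ * ‖S1 1‖ + ‖S 1‖ * ‖C1 1‖)) := by
        rw [norm_mul]
        have := norm_add_le (conj (C 1) * (m n * S1 1)) (conj (m n) * (conj (S 1) * C1 1))
        simp only [norm_mul, RCLike.norm_conj] at this
        calc _ ≤ ‖ζ‖ * _ := mul_le_mul_of_nonneg_left this (norm_nonneg _)
          _ = _ := by ring
      rw [hB]; linarith)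
    rw [e] at h1
    have h2 : ‖m n‖ * (‖m n‖ * k - B) ≤ 0 := by nlinarith
    have h3 : B < ‖m n‖ * k := by
      have : B / k < ‖m n‖ := by linarith
      rwa [div_lt_iff₀ hkp] at this
    have : 0 < ‖m n‖ * (‖m n‖ * k - B) := mul_pos (by linarith) (by linarith)
    linarith
  obtain ⟨a, _, φ, hφ, hlim⟩ := tendsto_subseq_of_bounded (Metric.isBounded_closedBall (x := (0:ℂ)) (r := 1 + B / k)) (x := m) (fun n => by simpa using hbd n)
  refine ⟨fun s => C s + a * S s, fun s => C1 s + a * S1 s, ⟨hC.comb hS a, fun r hr => ?_⟩, by simp [c0, s0]⟩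
  have hcont : Continuous (fun a : ℂ => KM μ (fun s => C s + a * S s) (fun s => C1 s + a * S1 s) r) := by
    unfold KM KK
    have := Complex.continuous_conj
    fun_prop
  refine le_of_tendsto ((hcont.tendsto a).comp hlim) ?_
  obtain ⟨N, hN⟩ := exists_nat_ge r
  filter_upwards [eventually_ge_atTop N] with j hj
  refine hK (φ j) r hr ?_
  have : (N:ℝ) ≤ φ j := by exact_mod_cast hj.trans (hφ.id_le j)
  linarith

lemma Dec.n0 {μ : ℂ} {u u1 : ℝ → ℂ} (h : Dec μ u u1) (hμ : μ.im < 0) : Tendsto u atTop (𝓝 0) ∧ Tendsto u1 atTop (𝓝 0) := by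
  have hY := h.Y hμ
  have aux : ∀ w : ℝ → ℂ, (∀ s, 1 ≤ s → ‖w s‖^2 ≤ ‖u1 s‖ ^ 2 + s ^ 3 * ‖u s‖ ^ 2) → Tendsto w atTop (𝓝 0) := by
    intro w hw
    rw [tendsto_zero_iff_norm_tendsto_zero]
    have h1 : Tendsto (fun s => ‖w s‖^2) atTop (𝓝 0) := by
      refine squeeze_zero' (Eventually.of_forall fun s => by positivity) ?_ hY
      filter_upwards [eventually_ge_atTop 1] with s hs using hw s hs
    have := h1.sqrt
    simpa using this
  refine ⟨aux u fun s hs => ?_, aux u1 fun s hs => ?_⟩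
  · have : 1 ≤ s^3 := one_le_pow₀ hs
    nlinarith [sq_nonneg ‖u s‖, sq_nonneg ‖u1 s‖]
  · have : 0 ≤ s := by linarith
    have : 0 ≤ s ^ 3 * ‖u s‖ ^ 2 := by positivity
    linarith

/-- Wronskian of two decaying solutions -/
lemma Dec.om {μ ν : ℂ} {f f1 g g1 : ℝ → ℂ} (hf : Dec μ f f1) (hg : Dec ν g g1) (hμ : μ.im < 0) (hν : ν.im < 0)
    (nf : ¬ (f 0 = 0 ∧ f1 0 = 0)) (ng : ¬ (g 0 = 0 ∧ g1 0 = 0)) :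
    ∃ C r0, 0 ≤ C ∧ ∀ r, r0 ≤ r → ‖f r * g1 r - f1 r * g r‖ ≤ C / MM r * (‖f r‖ * ‖g r‖) := by
  have hOm : ∀ s, HasDerivAt (fun r => f r * g1 r - f1 r * g r) (1 * ((μ - ν) * (f s * g s))) s := by
    intro s
    have := ((hf.rs.d0 s).mul (hg.rs.d1 s)).sub ((hf.rs.d1 s).mul (hg.rs.d0 s))
    have e : (1 * ((μ - ν) * (f s * g s))) = f1 s * g1 s + f s * (((s:ℂ) ^ 3 - ν) * g s) - (((s:ℂ) ^ 3 - μ) * f s * g s + f1 s * g1 s) := by ring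
    rw [e]; exact this
  have hO : Tendsto (fun r => f r * g1 r - f1 r * g r) atTop (𝓝 0) := by
    have := ((hf.n0 hμ).1.mul (hg.n0 hν).2).sub ((hf.n0 hμ).2.mul (hg.n0 hν).1)
    simpa using this
  have b1 := rB_ge μ
  have b2 := rB_ge ν
  have G1 := hf.rs.gen1.mono' (show 2 + rB μ ≤ rB μ + rB ν by linarith)
  have G2 := hg.rs.gen1.mono' (show 2 + rB ν ≤ rB μ + rB ν by linarith)
  have K1 := G1.K_nonpos (hf.Y hμ)
  have K2 := G2.K_nonpos (hg.Y hν)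
  refine ⟨2 * ‖μ - ν‖ * (4 * ‖(1:ℂ)‖^2 / (1/2)), rB μ + rB ν, by positivity, fun r hr => ?_⟩
  have hr0 : 0 < r := by linarith
  refine om_final hr0 (norm_nonneg _) (hf.ne hμ nf hr0.le) (hg.ne hν ng hr0.le) (G1.k_le_E K1 hr) (G2.k_le_E K2 hr) (fun x hx => ?_)
  exact G1.om K1 G2 K2 hOm hO (by linarith) hr hx

lemma onestep {μ ν : ℂ} (hμ : μ.im < 0) (hν : ν.im < 0) (hn : ‖μ‖ = ‖ν‖) (hre : ν.re < μ.re)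
    (hsm : ‖μ - ν‖ ^ 2 ≤ (μ - ν).re / 2) {f f1 g g1 : ℝ → ℂ} (hf : Dec μ f f1) (hg : Dec ν g g1) (f0 : f 0 = 1) (g0 : g 0 = 1) :
    ∃ δ : ℝ, 0 ≤ δ ∧ δ < 1 ∧ ∀ᶠ r in atTop, ‖g r / f r‖ ≤ δ := by
  obtain ⟨S, S1, hS, s0, s1⟩ := exists_RS μ 0 1
  have nf : ¬ (f 0 = 0 ∧ f1 0 = 0) := by simp [f0]
  have ng : ¬ (g 0 = 0 ∧ g1 0 = 0) := by simp [g0]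
  have hSne : ∀ r : ℝ, 0 < r → S r ≠ 0 := by
    intro r hr h0
    have := S_K_pos hS hμ s0 s1 hr
    simp [KM, KK, h0] at this
  set ζ := conj (μ - ν) with hζ
  set p := ζ.re with hp
  have hp' : p = (μ - ν).re := by rw [hp, hζ, Complex.conj_re]
  have hp0 : 0 < p := by rw [hp', Complex.sub_re]; linarith
  have hnn : μ.re^2 + μ.im^2 = ν.re^2 + ν.im^2 := by
    have := congrArg (·^2) hn
    simp only [Complex.sq_norm, Complex.normSq_apply] at this
    linarith
  have q1 : (ζ * ν).re ≤ 0 := by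
    rw [hζ]; simp [Complex.mul_re]
    nlinarith [sq_nonneg (μ.re - ν.re), sq_nonneg (μ.im - ν.im)]
  have q2 : (ζ * μ).re ≤ p / 4 := by
    rw [Complex.sq_norm, Complex.normSq_apply] at hsm
    simp only [Complex.sub_re, Complex.sub_im] at hsm hp'
    have : (ζ * μ).re = (μ.re - ν.re) * μ.re + (μ.im - ν.im) * μ.im := by
      rw [hζ]; simp [Complex.mul_re]; ring
    rw [this, hp']
    nlinarith
  have Kg : ∀ r, 0 ≤ r → KK ζ g g1 r ≤ 0 := by
    intro r hr
    have hlim : Tendsto (KK ζ g g1) atTop (𝓝 0) := by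
      have h1 := (Complex.continuous_conj.tendsto _).comp (hg.n0 hν).1
      have h2 := (h1.mul (hg.n0 hν).2).const_mul ζ
      have h3 := (Complex.continuous_re.tendsto _).comp h2
      rw [map_zero, zero_mul, mul_zero, Complex.zero_re] at h3
      exact h3
    refine ge_of_tendsto hlim ?_
    filter_upwards [eventually_ge_atTop r] with b hb
    refine mono_Icc hb (fun s _ _ => hg.rs.KKd ζ s) (fun s h1 _ => ?_)
    have hs : 0 ≤ s := hr.trans h1
    have : 0 ≤ ζ.re * s^3 - (ζ * ν).re := by
      have : 0 ≤ ζ.re * s^3 := by positivity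
      linarith
    positivity
  have KS1 : ∀ r, 0 ≤ r → r ≤ 1 → p * ((1 - r) / 2) * ‖S r‖^2 ≤ KK ζ S S1 r := by
    intro r h0 h1
    have hm := mono_Icc (f := fun r => KK ζ S S1 r - p * ((1 - r) / 2) * ‖S r‖^2) h0
      (fun s _ _ => (hS.KKd ζ s).sub (((((hasDerivAt_id s).const_sub 1).div_const 2).const_mul p).mul (hS.d0 s).normSq'))
      (fun s hs hs1 => ?_)
    · have z : KK ζ S S1 0 = 0 := by simp [KK, s0]
      simp only [z, s0, norm_zero] at hm
      linarith
    · simp only [id]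
      have hb : (conj (S s) * S1 s).re ≤ ‖S s‖ * ‖S1 s‖ := by
        refine (Complex.re_le_norm _).trans ?_
        simp
      have hs2 : s ≤ 1 := hs1.trans h1
      have e1 : 0 ≤ p * s^3 * ‖S s‖^2 := by positivity
      have e2 : (1 - s) * (conj (S s) * S1 s).re ≤ ‖S s‖ * ‖S1 s‖ := by
        have : 0 ≤ ‖S s‖ * ‖S1 s‖ := by positivity
        nlinarith
      have e3 := mul_le_mul_of_nonneg_left e2 hp0.le
      have e4 := mul_le_mul_of_nonneg_right q2 (sq_nonneg ‖S s‖)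
      have e5 : 0 ≤ p * (‖S1 s‖ - ‖S s‖/2)^2 := by positivity
      rw [← hp]
      nlinarith
  have KS : ∀ r, 0 ≤ r → 0 ≤ KK ζ S S1 r := by
    intro r h0
    rcases le_total r 1 with h1 | h1
    · refine le_trans ?_ (KS1 r h0 h1)
      have : 0 ≤ 1 - r := by linarith
      positivity
    · have e1 := KS1 1 zero_le_one le_rfl
      have : KK ζ S S1 1 ≤ KK ζ S S1 r := by
        refine mono_Icc h1 (fun s _ _ => hS.KKd ζ s) (fun s h1 _ => ?_)
        have : 0 ≤ ζ.re * s^3 - (ζ * μ).re := by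
          have : 1 ≤ s^3 := one_le_pow₀ h1
          rw [← hp]; nlinarith
        positivity
      simp at e1
      linarith
  set A : ℝ → ℂ := fun r => S r * g1 r - S1 r * g r with hA
  have hAd : ∀ s, HasDerivAt A ((μ - ν) * (S s * g s)) s := by
    intro s
    have := ((hS.d0 s).mul (hg.rs.d1 s)).sub ((hS.d1 s).mul (hg.rs.d0 s))
    have e : ((μ - ν) * (S s * g s)) = S1 s * g1 s + S s * (((s:ℂ) ^ 3 - ν) * g s) - (((s:ℂ) ^ 3 - μ) * S s * g s + S1 s * g1 s) := by ring
    rw [e]; exact this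
  have hA2 : ∀ s, HasDerivAt (fun s => ‖A s‖^2) (2 * (‖S s‖^2 * KK ζ g g1 s - ‖g s‖^2 * KK ζ S S1 s)) s := by
    intro s
    have := (hAd s).normSq'
    convert this using 2
    have e := wr_id ζ (S s) (S1 s) (g s) (g1 s)
    unfold KK
    rw [← e, hζ]
    rw [← Complex.conj_re]
    congr 1
    simp only [hA, map_mul, map_sub, Complex.conj_conj]
    ring
  have hAneg : ∀ s, 0 ≤ s → 2 * (‖S s‖^2 * KK ζ g g1 s - ‖g s‖^2 * KK ζ S S1 s) ≤ 0 := by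
    intro s hs
    have := mul_nonneg (sq_nonneg ‖S s‖) (neg_nonneg.2 (Kg s hs))
    have := mul_nonneg (sq_nonneg ‖g s‖) (KS s hs)
    linarith
  have hA1 : ‖A 1‖^2 < 1 := by
    have hm : StrictAntiOn (fun s => ‖A s‖^2) (Set.Icc 0 1) := by
      apply strictAntiOn_of_deriv_neg (convex_Icc 0 1)
      · exact fun s hs => (hA2 s).continuousAt.continuousWithinAt
      · rw [interior_Icc]
        intro s hs
        rw [(hA2 s).deriv]
        have h1 := mul_nonneg (sq_nonneg ‖S s‖) (neg_nonneg.2 (Kg s hs.1.le))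
        have h2 := KS1 s hs.1.le hs.2.le
        have h3 : 0 < p * ((1 - s) / 2) * ‖S s‖^2 := by
          have := norm_pos_iff.2 (hSne s hs.1)
          have := hs.2
          have : 0 < 1 - s := by linarith
          positivity
        have h4 : 0 < ‖g s‖^2 * KK ζ S S1 s := by
          have := norm_pos_iff.2 (hg.ne hν ng hs.1.le)
          have : 0 < KK ζ S S1 s := by linarith
          positivity
        linarith
    have := hm (Set.left_mem_Icc.2 zero_le_one) (Set.right_mem_Icc.2 zero_le_one) one_pos
    simpa [hA, s0, s1, g0] using this
  have hAle : ∀ r, 1 ≤ r → ‖A r‖ ≤ ‖A 1‖ := by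
    intro r hr
    have := mono_Icc (f := fun s => -‖A s‖^2) hr (fun s _ _ => (hA2 s).neg) (fun s h1 _ => by
      have := hAneg s (by linarith); linarith)
    have : ‖A r‖^2 ≤ ‖A 1‖^2 := by linarith
    exact le_of_sq_le_sq this (norm_nonneg _)
  set a := ‖A 1‖ with ha
  have ha0 : 0 ≤ a := norm_nonneg _
  have ha1 : a < 1 := by nlinarith
  obtain ⟨C, r0, hC, hOm⟩ := hf.om hg hμ hν nf ng
  set D := C * (‖μ‖ / (-μ.im)) with hD
  have hlim : Tendsto (fun r => D / r) atTop (𝓝 0) := Tendsto.div_atTop tendsto_const_nhds tendsto_id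
  refine ⟨2 * a / (1 + a), by positivity, by rw [div_lt_one (by linarith)]; linarith, ?_⟩
  filter_upwards [eventually_ge_atTop r0, eventually_ge_atTop (rB μ), hlim.eventually_le_const (show 0 < (1 - a) / 2 by linarith)] with r hr0 hrB hrD
  have hr2 := (rB_ge μ).trans hrB
  have hfn := hf.ne hμ nf (show 0 ≤ r by linarith)
  have hfp := norm_pos_iff.2 hfn
  have hM := le_MM (show 1 ≤ r by linarith)
  have hM0 : 0 < MM r := by linarith
  have hW : S r * f1 r - S1 r * f r = -1 := by rw [wr_const hS hf.rs, s0, s1, f0]; ring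
  have eA : g r / f r = - A r + S r * (f r * g1 r - f1 r * g r) / f r := by
    rw [hA]; field_simp
    linear_combination (g r) * hW
  have hSf := Su_bound hS hμ s0 s1 hf hrB
  rw [f0, norm_one, mul_one] at hSf
  set x := ‖g r / f r‖ with hx
  have hx0 : 0 ≤ x := norm_nonneg _
  have hgx : ‖g r‖ = x * ‖f r‖ := by rw [hx, norm_div]; field_simp
  have b1 : ‖S r * (f r * g1 r - f1 r * g r) / f r‖ ≤ D / r * x := by
    rw [norm_div, norm_mul, div_le_iff₀ hfp]
    have h1 := hOm r hr0
    rw [hgx] at h1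
    have h2 : ‖S r‖ * ‖f r‖ ≤ ‖μ‖ / (-μ.im) := by
      rw [le_div_iff₀ (by linarith)]
      have h0 : 0 ≤ ‖S r‖ * ‖f r‖ := by positivity
      have : -μ.im * (‖S r‖ * ‖f r‖) * 1 ≤ -μ.im * (‖S r‖ * ‖f r‖) * MM r := by
        have : 0 ≤ -μ.im * (‖S r‖ * ‖f r‖) := mul_nonneg (by linarith) h0
        gcongr; linarith
      linarith
    calc _ ≤ ‖S r‖ * (C / MM r * (‖f r‖ * (x * ‖f r‖))) := by gcongr
      _ = C / MM r * (‖S r‖ * ‖f r‖) * x * ‖f r‖ := by ring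
      _ ≤ C / r * (‖μ‖ / (-μ.im)) * x * ‖f r‖ := by gcongr
      _ = _ := by rw [hD]; ring
  have b2 : x ≤ a + D / r * x := by
    calc x = ‖- A r + S r * (f r * g1 r - f1 r * g r) / f r‖ := by rw [hx, eA]
      _ ≤ ‖- A r‖ + ‖S r * (f r * g1 r - f1 r * g r) / f r‖ := norm_add_le _ _
      _ ≤ _ := by rw [norm_neg]; exact add_le_add (hAle r (by linarith)) b1
  rw [le_div_iff₀ (by linarith)]
  have := mul_le_mul_of_nonneg_right hrD hx0
  linarith
end

section
open ComplexConjugate Filter Topology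

noncomputable def pt (ρ α : ℝ) : ℂ := ⟨ρ * Real.cos α, - (ρ * Real.sin α)⟩

lemma pt_norm {ρ : ℝ} (hρ : 0 ≤ ρ) (α : ℝ) : ‖pt ρ α‖ = ρ := by
  rw [Complex.norm_eq_sqrt_sq_add_sq]
  simp only [pt]
  rw [show (ρ * Real.cos α)^2 + (-(ρ * Real.sin α))^2 = ρ^2 * (Real.sin α ^ 2 + Real.cos α ^ 2) by ring, Real.sin_sq_add_cos_sq, mul_one, Real.sqrt_sq hρ]

lemma exists_pt {μ : ℂ} (hμ : μ.im < 0) : ∃ α, 0 < α ∧ α < Real.pi ∧ μ = pt ‖μ‖ α := by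
  refine ⟨-μ.arg, ?_, ?_, ?_⟩
  · have := Complex.arg_neg_iff.2 hμ; linarith
  · have := Complex.neg_pi_lt_arg μ; linarith
  · unfold pt
    apply Complex.ext
    · simp [Complex.norm_mul_cos_arg]
    · simp [Complex.norm_mul_sin_arg]

lemma pt_step {ρ α h σ : ℝ} (hρ : 0 < ρ) (hσ : 0 < σ) (hh : 0 < h) (hh1 : h ≤ Real.pi) (hs : ρ * h ≤ σ / 4) (hm : σ ≤ Real.sin (α + h/2)) :
    (pt ρ (α + h)).re < (pt ρ α).re ∧ ‖pt ρ α - pt ρ (α + h)‖^2 ≤ (pt ρ α - pt ρ (α + h)).re / 2 := by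
  have e : Real.cos α - Real.cos (α + h) = 2 * Real.sin (α + h/2) * Real.sin (h/2) := by
    rw [Real.cos_sub_cos]
    rw [show (α + (α + h))/2 = α + h/2 by ring, show (α - (α+h))/2 = -(h/2) by ring, Real.sin_neg]; ring
  have e2 : ‖pt ρ α - pt ρ (α + h)‖^2 = 4 * ρ^2 * Real.sin (h/2)^2 := by
    rw [Complex.sq_norm, Complex.normSq_apply]
    simp only [pt, Complex.sub_re, Complex.sub_im]
    have s1 := Real.sin_sq_add_cos_sq α
    have s2 := Real.sin_sq_add_cos_sq (α + h)
    have c1 : Real.cos h = Real.cos (α + h) * Real.cos α + Real.sin (α + h) * Real.sin α := by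
      rw [← Real.cos_sub]; congr 1; ring
    have c2 : Real.cos h = 1 - 2 * Real.sin (h/2)^2 := by
      have := Real.cos_two_mul (h/2)
      rw [show 2 * (h/2) = h by ring] at this
      have := Real.sin_sq_add_cos_sq (h/2)
      linarith
    rw [c2] at c1
    linear_combination ρ^2 * s1 + ρ^2 * s2 + 2 * ρ^2 * c1
  have hs0 : 0 < Real.sin (h/2) := Real.sin_pos_of_pos_of_lt_pi (by linarith) (by linarith)
  have hs1 : Real.sin (h/2) ≤ h/2 := Real.sin_le (by linarith)
  have e3 : (pt ρ α - pt ρ (α + h)).re = ρ * (2 * Real.sin (α + h/2) * Real.sin (h/2)) := by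
    rw [← e]; simp only [pt, Complex.sub_re]; ring
  constructor
  · have : 0 < (pt ρ α - pt ρ (α + h)).re := by
      rw [e3]
      have : 0 < Real.sin (α + h/2) := by linarith
      positivity
    rw [Complex.sub_re] at this; linarith
  · rw [e2, e3]
    have h1 : ρ * Real.sin (h/2) ≤ Real.sin (α + h/2) / 4 := by nlinarith
    have h2 := mul_le_mul_of_nonneg_left h1 (show 0 ≤ ρ * Real.sin (h/2) by positivity)
    nlinarith

lemma chain_aux {ρ σ α h : ℝ} (hρ : 0 < ρ) (hσ : 0 < σ) (hh : 0 < h) (hh1 : h ≤ Real.pi) (hs : ρ * h ≤ σ / 4) 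
    {f f1 : ℝ → ℂ} (hf : Dec (pt ρ α) f f1) (f0 : f 0 = 1) (n : ℕ) :
    ∀ {g g1 : ℝ → ℂ}, (∀ x, α ≤ x → x ≤ α + (n+1) * h → σ ≤ Real.sin x) → Dec (pt ρ (α + (n+1) * h)) g g1 → g 0 = 1 →
    ∃ δ : ℝ, 0 ≤ δ ∧ δ < 1 ∧ ∀ᶠ r in atTop, ‖g r / f r‖ ≤ δ := by
  have him : ∀ x, σ ≤ Real.sin x → (pt ρ x).im < 0 := by
    intro x hx
    simp only [pt]
    have : 0 < Real.sin x := by linarith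
    have : 0 < ρ * Real.sin x := by positivity
    linarith
  induction n with
  | zero =>
    intro g g1 hsin hg g0
    simp only [Nat.cast_zero, zero_add, one_mul] at hsin hg
    obtain ⟨a1, a2⟩ := pt_step (α := α) hρ hσ hh hh1 hs (hsin _ (by linarith) (by linarith))
    exact onestep (him _ (hsin _ le_rfl (by linarith))) (him _ (hsin _ (by linarith) le_rfl)) (by rw [pt_norm hρ.le, pt_norm hρ.le]) a1 a2 hf hg f0 g0
  | succ n ih =>
    intro g g1 hsin hg g0
    push_cast at hsin hg
    set β := α + (n+1) * h with hβ
    have hn : (0:ℝ) ≤ n := by positivity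
    have hβ0 : α ≤ β := by rw [hβ]; nlinarith
    have e : α + ((n:ℝ)+1+1) * h = β + h := by rw [hβ]; ring
    rw [e] at hsin hg
    have iβ := him _ (hsin β hβ0 (by linarith))
    obtain ⟨w, w1, hw, w0⟩ := weyl iβ
    obtain ⟨δ1, d1, d2, d3⟩ := ih (fun x h1 h2 => hsin x h1 (by linarith)) hw w0
    obtain ⟨a1, a2⟩ := pt_step (α := β) hρ hσ hh hh1 hs (hsin _ (by linarith) (by linarith))
    obtain ⟨δ2, d4, d5, d6⟩ := onestep iβ (him _ (hsin _ (by linarith) le_rfl)) (by rw [pt_norm hρ.le, pt_norm hρ.le]) a1 a2 hw hg w0 g0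
    refine ⟨δ2 * δ1, by positivity, by nlinarith, ?_⟩
    filter_upwards [d3, d6, eventually_ge_atTop 0] with r h1 h2 h3
    have hwn := hw.ne iβ (by simp [w0]) h3
    have : g r / f r = (g r / w r) * (w r / f r) := by field_simp
    rw [this, norm_mul]
    gcongr

lemma chain {μ ν : ℂ} (hμ : μ.im < 0) (hν : ν.im < 0) (hn : ‖μ‖ = ‖ν‖) (hre : ν.re < μ.re)
    {f f1 g g1 : ℝ → ℂ} (hf : Dec μ f f1) (hg : Dec ν g g1) (f0 : f 0 = 1) (g0 : g 0 = 1) :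
    ∃ δ : ℝ, 0 ≤ δ ∧ δ < 1 ∧ ∀ᶠ r in atTop, ‖g r / f r‖ ≤ δ := by
  obtain ⟨α, a0, a1, ha⟩ := exists_pt hμ
  obtain ⟨β, b0, b1, hb⟩ := exists_pt hν
  rw [← hn] at hb
  set ρ := ‖μ‖ with hρ
  have hρ0 : 0 < ρ := norm_pos_iff.2 (by rintro rfl; simp at hμ)
  clear_value ρ
  have hαβ : α < β := by
    by_contra! hcon
    have := Real.cos_le_cos_of_nonneg_of_le_pi b0.le a1.le hcon
    rw [ha, hb] at hre
    simp only [pt] at hre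
    nlinarith
  obtain ⟨x0, hx0, hmin⟩ := (isCompact_Icc (a := α) (b := β)).exists_isMinOn ⟨α, le_rfl, hαβ.le⟩ Real.continuous_sin.continuousOn
  set σ := Real.sin x0 with hσ
  have hσ0 : 0 < σ := Real.sin_pos_of_pos_of_lt_pi (by linarith [hx0.1]) (by linarith [hx0.2])
  obtain ⟨n, hN⟩ := exists_nat_ge (4 * ρ * (β - α) / σ)
  have hn0 : (0:ℝ) < (n:ℝ) + 1 := by positivity
  set h := (β - α) / (n + 1) with hh
  have eβ : α + (n + 1) * h = β := by rw [hh]; field_simp; ring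
  have hh0 : 0 < h := div_pos (by linarith) hn0
  have hn1 : (0:ℝ) ≤ n := by positivity
  refine chain_aux (α := α) (h := h) hρ0 hσ0 hh0 ?_ ?_ (ha ▸ hf) f0 n ?_ ?_ g0 (g1 := g1)
  · nlinarith
  · rw [div_le_iff₀ hσ0] at hN
    rw [hh, mul_div_assoc', div_le_iff₀ hn0]
    nlinarith
  · rw [eβ]; exact fun x h1 h2 => hmin ⟨h1, h2⟩
  · rw [eβ, ← hb]; exact hg
end

section
open ComplexConjugate Filter Topology

lemma n0_of_Y {u u1 : ℝ → ℂ} (hY : Tendsto (fun s => ‖u1 s‖ ^ 2 + s ^ 3 * ‖u s‖ ^ 2) atTop (𝓝 0)) : Tendsto u atTop (𝓝 0) ∧ Tendsto u1 atTop (𝓝 0) := by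
  have aux : ∀ w : ℝ → ℂ, (∀ s, 1 ≤ s → ‖w s‖^2 ≤ ‖u1 s‖ ^ 2 + s ^ 3 * ‖u s‖ ^ 2) → Tendsto w atTop (𝓝 0) := by
    intro w hw
    rw [tendsto_zero_iff_norm_tendsto_zero]
    have h1 : Tendsto (fun s => ‖w s‖^2) atTop (𝓝 0) := by
      refine squeeze_zero' (Eventually.of_forall fun s => by positivity) ?_ hY
      filter_upwards [eventually_ge_atTop 1] with s hs using hw s hs
    have := h1.sqrt
    simpa using this
  refine ⟨aux u fun s hs => ?_, aux u1 fun s hs => ?_⟩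
  · have : 1 ≤ s^3 := one_le_pow₀ hs
    nlinarith [sq_nonneg ‖u s‖, sq_nonneg ‖u1 s‖]
  · have : 0 ≤ s := by linarith
    have : 0 ≤ s ^ 3 * ‖u s‖ ^ 2 := by positivity
    linarith

lemma KK_lim {ζ : ℂ} {u u1 : ℝ → ℂ} (h : Tendsto u atTop (𝓝 0)) (h' : Tendsto u1 atTop (𝓝 0)) : Tendsto (KK ζ u u1) atTop (𝓝 0) := by
  have h1 := (Complex.continuous_conj.tendsto _).comp h
  have h2 := (h1.mul h').const_mul ζ
  have h3 := (Complex.continuous_re.tendsto _).comp h2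
  rw [map_zero, zero_mul, mul_zero, Complex.zero_re] at h3
  exact h3

structure Eig (a : ℂ) (f g : ℂ → ℂ) : Prop where
  sol : ESol a f g
  nt : ¬ (f 0 = 0 ∧ g 0 = 0)
  l2 : L2 (fun s : ℝ => f (s * Complex.I))

lemma L2.neg_conj {v : ℝ → ℂ} (h : L2 v) : L2 (fun s => conj (v (-s))) := by
  obtain ⟨J, B, hJ, hB⟩ := h
  refine ⟨fun s => - J (-s), B, fun s => ?_, fun s => by rw [abs_neg]; exact hB _⟩
  have := ((hJ (-s)).comp s (hasDerivAt_neg s)).neg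
  have e : ‖conj (v (-s))‖ ^ 2 = -(‖v (-s)‖ ^ 2 * -1) := by rw [RCLike.norm_conj]; ring
  rw [e]; exact this

lemma conj_sI (s : ℝ) : conj ((s:ℂ) * Complex.I) = ((-s:ℝ):ℂ) * Complex.I := by simp

namespace Eig
variable {a : ℂ} {f g : ℂ → ℂ}

lemma cj (h : Eig a f g) : Eig (conj a) (fun z => conj (f (conj z))) (fun z => conj (g (conj z))) where
  sol := h.sol.conj
  nt := by
    have := h.nt
    simpa using this
  l2 := by
    have := h.l2.neg_conj
    simp only [conj_sI]
    exact this

lemma axis (h : Eig a f g) : Tendsto (fun s : ℝ => f (s * Complex.I)) atTop (𝓝 0) ∧ Tendsto (fun s : ℝ => g (s * Complex.I)) atTop (𝓝 0) := by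
  obtain ⟨A, _, hA⟩ := RP.start h.sol h.l2
  have := RP.tendsto (by norm_num : (0:ℝ) < 1/5) hA
  unfold YY at this
  rw [ph_pi2] at this
  exact n0_of_Y this

lemma naxis (h : Eig a f g) : Tendsto (fun s : ℝ => f (s * -Complex.I)) atTop (𝓝 0) ∧ Tendsto (fun s : ℝ => g (s * -Complex.I)) atTop (𝓝 0) := by
  have := h.cj.axis
  simp only [conj_sI] at this
  obtain ⟨h1, h2⟩ := this
  have h1 := (Complex.continuous_conj.tendsto _).comp h1
  have h2 := (Complex.continuous_conj.tendsto _).comp h2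
  simp only [Function.comp_def, Complex.conj_conj, map_zero] at h1 h2
  have e : ∀ s : ℝ, (s:ℂ) * -Complex.I = ((-s:ℝ):ℂ) * Complex.I := fun s => by push_cast; ring
  simp only [e]
  exact ⟨h1, h2⟩

lemma ray0 (h : Eig a f g) : Tendsto (fun s : ℝ => f (s * tt)) atTop (𝓝 0) ∧ Tendsto (fun s : ℝ => g (s * tt)) atTop (𝓝 0) :=
  n0_of_Y (rot_Y h.sol h.l2)

end Eig

lemma ray_RS {a : ℂ} {f g : ℂ → ℂ} (h : ESol a f g) : RS (-tt^2 * a) (fun r => f (r * tt)) (fun r => tt * g (r * tt)) := by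
  intro s
  constructor
  · rw [one_mul]; exact ray_deriv tt s (h _).1
  · have := (ray_deriv tt s (h (s * tt)).2).const_mul tt
    have e : 1 * (((s:ℂ)^3 - -tt^2 * a) * f (s * tt)) = tt * (tt * (((s * tt)^3 + a) * f (s * tt))) := by
      linear_combination (- (s:ℂ)^3 * f (s * tt)) * tt5
    rw [e]; exact this

lemma Eig.dec {a : ℂ} {f g : ℂ → ℂ} (h : Eig a f g) (hm : (-tt^2 * a).im < 0) :
    Dec (-tt^2 * a) (fun r => f (r * tt)) (fun r => tt * g (r * tt)) := by
  refine (ray_RS h.sol).dec hm ?_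
  have := rot_Y h.sol h.l2
  simpa [tt_norm] using this

/-- case A -/
lemma Eig.caseA {a : ℂ} {f g : ℂ → ℂ} (h : Eig a f g) (ha : 0 ≤ a.im) : (-tt^2 * a).im < 0 := by
  by_contra! hcon
  have hb := tt_bd
  set μ := -tt^2 * a with hμ
  have hRS := ray_RS h.sol
  -- along the ray
  have k1 : 0 ≤ KK (-Complex.I) (fun r => f (r * tt)) (fun r => tt * g (r * tt)) 0 := by
    have hlim : Tendsto (KK (-Complex.I) (fun r => f (r * tt)) (fun r => tt * g (r * tt))) atTop (𝓝 0) :=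
      KK_lim h.ray0.1 (by simpa using h.ray0.2.const_mul tt)
    refine le_of_tendsto hlim ?_
    filter_upwards [eventually_ge_atTop 0] with b hb
    have := mono_Icc (f := fun s => - KK (-Complex.I) (fun r => f (r * tt)) (fun r => tt * g (r * tt)) s) hb (fun s _ _ => (hRS.KKd (-Complex.I) s).neg) (fun s h1 _ => by
      have e1 : (-Complex.I).re = 0 := by simp
      have e2 : (-Complex.I * μ).re = μ.im := by simp
      rw [e1, e2]
      have := mul_nonneg hcon (sq_nonneg ‖f (s * tt)‖)
      nlinarith)
    linarith
  have hP := h.sol.ray (-Complex.I)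
  have hd : ∀ s : ℝ, HasDerivAt (KK (-Complex.I * tt) (fun s => f (s * -Complex.I)) (fun s => g (s * -Complex.I)))
      (tt.re * ‖g (s * -Complex.I)‖^2 + (tt.im * s^3 - (tt * a).re) * ‖f (s * -Complex.I)‖^2) s := by
    intro s
    have := hP.hasDerivAt_KK (-Complex.I * tt) s
    convert this using 3
    · simp
    · have e : -Complex.I * tt * (-Complex.I * ((s * -Complex.I)^3 + a)) = ((s^3:ℝ):ℂ) * (-Complex.I * tt) - tt * a := by
        push_cast
        have i2 := Complex.I_sq
        have i4 : Complex.I^5 = Complex.I := by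
          rw [show Complex.I^5 = (Complex.I^2)^2 * Complex.I by ring, i2]; ring
        linear_combination (tt * a) * i2 - tt * s^3 * i4
      rw [e, Complex.sub_re, Complex.re_ofReal_mul]
      simp [Complex.mul_re]; ring
  have hta : (tt * a).re ≤ 0 := by
    have e : 2 * tt.im * (tt * a).re = - μ.im - (tt.re^2 + tt.im^2) * a.im := by
      rw [hμ]; simp [pow_two, Complex.mul_re, Complex.mul_im]; ring
    have : 2 * tt.im * (tt * a).re ≤ 0 := by
      rw [e]
      have : 0 ≤ (tt.re^2 + tt.im^2) * a.im := by positivity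
      linarith
    by_contra! hc
    have : 0 < 2 * tt.im * (tt * a).re := mul_pos (by linarith) hc
    linarith
  have k2 : KK (-Complex.I * tt) (fun s => f (s * -Complex.I)) (fun s => g (s * -Complex.I)) 1 ≤ 0 := by
    refine ge_of_tendsto (KK_lim (ζ := -Complex.I * tt) h.naxis.1 h.naxis.2) ?_
    filter_upwards [eventually_ge_atTop 1] with b hb'
    refine mono_Icc hb' (fun s _ _ => hd s) (fun s h1 _ => ?_)
    have h3 : 0 ≤ tt.im * s^3 := mul_nonneg (by linarith) (by positivity)
    have h4 : 0 ≤ tt.im * s^3 - (tt * a).re := by linarith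
    have h5 : 0 ≤ tt.re := by linarith
    positivity
  have k3 : KK (-Complex.I * tt) (fun s => f (s * -Complex.I)) (fun s => g (s * -Complex.I)) 0 <
      KK (-Complex.I * tt) (fun s => f (s * -Complex.I)) (fun s => g (s * -Complex.I)) 1 := by
    have hm : StrictMonoOn (KK (-Complex.I * tt) (fun s => f (s * -Complex.I)) (fun s => g (s * -Complex.I))) (Set.Icc 0 1) := by
      apply strictMonoOn_of_deriv_pos (convex_Icc 0 1)
      · exact fun s hs => (hd s).continuousAt.continuousWithinAt
      · rw [interior_Icc]
        intro s hs
        rw [(hd s).deriv]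
        have hs0 := hs.1
        have h5 : 0 < tt.re := by linarith
        have h3 : 0 < tt.im * s^3 := mul_pos (by linarith) (by positivity)
        have h4 : 0 < tt.im * s^3 - (tt * a).re := by linarith
        by_cases h1 : f (s * -Complex.I) = 0
        · have h2 : g (s * -Complex.I) ≠ 0 := fun h2 => h.sol.nontriv h.nt _ ⟨h1, h2⟩
          have := norm_pos_iff.2 h2
          positivity
        · have := norm_pos_iff.2 h1
          positivity
    exact hm (Set.left_mem_Icc.2 zero_le_one) (Set.right_mem_Icc.2 zero_le_one) one_pos
  have e : KK (-Complex.I) (fun r => f (r * tt)) (fun r => tt * g (r * tt)) 0 = KK (-Complex.I * tt) (fun s => f (s * -Complex.I)) (fun s => g (s * -Complex.I)) 0 := by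
    unfold KK
    congr 1
    simp only [Complex.ofReal_zero, zero_mul]; ring
  linarith

lemma Dec.smul {μ : ℂ} {u u1 : ℝ → ℂ} (h : Dec μ u u1) (m : ℂ) : Dec μ (fun s => m * u s) (fun s => m * u1 s) := by
  refine ⟨fun s => ⟨?_, ?_⟩, fun r hr => ?_⟩
  · rw [one_mul]; exact (h.rs.d0 s).const_mul m
  · have := (h.rs.d1 s).const_mul m
    rw [show 1 * (((s:ℂ)^3 - μ) * (m * u s)) = m * (((s:ℂ)^3 - μ) * u s) by ring]; exact this
  · have := h.K r hr
    unfold KM KK at *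
    rw [show -Complex.I * conj μ * (conj (m * u r) * (m * u1 r)) = (conj m * m) * (-Complex.I * conj μ * (conj (u r) * u1 r)) by rw [map_mul]; ring, conj_mul_re, Complex.re_ofReal_mul]
    nlinarith [sq_nonneg ‖m‖]

lemma sgnB {a : ℂ} (ha : 0 < a.im) (hμ : (-tt^2 * a).im < 0) : (-tt^2 * conj a).im < 0 ∧ (-tt^2 * conj a).re < (-tt^2 * a).re := by
  have hb := tt_bd
  have hx : (tt^2).re < 0 := by
    simp [pow_two, Complex.mul_re]; nlinarith
  have hy : 0 < (tt^2).im := by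
    simp [pow_two, Complex.mul_im]; nlinarith
  have e1 : ∀ b : ℂ, (-tt^2 * b).im = -((tt^2).re * b.im + (tt^2).im * b.re) := by
    intro b; rw [neg_mul, Complex.neg_im, Complex.mul_im]
  have e2 : ∀ b : ℂ, (-tt^2 * b).re = -((tt^2).re * b.re - (tt^2).im * b.im) := by
    intro b; rw [neg_mul, Complex.neg_re, Complex.mul_re]
  constructor
  · rw [e1] at hμ ⊢
    rw [Complex.conj_re, Complex.conj_im]
    nlinarith
  · rw [e2, e2, Complex.conj_re, Complex.conj_im]
    nlinarith

lemma Eig.f0 {a : ℂ} {f g : ℂ → ℂ} (h : Eig a f g) (hμ : (-tt^2 * a).im < 0) : f 0 ≠ 0 := by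
  have n1 : ¬ (f ((0:ℝ) * tt) = 0 ∧ tt * g ((0:ℝ) * tt) = 0) := by
    have htt : tt ≠ 0 := fun h0 => by have := tt_norm; rw [h0] at this; simp at this
    have := h.nt
    simpa [htt] using this
  have := (h.dec hμ).ne hμ n1 le_rfl
  simpa using this

lemma Eig.caseB' {a b : ℂ} {f g F G : ℂ → ℂ} (h : Eig a f g) (H : Eig b F G) (hμ : (-tt^2 * a).im < 0) (hν : (-tt^2 * b).im < 0)
    (hn : ‖-tt^2 * a‖ = ‖-tt^2 * b‖) (hre : (-tt^2 * b).re < (-tt^2 * a).re) (h0 : ‖F 0‖ = ‖f 0‖)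
    (hx : ∀ x : ℝ, ‖F x‖ = ‖f x‖) : False := by
  have d1 := h.dec hμ
  have d2 := H.dec hν
  have f0 := h.f0 hμ
  have F0 := H.f0 hν
  obtain ⟨δ, hδ0, hδ1, hδ⟩ := chain hμ hν hn hre (d1.smul (f 0)⁻¹) (d2.smul (F 0)⁻¹) (by simp [f0]) (by simp [F0])
  have hκ : ∀ z, HasDerivAt (fun z => f z * G z - g z * F z) ((b - a) * (f z * F z)) z := by
    intro z
    have := ((h.sol z).1.mul (H.sol z).2).sub ((h.sol z).2.mul (H.sol z).1)
    have e : ((b - a) * (f z * F z)) = g z * G z + f z * ((z^3 + b) * F z) - ((z^3 + a) * f z * F z + g z * G z) := by ring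
    rw [e]; exact this
  have hO : Tendsto (fun s : ℝ => (fun z => f z * G z - g z * F z) (s * tt)) atTop (𝓝 0) := by
    have := (h.ray0.1.mul H.ray0.2).sub (h.ray0.2.mul H.ray0.1)
    simpa using this
  obtain ⟨C, r1, hC, hr1, hp⟩ := poly h.sol H.sol h.nt H.nt (rot_K h.sol h.l2) (rot_K H.sol H.l2) hκ hO
  refine T2_lim (f := f) (g := g) (p := F) (q := G) (fun z => (h.sol z).1) (fun z => (H.sol z).1) (fun z => rfl) hC hr1 hp hx hδ0 hδ1 ?_
  filter_upwards [hδ] with r hr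
  have : 0 < ‖f 0‖ := norm_pos_iff.2 f0
  rw [norm_div, norm_mul, norm_mul, norm_inv, norm_inv, h0, mul_div_mul_left _ _ (by positivity), ← norm_div] at hr
  exact hr

lemma Eig.caseB {a : ℂ} {f g : ℂ → ℂ} (h : Eig a f g) (ha : 0 < a.im) : False := by
  have hμ := h.caseA ha.le
  obtain ⟨hν, hre⟩ := sgnB ha hμ
  have hn : ‖-tt^2 * a‖ = ‖-tt^2 * conj a‖ := by rw [norm_mul, norm_mul, RCLike.norm_conj]
  refine Eig.caseB' h h.cj hμ hν hn hre ?_ ?_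
  · show ‖conj (f (conj 0))‖ = _
    rw [RCLike.norm_conj, map_zero]
  · intro x
    show ‖conj (f (conj (x:ℂ)))‖ = _
    rw [RCLike.norm_conj, Complex.conj_ofReal]

theorem Eig.real {a : ℂ} {f g : ℂ → ℂ} (h : Eig a f g) : a.im = 0 := by
  rcases lt_trichotomy a.im 0 with h1 | h1 | h1
  · exact (h.cj.caseB (by simpa using h1)).elim
  · exact h1
  · exact (h.caseB h1).elim
end

section
open ComplexConjugate Filter Topology

def ISol (a : ℂ) (f p q : ℂ → ℂ) : Prop :=
  ∀ z, HasDerivAt p (q z) z ∧ HasDerivAt q ((z^3 + a) * p z + f z) z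

/-- the ratio is asymptotically real on the ray -/
lemma core1 {a : ℂ} {f g p q : ℂ → ℂ} (h : Eig a f g) (hp : ISol a f p q) (hL : L2 (fun s : ℝ => p (s * Complex.I)))
    (fr : ∀ x : ℝ, (f x).im = 0) (pr : ∀ x : ℝ, (p x).im = 0) :
    ∃ C r1, 0 ≤ C ∧ 1 ≤ r1 ∧ ∀ r : ℝ, r1 ≤ r → ‖f (r * tt) * q (r * tt) - g (r * tt) * p (r * tt)‖ ≤ C / MM r * (‖f (r * tt)‖ * ‖f (r * tt)‖) ∧
      |(p (r * tt) / f (r * tt)).im| ≤ 6 * C / √r := by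
  have hOm : ∀ z, HasDerivAt (fun z => f z * q z - g z * p z) (f z * f z) z := by
    intro z
    have := ((h.sol z).1.mul (hp z).2).sub ((h.sol z).2.mul (hp z).1)
    have e : f z * f z = g z * q z + f z * ((z^3 + a) * p z + f z) - ((z^3 + a) * f z * p z + g z * q z) := by ring
    rw [e]; exact this
  have hO : Tendsto (fun s : ℝ => (fun z => f z * q z - g z * p z) (s * Complex.I)) atTop (𝓝 0) := by
    have t1 := h.axis.1.norm
    have t2 := h.axis.2.norm
    rw [norm_zero] at t1 t2
    exact om_tendsto (T := Complex.I) (by simp) (v := fun s : ℝ => f (s * Complex.I)) (v1 := fun s : ℝ => g (s * Complex.I))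
      (p := fun s : ℝ => p (s * Complex.I)) (p1 := fun s : ℝ => q (s * Complex.I))
      (fun s => ray_deriv _ s (h.sol _).1) (fun s => ray_deriv _ s (hp _).1) hL (fun s => ray_deriv _ s (hOm _)) t1 t2
  have hO2 := rot_om h.sol h.l2 hOm hO
  obtain ⟨C, r1, hC, hr1, hpo⟩ := poly h.sol h.sol h.nt h.nt (rot_K h.sol h.l2) (rot_K h.sol h.l2) (κ := 1)
    (fun z => by rw [one_mul]; exact hOm z) hO2
  refine ⟨C, r1, hC, hr1, fun r hr => ?_⟩
  obtain ⟨g1, g2, g3⟩ := hpo r hr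
  refine ⟨g1.2.2, ?_⟩
  have := T1 (fun z => (h.sol z).1) (fun z => (hp z).1) (fun z => rfl) hC (hr1.trans hr) g2 g3
  refine le_trans ?_ this
  refine le_trans (le_of_eq ?_) (Complex.abs_im_le_norm _)
  rw [Complex.sub_im, Complex.div_im (p ((3 * (tt.re * r) : ℝ))), fr, pr]
  simp

lemma algV {S S1 u g p q t F : ℂ} (hu : u ≠ 0) (hW : S * (t * g) - S1 * u = - F) :
    S * (t * q) - S1 * p = S * (t * (u * q - g * p)) / u - F * (p / u) := by
  field_simp
  linear_combination p * hW

lemma core2 {a : ℂ} {f g p q : ℂ → ℂ} (h : Eig a f g) (hp : ISol a f p q) (hL : L2 (fun s : ℝ => p (s * Complex.I)))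
    (fr : ∀ x : ℝ, (f x).im = 0) (pr : ∀ x : ℝ, (p x).im = 0) : False := by
  have hra := h.real
  have hμ := h.caseA hra.ge
  have f0 := h.f0 hμ
  have hdec := h.dec hμ
  obtain ⟨C, r1, hC, hr1, hbd⟩ := core1 h hp hL fr pr
  set μ := -tt^2 * a with hμd
  obtain ⟨S, S1, hS, S0, S10⟩ := exists_RS μ 0 1
  have n1 : ¬ (f ((0:ℝ) * tt) = 0 ∧ tt * g ((0:ℝ) * tt) = 0) := by
    simp [f0]
  have fi : (f 0).im = 0 := by simpa using fr 0
  have pi : (p 0).im = 0 := by simpa using pr 0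
  have ef : f 0 = ((f 0).re : ℂ) := by apply Complex.ext <;> simp [fi]
  have ea : a = (a.re : ℂ) := by apply Complex.ext <;> simp [hra]
  have hW : ∀ r : ℝ, S r * (tt * g (r * tt)) - S1 r * f (r * tt) = - f 0 := by
    intro r
    have := wr_const hS hdec.rs r
    rw [this, S0, S10]; simp
  have hVd : ∀ r : ℝ, HasDerivAt (fun r : ℝ => S r * (tt * q (r * tt)) - S1 r * p (r * tt)) (tt^2 * (S r * f (r * tt))) r := by
    intro r
    have k1 := (ray_deriv tt r (hp _).2).const_mul tt
    have k2 := ray_deriv tt r (hp _).1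
    have := ((hS.d0 r).mul k1).sub ((hS.d1 r).mul k2)
    have e : tt^2 * (S r * f (r * tt)) = S1 r * (tt * q (r * tt)) + S r * (tt * (tt * (((r * tt)^3 + a) * p (r * tt) + f (r * tt)))) - (((r:ℂ)^3 - μ) * S r * p (r * tt) + S1 r * (tt * q (r * tt))) := by
      rw [hμd]
      linear_combination (- (r:ℂ)^3 * S r * p (r * tt)) * tt5
    rw [e]; exact this
  have hsg : ∀ r : ℝ, 0 < r → 0 < a.re * (f 0).re * (tt^2 * (S r * f (r * tt))).im := by
    intro r hr
    have e := wr_id (-Complex.I * conj μ) (S r) (S1 r) (f (r * tt)) (tt * g (r * tt))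
    rw [hW] at e
    have k1 := hdec.Kneg hμ n1 hr.le
    have k2 := S_K_pos hS hμ S0 S10 hr
    unfold KM KK at k1 k2
    have k3 : 0 < ‖f (r * tt)‖ := norm_pos_iff.2 (hdec.ne hμ n1 hr.le)
    have e2 : -Complex.I * conj μ * (conj (S r * f (r * tt)) * -f 0) = ((a.re * (f 0).re : ℝ) : ℂ) * (-Complex.I * conj (tt^2 * (S r * f (r * tt)))) := by
      rw [ef, hμd, ea]
      simp only [map_mul, map_neg, Complex.conj_ofReal, Complex.ofReal_re]
      push_cast; ring
    rw [e2, Complex.re_ofReal_mul] at e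
    have e3 : ∀ x : ℂ, (-Complex.I * conj x).re = - x.im := by intro x; simp
    rw [e3] at e
    have k4 : 0 < ‖f (r * tt)‖^2 * (-Complex.I * conj μ * (conj (S r) * S1 r)).re := mul_pos (by positivity) k2
    have k5 : 0 ≤ ‖S r‖^2 * -(-Complex.I * conj μ * (conj (f (r * tt)) * (tt * g (r * tt)))).re := mul_nonneg (by positivity) (by linarith)
    linarith
  -- the monotone function
  have hHd : ∀ r : ℝ, HasDerivAt (fun r : ℝ => a.re * (f 0).re * (S r * (tt * q (r * tt)) - S1 r * p (r * tt)).im) (a.re * (f 0).re * (tt^2 * (S r * f (r * tt))).im) r :=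
    fun r => ((hVd r).im').const_mul _
  set H := fun r : ℝ => a.re * (f 0).re * (S r * (tt * q (r * tt)) - S1 r * p (r * tt)).im with hH
  have H0 : H 0 = 0 := by simp [hH, S0, S10, pi]
  have H1 : 0 < H 1 := by
    have hm : StrictMonoOn H (Set.Icc 0 1) := by
      apply strictMonoOn_of_deriv_pos (convex_Icc 0 1)
      · exact fun s hs => (hHd s).continuousAt.continuousWithinAt
      · rw [interior_Icc]
        intro s hs
        rw [(hHd s).deriv]
        exact hsg s hs.1
    have := hm (Set.left_mem_Icc.2 zero_le_one) (Set.right_mem_Icc.2 zero_le_one) one_pos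
    rwa [H0] at this
  have Hge : ∀ r, 1 ≤ r → H 1 ≤ H r := fun r hr =>
    mono_Icc hr (fun s _ _ => hHd s) (fun s hs _ => (hsg s (by linarith)).le)
  -- the limit
  set D := ‖μ‖ * ‖f 0‖ / (-μ.im) with hD
  have hD0 : 0 ≤ D := div_nonneg (by positivity) (by linarith)
  have hVb : ∀ r, max (rB μ) r1 ≤ r → |H r| ≤ |a.re * (f 0).re| * (C * D / r + ‖f 0‖ * (6 * C / √r)) := by
    intro r hr
    have hr1' := (le_max_right _ _).trans hr
    have hr2 := (le_max_left _ _).trans hr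
    have hr0 : 1 ≤ r := hr1.trans hr1'
    obtain ⟨b1, b2⟩ := hbd r hr1'
    have hsu := Su_bound hS hμ S0 S10 hdec hr2
    have une := hdec.ne hμ n1 (show 0 ≤ r by linarith)
    simp only [Complex.ofReal_zero, zero_mul] at hsu
    have eV : S r * (tt * q (r * tt)) - S1 r * p (r * tt) = S r * (tt * (f (r * tt) * q (r * tt) - g (r * tt) * p (r * tt))) / f (r * tt) - f 0 * (p (r * tt) / f (r * tt)) := by
      exact algV une (hW r)
    have hn : ‖S r * (tt * (f (r * tt) * q (r * tt) - g (r * tt) * p (r * tt))) / f (r * tt)‖ ≤ C * D / r := by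
      have up : 0 < ‖f (r * tt)‖ := norm_pos_iff.2 une
      rw [norm_div, norm_mul, norm_mul, tt_norm, one_mul, div_le_iff₀ up]
      have hMr := le_MM hr0
      have hM0 : 0 < MM r := by linarith
      have c1 : ‖S r‖ * ‖f (r * tt)‖ ≤ D := by
        rw [hD, le_div_iff₀ (by linarith)]
        have : -μ.im * 1 * (‖S r‖ * ‖f (r * tt)‖) ≤ -μ.im * MM r * (‖S r‖ * ‖f (r * tt)‖) := by
          have : 0 ≤ -μ.im := by linarith
          gcongr; linarith
        linarith
      have c2 : C / MM r ≤ C / r := by gcongr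
      calc _ ≤ ‖S r‖ * (C / MM r * (‖f (r * tt)‖ * ‖f (r * tt)‖)) := by gcongr
        _ = (C / MM r) * (‖S r‖ * ‖f (r * tt)‖) * ‖f (r * tt)‖ := by ring
        _ ≤ (C / r) * D * ‖f (r * tt)‖ := by gcongr
        _ = _ := by ring
    have hn2 := (Complex.abs_im_le_norm _).trans hn
    simp only [hH]
    rw [abs_mul, eV, Complex.sub_im]
    refine mul_le_mul_of_nonneg_left ?_ (abs_nonneg _)
    have e4 : |(f 0 * (p (r * tt) / f (r * tt))).im| ≤ ‖f 0‖ * (6 * C / √r) := by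
      rw [Complex.mul_im, fi, zero_mul, add_zero, abs_mul]
      gcongr
      exact Complex.abs_re_le_norm _
    exact (abs_sub _ _).trans (add_le_add hn2 e4)
  have hlim : Tendsto (fun r : ℝ => |a.re * (f 0).re| * (C * D / r + ‖f 0‖ * (6 * C / √r))) atTop (𝓝 0) := by
    have l1 : Tendsto (fun r => 6 * C / √r) atTop (𝓝 0) := Tendsto.div_atTop tendsto_const_nhds Real.tendsto_sqrt_atTop
    have l2 : Tendsto (fun r : ℝ => C * D / r) atTop (𝓝 0) := Tendsto.div_atTop tendsto_const_nhds tendsto_id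
    have := (l2.add (l1.const_mul ‖f 0‖)).const_mul |a.re * (f 0).re|
    simpa using this
  have := ge_of_tendsto hlim (b := H 1) (by
    filter_upwards [eventually_ge_atTop (max (rB μ) r1), eventually_ge_atTop 1] with r hr hr'
    exact (Hge r hr').trans ((le_abs_self _).trans (hVb r hr)))
  linarith

/-- symmetrization -/
noncomputable def sym (c : ℂ) (f : ℂ → ℂ) (z : ℂ) : ℂ := c * f z + conj (c * f (conj z))

lemma sym_real (c : ℂ) (f : ℂ → ℂ) (x : ℝ) : (sym c f x).im = 0 := by
  unfold sym
  rw [Complex.conj_ofReal, Complex.add_im, Complex.conj_im]; ring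

lemma HasDerivAt.cc {f : ℂ → ℂ} {f' z : ℂ} (h : HasDerivAt f f' (conj z)) : HasDerivAt (fun z => conj (f (conj z))) (conj f') z := by
  have := h.conj_conj
  simpa [Function.comp_def] using this

lemma sym_deriv (c : ℂ) {f g : ℂ → ℂ} (h : ∀ z, HasDerivAt f (g z) z) (z : ℂ) : HasDerivAt (sym c f) (sym c g z) z :=
  ((h z).const_mul c).add (((h (conj z)).const_mul c).cc)

lemma sym_L2 (c : ℂ) {f : ℂ → ℂ} (hf : Continuous f) (hi : Integrable (fun s : ℝ => ‖f (s * Complex.I)‖^2)) : L2 (fun s : ℝ => sym c f (s * Complex.I)) := by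
  have hc : Continuous (fun s : ℝ => sym c f (s * Complex.I)) := by
    unfold sym
    have := Complex.continuous_conj
    fun_prop
  refine L2_of_integrable hc ?_
  have hi2 : Integrable (fun s : ℝ => ‖f ((-s : ℝ) * Complex.I)‖^2) := hi.comp_neg
  refine Integrable.mono' ((hi.const_mul (2 * ‖c‖^2)).add (hi2.const_mul (2 * ‖c‖^2))) (hc.norm.pow 2).aestronglyMeasurable (Eventually.of_forall fun s => ?_)
  rw [Real.norm_eq_abs, abs_of_nonneg (by positivity)]
  unfold sym
  rw [conj_sI]
  have := norm_add_le (c * f (s * Complex.I)) (conj (c * f ((-s : ℝ) * Complex.I)))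
  rw [RCLike.norm_conj, norm_mul, norm_mul] at this
  have h2 := pow_le_pow_left₀ (norm_nonneg _) this 2
  simp only [Pi.add_apply]
  nlinarith [sq_nonneg (‖c‖ * ‖f (s * Complex.I)‖ - ‖c‖ * ‖f ((-s : ℝ) * Complex.I)‖)]

lemma core3 {a : ℂ} {f g p q : ℂ → ℂ} (h : Eig a f g) (hp : ISol a f p q)
    (hi : Integrable (fun s : ℝ => ‖f (s * Complex.I)‖^2)) (hi2 : Integrable (fun s : ℝ => ‖p (s * Complex.I)‖^2)) : False := by
  have hra := h.real
  have ea : conj a = a := Complex.conj_eq_iff_im.2 hra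
  have cf : Continuous f := continuous_iff_continuousAt.2 fun z => (h.sol z).1.continuousAt
  have cp : Continuous p := continuous_iff_continuousAt.2 fun z => (hp z).1.continuousAt
  have key : ∀ c : ℂ, sym c f 0 = 0 ∧ sym c g 0 = 0 := by
    intro c
    by_contra hn
    have hE : Eig a (sym c f) (sym c g) := by
      refine ⟨fun z => ⟨sym_deriv c (fun z => (h.sol z).1) z, ?_⟩, hn, sym_L2 c cf hi⟩
      have := sym_deriv c (fun z => (h.sol z).2) z
      have e : (z^3 + a) * sym c f z = sym c (fun z => (z^3 + a) * f z) z := by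
        simp only [sym, map_mul, map_add, map_pow, Complex.conj_conj, ea]; ring
      rw [e]; exact this
    have hI : ISol a (sym c f) (sym c p) (sym c q) := by
      refine fun z => ⟨sym_deriv c (fun z => (hp z).1) z, ?_⟩
      have := sym_deriv c (fun z => (hp z).2) z
      have e : (z^3 + a) * sym c p z + sym c f z = sym c (fun z => (z^3 + a) * p z + f z) z := by
        simp only [sym, map_mul, map_add, map_pow, Complex.conj_conj, ea]; ring
      rw [e]; exact this
    exact core2 hE hI (sym_L2 c cp hi2) (sym_real c f) (sym_real c p)
  have aux : ∀ f : ℂ → ℂ, sym 1 f 0 = 0 → sym Complex.I f 0 = 0 → f 0 = 0 := by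
    intro f h1 h2
    simp only [sym, map_zero, map_mul, one_mul, Complex.conj_I] at h1 h2
    have i2 := Complex.I_sq
    linear_combination (1/2) * h1 - (Complex.I/2) * h2 + ((f 0 - conj (f 0))/2) * i2
  exact h.nt ⟨aux f (key 1).1 (key Complex.I).1, aux g (key 1).2 (key Complex.I).2⟩
end

section
open ComplexConjugate Filter Topology

lemma ode_pair {ψ : ℝ → ℂ} (h : ContDiff ℝ 2 ψ) (x : ℝ) : HasDerivAt ψ (deriv ψ x) x ∧ HasDerivAt (deriv ψ) (deriv (deriv ψ) x) x := by
  have h1 : ContDiff ℝ 1 (deriv ψ) := by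
    have := (contDiff_succ_iff_deriv (n := 1) (f := ψ) (𝕜 := ℝ)).1 (by simpa [one_add_one_eq_two] using h)
    exact this.2.2
  exact ⟨(h.differentiable (by norm_num) x).hasDerivAt, (h1.differentiable (by norm_num) x).hasDerivAt⟩

lemma match_sol {a : ℂ} {F G R : ℂ → ℂ} (hF : ∀ z, HasDerivAt F (G z) z) (hG : ∀ z, HasDerivAt G ((z^3 + a) * F z + R z) z)
    {w : ℝ → ℂ} (hw : ContDiff ℝ 2 w) (he : ∀ x : ℝ, deriv (deriv w) x = (Complex.I * (x:ℂ)^3 - a) * w x - R (x * Complex.I))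
    (h0 : F 0 = w 0) (h1 : G 0 = -Complex.I * deriv w 0) (x : ℝ) : w x = F (x * Complex.I) := by
  have i2 := Complex.I_sq
  have hP : PSol 1 (fun x : ℝ => Complex.I * (x:ℂ)^3 - a) (fun x => w x - F (x * Complex.I)) (fun x => deriv w x - Complex.I * G (x * Complex.I)) := by
    intro s
    obtain ⟨k1, k2⟩ := ode_pair hw s
    constructor
    · rw [one_mul]; exact k1.sub (ray_deriv _ s (hF _))
    · have := k2.sub ((ray_deriv Complex.I s (hG _)).const_mul Complex.I)
      rw [he] at this
      have e : 1 * ((Complex.I * (s:ℂ)^3 - a) * (w s - F (s * Complex.I))) = (Complex.I * (s:ℂ)^3 - a) * w s - R (s * Complex.I) - Complex.I * (Complex.I * (((s * Complex.I)^3 + a) * F (s * Complex.I) + R (s * Complex.I))) := by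
        have i5 : Complex.I^5 = Complex.I := by
          rw [show Complex.I^5 = (Complex.I^2)^2 * Complex.I by ring, i2]; ring
        linear_combination (a * F (s * Complex.I) + R (s * Complex.I)) * i2 + (s:ℂ)^3 * F (s * Complex.I) * i5
      rw [e]; exact this
  have := (hP.unique (by fun_prop) (s0 := 0) (by simp [h0]) (by simp [h1, ← mul_assoc]) x).1
  exact sub_eq_zero.1 this
end

/-- Algebraic simplicity: no Jordan generalized eigenvector exists. -/
theorem algebraic_simplicity (lam : ℂ) (ψ : ℝ → ℂ)
    (hψne : ψ ≠ 0) (hψsmooth : ContDiff ℝ 2 ψ)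
    (hψint : Integrable (fun x : ℝ => ‖ψ x‖ ^ 2))
    (hψeq : ∀ x : ℝ, -(deriv (deriv ψ) x) + Complex.I * (x : ℂ) ^ 3 * ψ x = lam * ψ x) :
    ¬ ∃ φ : ℝ → ℂ, ContDiff ℝ 2 φ ∧
      Integrable (fun x : ℝ => ‖φ x‖ ^ 2) ∧
      ∀ x : ℝ, -(deriv (deriv φ) x) + Complex.I * (x : ℂ) ^ 3 * φ x - lam * φ x = ψ x := by
  rintro ⟨φ, hφ, hφint, hφeq⟩
  obtain ⟨c, hc, c0, c1, cF, cG⟩ := exists_entire lam (ψ 0) (-Complex.I * deriv ψ 0) ent_zero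
  obtain ⟨d, hd, d0, d1, dF, dG⟩ := exists_entire lam (φ 0) (-Complex.I * deriv φ 0) hc
  have eψ := match_sol cF cG hψsmooth (fun x => by rw [psum_zero_fun]; linear_combination - hψeq x) c0 c1
  have eφ := match_sol dF dG hφ (fun x => by rw [← eψ]; linear_combination - hφeq x) d0 d1
  simp only [psum_zero_fun, add_zero] at cG
  simp only [eψ] at hψint
  simp only [eφ] at hφint
  have hsol : ESol lam (psum c) (psum (dco c)) := fun z => ⟨cF z, cG z⟩
  have cf : Continuous (psum c) := continuous_iff_continuousAt.2 fun z => (cF z).continuousAt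
  have hE : Eig lam (psum c) (psum (dco c)) := by
    refine ⟨hsol, fun hn => hψne ?_, L2_of_integrable (by fun_prop) hψint⟩
    by_contra hne
    apply hne
    funext x
    rw [eψ]
    by_contra hx
    exact hx ((hsol.ray Complex.I).unique (by fun_prop) (s0 := 0) (by simpa using hn.1) (by simpa using hn.2) x).1
  exact core3 hE (fun z => ⟨dF z, dG z⟩) hψint hφint
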